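/- Let M be a triangulated Möbius strip with no interior vertices (every vertex lies on the boundary). If xy is an interior edge of M that separates M into two pieces (a cut edge), then exactly one of the two pieces is a disc and the other is again a Möbius strip. -/

import Mathlib

open Finset

/-- An abstract simplicial complex on vertex type `V`, given by its finite set of
(nonempty) faces, closed under taking nonempty subsets. -/
structure SComplex (V : Type) [DecidableEq V] where
  faces : Finset (Finset V)
  nonempty_of_mem : ∀ σ ∈ faces, σ.Nonempty
  down_closed : ∀ σ ∈ faces, ∀ τ ⊆ σ, τ.Nonempty → τ ∈ faces

namespace SComplex

variable {V : Type} [DecidableEq V]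

/-- the number `f_k` of `k`-dimensional faces -/
def fNum (K : SComplex V) (k : ℕ) : ℕ := (K.faces.filter fun σ => σ.card = k + 1).card

/-- `g₂` of a `d`-dimensional complex: `f₁ - (d+1) f₀ + C(d+2,2)` -/
def g2 (K : SComplex V) (d : ℕ) : ℤ :=
  (K.fNum 1 : ℤ) - (d + 1) * (K.fNum 0 : ℤ) + (Nat.choose (d + 2) 2 : ℤ)

/-- the vertex set of a complex -/
def vertices (K : SComplex V) : Finset V := K.faces.sup id

/-- the link of a face `σ` -/
def link (K : SComplex V) (σ : Finset V) : SComplex V where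
  faces := K.faces.filter fun τ => σ ∩ τ = ∅ ∧ σ ∪ τ ∈ K.faces
  nonempty_of_mem τ hτ := K.nonempty_of_mem τ (mem_filter.mp hτ).1
  down_closed := by
    intro τ hτ ρ hρ hne
    rw [mem_filter] at hτ ⊢
    obtain ⟨h1, h2, h3⟩ := hτ
    refine ⟨K.down_closed τ h1 ρ hρ hne, subset_empty.mp ?_, 
      K.down_closed _ h3 _ (union_subset_union Subset.rfl hρ) ?_⟩
    · exact h2 ▸ inter_subset_inter Subset.rfl hρ
    · obtain ⟨w, hw⟩ := hne
      exact ⟨w, mem_union_right _ hw⟩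

/-- the (closed) star of a vertex `t` -/
def star (K : SComplex V) (t : V) : SComplex V where
  faces := K.faces.filter fun τ => insert t τ ∈ K.faces
  nonempty_of_mem τ hτ := K.nonempty_of_mem τ (mem_filter.mp hτ).1
  down_closed := by
    intro τ hτ ρ hρ hne
    rw [mem_filter] at hτ ⊢
    exact ⟨K.down_closed τ hτ.1 ρ hρ hne,
      K.down_closed _ hτ.2 _ (insert_subset_insert _ hρ) (insert_nonempty _ _)⟩

/-- connectivity of a complex (through edges) -/
def Connected (K : SComplex V) : Prop :=
  ∀ u ∈ K.vertices, ∀ w ∈ K.vertices,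
    Relation.ReflTransGen (fun a b => ({a, b} : Finset V) ∈ K.faces) u w

/-- purity: every face is contained in a `d`-dimensional face -/
def Pure (K : SComplex V) (d : ℕ) : Prop :=
  ∀ σ ∈ K.faces, ∃ τ ∈ K.faces, σ ⊆ τ ∧ τ.card = d + 1

/-- strong connectivity through facets sharing `(d-1)`-faces -/
def StronglyConnected (K : SComplex V) (d : ℕ) : Prop :=
  ∀ σ ∈ K.faces, ∀ τ ∈ K.faces, σ.card = d + 1 → τ.card = d + 1 →
    Relation.ReflTransGen
      (fun a b => a ∈ K.faces ∧ b ∈ K.faces ∧ a.card = d + 1 ∧ b.card = d + 1 ∧ (a ∩ b).card = d)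
      σ τ

/-- `K` is a `d`-dimensional pseudomanifold -/
def IsPseudomanifold (K : SComplex V) (d : ℕ) : Prop :=
  K.Pure d ∧
  (∀ σ ∈ K.faces, σ.card = d →
    (K.faces.filter fun τ => σ ⊆ τ ∧ τ.card = d + 1).card = 2) ∧
  K.StronglyConnected d

/-- `K` is a `d`-dimensional normal pseudomanifold: a pseudomanifold all of whose
faces of codimension at least two have connected links -/
def IsNormal (K : SComplex V) (d : ℕ) : Prop :=
  K.IsPseudomanifold d ∧ ∀ σ ∈ K.faces, σ.card + 1 ≤ d → (K.link σ).Connected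

/-- the geometric realization of `K`, inside `V → ℝ` -/
def realization (K : SComplex V) [Fintype V] : Set (V → ℝ) :=
  {f | ∃ σ ∈ K.faces, (∀ v, v ∉ σ → f v = 0) ∧ (∀ v, 0 ≤ f v) ∧ (∑ v, f v) = 1}

end SComplex

/-- the standard 2-sphere -/
noncomputable def Sphere2 : Set (EuclideanSpace ℝ (Fin 3)) := Metric.sphere 0 1

/-- the real projective plane, as the quotient of the 2-sphere by the antipodal map -/
def RealProjPlane : Type :=
  Quot fun a b : Sphere2 => (a : EuclideanSpace ℝ (Fin 3)) = -(b : EuclideanSpace ℝ (Fin 3))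

noncomputable instance : TopologicalSpace RealProjPlane := by unfold RealProjPlane; infer_instance

noncomputable def UnitSquare : Set (ℝ × ℝ) := Set.Icc 0 1 ×ˢ Set.Icc 0 1

/-- the Möbius band, as a quotient of the unit square -/
def MobiusBand : Type :=
  Quot fun a b : UnitSquare =>
    (a : ℝ × ℝ).1 = 0 ∧ (b : ℝ × ℝ).1 = 1 ∧ (b : ℝ × ℝ).2 = 1 - (a : ℝ × ℝ).2

noncomputable instance : TopologicalSpace MobiusBand := by unfold MobiusBand; infer_instance

noncomputable def ClosedDisc : Set (ℝ × ℝ) := Metric.closedBall 0 1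

namespace SComplex

variable {V : Type} [DecidableEq V] [Fintype V]

/-- the carrier of `K` is a 2-sphere -/
def IsSphere2 (K : SComplex V) : Prop := Nonempty (K.realization ≃ₜ Sphere2)

/-- the carrier of `K` is a real projective plane -/
def IsRP2 (K : SComplex V) : Prop := Nonempty (K.realization ≃ₜ RealProjPlane)

/-- `K` is a triangulated Möbius strip -/
def IsMobius (K : SComplex V) : Prop := Nonempty (K.realization ≃ₜ MobiusBand)

/-- `K` is a triangulated disc -/
def IsDisc (K : SComplex V) : Prop := Nonempty (K.realization ≃ₜ ClosedDisc)

end SComplex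

namespace SComplex

variable {V : Type} [DecidableEq V]

/-- `K` is the boundary complex of a `(d+1)`-simplex: all proper nonempty subsets
of a set of `d+2` vertices. -/
def IsBoundarySimplex (K : SComplex V) (d : ℕ) : Prop :=
  ∃ W : Finset V, W.card = d + 2 ∧ K.faces = (W.powerset.erase W).erase ∅

/-- `Δ'` is obtained from the `d`-dimensional complex `Δ` by a single facet
subdivision: remove a facet `σ`, add a new vertex `w`, and add all faces
`w ⋆ τ` for proper faces `τ` of `σ`. -/
def FacetSubdivision (Δ Δ' : SComplex V) (d : ℕ) : Prop :=
  ∃ σ ∈ Δ.faces, ∃ w : V, σ.card = d + 1 ∧ (∀ τ ∈ Δ.faces, w ∉ τ) ∧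
    Δ'.faces = (Δ.faces.erase σ) ∪ (σ.powerset.erase σ).image (insert w)

/-- a stacked `d`-sphere: obtained from the boundary complex of a `(d+1)`-simplex
by a finite sequence of facet subdivisions. -/
def IsStackedSphere (K : SComplex V) (d : ℕ) : Prop :=
  ∃ K₀ : SComplex V, K₀.IsBoundarySimplex d ∧
    Relation.ReflTransGen (fun A B => FacetSubdivision A B d) K₀ K

end SComplex

namespace SComplex

variable {V : Type} [DecidableEq V]

/-- an interior edge of a 2-complex: an edge contained in exactly two triangles -/
def InteriorEdge (M : SComplex V) (e : Finset V) : Prop :=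
  e ∈ M.faces ∧ e.card = 2 ∧ (M.faces.filter fun τ => τ.card = 3 ∧ e ⊆ τ).card = 2

/-- every vertex of `M` lies on the boundary, i.e. on an edge contained in exactly
one triangle -/
def NoInteriorVertices (M : SComplex V) : Prop :=
  ∀ v ∈ M.vertices, ∃ e ∈ M.faces, v ∈ e ∧ e.card = 2 ∧
    (M.faces.filter fun τ => τ.card = 3 ∧ e ⊆ τ).card = 1

/-- `M₁, M₂` are the two pieces obtained by cutting `M` along the separating
interior edge `e`: two subcomplexes meeting exactly along `e`, whose union is `M`,
each containing a triangle -/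
def SeparationAlong (M M₁ M₂ : SComplex V) (e : Finset V) : Prop :=
  M₁.faces ∪ M₂.faces = M.faces ∧
  M₁.faces ∩ M₂.faces = e.powerset.filter (· ≠ ∅) ∧
  (∃ τ ∈ M₁.faces, τ.card = 3) ∧ (∃ τ ∈ M₂.faces, τ.card = 3)

/-- the interior edge `e` separates `M` into two pieces -/
def Separates (M : SComplex V) (e : Finset V) : Prop :=
  ∃ M₁ M₂ : SComplex V, M.SeparationAlong M₁ M₂ e

end SComplex



/-! ### Logarithms of nonvanishing functions -/

/-- Every nonvanishing continuous function on `S` has a continuous logarithm. -/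
def LogOn {X : Type*} [TopologicalSpace X] (S : Set X) : Prop :=
  ∀ f : X → ℂ, ContinuousOn f S → (∀ x ∈ S, f x ≠ 0) →
    ∃ h : X → ℂ, ContinuousOn h S ∧ ∀ x ∈ S, f x = Complex.exp (h x)

/-- Any two nonvanishing functions are multiplicatively dependent modulo exponentials. -/
def RankOne {X : Type*} [TopologicalSpace X] (S : Set X) : Prop :=
  ∀ f g : X → ℂ, ContinuousOn f S → (∀ x ∈ S, f x ≠ 0) → ContinuousOn g S → (∀ x ∈ S, g x ≠ 0) →
    ∃ a b : ℤ, (a ≠ 0 ∨ b ≠ 0) ∧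
    ∃ h : X → ℂ, ContinuousOn h S ∧ ∀ x ∈ S, f x ^ a * g x ^ b = Complex.exp (h x)

section Toolkit

variable {X Y : Type*} [TopologicalSpace X] [TopologicalSpace Y]

lemma LogOn.rankOne {S : Set X} (h : LogOn S) : RankOne S := by
  intro f g hf hf0 hg hg0
  obtain ⟨k, hk, hk'⟩ := h f hf hf0
  exact ⟨1, 0, Or.inl one_ne_zero, k, hk, by simpa using hk'⟩

lemma LogOn.retract {S : Set X} {T : Set Y} (h : LogOn S) (F : X → Y) (G : Y → X)
    (hF : ContinuousOn F S) (hG : ContinuousOn G T) (hFm : Set.MapsTo F S T)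
    (hGm : Set.MapsTo G T S) (hFG : ∀ y ∈ T, F (G y) = y) : LogOn T := by
  intro f hf hf0
  obtain ⟨k, hk, hk'⟩ := h (f ∘ F) (hf.comp hF hFm) (fun x hx => hf0 _ (hFm hx))
  refine ⟨k ∘ G, hk.comp hG hGm, fun y hy => ?_⟩
  rw [Function.comp, ← hk' _ (hGm hy), Function.comp, hFG y hy]

lemma RankOne.retract {S : Set X} {T : Set Y} (h : RankOne S) (F : X → Y) (G : Y → X)
    (hF : ContinuousOn F S) (hG : ContinuousOn G T) (hFm : Set.MapsTo F S T)
    (hGm : Set.MapsTo G T S) (hFG : ∀ y ∈ T, F (G y) = y) : RankOne T := by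
  intro f g hf hf0 hg hg0
  obtain ⟨a, b, hab, k, hk, hk'⟩ := h (f ∘ F) (g ∘ F) (hf.comp hF hFm) (fun x hx => hf0 _ (hFm hx))
    (hg.comp hF hFm) (fun x hx => hg0 _ (hFm hx))
  refine ⟨a, b, hab, k ∘ G, hk.comp hG hGm, fun y hy => ?_⟩
  rw [Function.comp, ← hk' _ (hGm hy), Function.comp, Function.comp, hFG y hy]

/-- a continuous function on a preconnected set with values in `c ℤ` is constant -/
lemma int_const {S : Set X} (hS : IsPreconnected S) (u : X → ℂ) (hu : ContinuousOn u S)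
    (hz : ∀ x ∈ S, ∃ n : ℤ, u x = n * (2 * Real.pi * Complex.I)) :
    ∃ n : ℤ, ∀ x ∈ S, u x = n * (2 * Real.pi * Complex.I) := by
  rcases S.eq_empty_or_nonempty with rfl | ⟨x₀, hx₀⟩
  · exact ⟨0, by simp⟩
  obtain ⟨n, hn⟩ := hz x₀ hx₀
  refine ⟨n, fun x hx => ?_⟩
  have hv : ContinuousOn (fun x => (u x / (2 * Real.pi * Complex.I)).re) S :=
    Complex.continuous_re.comp_continuousOn (hu.div_const _)
  have hpi : (2 * Real.pi * Complex.I : ℂ) ≠ 0 := by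
    simp [Real.pi_ne_zero]
  have hv' : ∀ x ∈ S, ∃ n : ℤ, (u x / (2 * Real.pi * Complex.I)).re = n := by
    intro x hx
    obtain ⟨m, hm⟩ := hz x hx
    refine ⟨m, ?_⟩
    rw [hm, mul_div_cancel_right₀ _ hpi]; simp
  have himg := hS.image _ hv
  have hsub : ((fun x => (u x / (2 * Real.pi * Complex.I)).re) '' S) ⊆ Set.range ((↑) : ℤ → ℝ) := by
    rintro _ ⟨x, hx, rfl⟩
    obtain ⟨m, hm⟩ := hv' x hx
    exact ⟨m, hm.symm⟩
  have hss : ((fun x => (u x / (2 * Real.pi * Complex.I)).re) '' S).Subsingleton := by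
    have hc : (Set.range ((↑) : ℤ → ℝ)).Countable := Set.countable_range _
    exact (hc.mono hsub).isTotallyDisconnected _ subset_rfl himg
  obtain ⟨m, hm⟩ := hz x hx
  have := hss ⟨x, hx, rfl⟩ ⟨x₀, hx₀, rfl⟩
  simp only [hm, hn, mul_div_cancel_right₀ _ hpi] at this
  have h2 : m = n := by simpa using this
  rw [hm, h2]

lemma exp_eq_iff' {a b : ℂ} (h : Complex.exp a = Complex.exp b) :
    ∃ n : ℤ, a - b = n * (2 * Real.pi * Complex.I) := by
  obtain ⟨n, hn⟩ := Complex.exp_eq_exp_iff_exists_int.1 h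
  exact ⟨n, by rw [hn]; ring⟩

lemma exp_int (n : ℤ) : Complex.exp (n * (2 * Real.pi * Complex.I)) = 1 :=
  Complex.exp_int_mul_two_pi_mul_I n

/-- two logarithms on a preconnected set differ by a constant -/
lemma log_diff {S : Set X} (hS : IsPreconnected S) (h k : X → ℂ) (hh : ContinuousOn h S)
    (hk : ContinuousOn k S) (he : ∀ x ∈ S, Complex.exp (h x) = Complex.exp (k x)) :
    ∃ n : ℤ, ∀ x ∈ S, h x - k x = n * (2 * Real.pi * Complex.I) :=
  int_const hS (fun x => h x - k x) (hh.sub hk) (fun x hx => exp_eq_iff' (he x hx))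

lemma continuousOn_relclosed_union {S FA FB : Set X} (hA : IsClosed FA) (hB : IsClosed FB)
    (hS : S ⊆ FA ∪ FB) (u : X → Y) (h1 : ContinuousOn u (S ∩ FA)) (h2 : ContinuousOn u (S ∩ FB)) :
    ContinuousOn u S := by
  have key : ∀ F : Set X, IsClosed F → ContinuousOn u (S ∩ F) → ∀ x ∈ S,
      ContinuousWithinAt u (S ∩ F) x := by
    intro F hF hc x hx
    by_cases hxF : x ∈ F
    · exact hc x ⟨hx, hxF⟩
    · have : nhdsWithin x (S ∩ F) = ⊥ := by
        rw [← notMem_closure_iff_nhdsWithin_eq_bot]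
        exact fun h => hxF (hF.closure_subset_iff.2 Set.inter_subset_right h)
      rw [ContinuousWithinAt, this]; exact Filter.tendsto_bot
  intro x hx
  have := (key FA hA h1 x hx).union (key FB hB h2 x hx)
  rwa [← Set.inter_union_distrib_left, Set.inter_eq_left.2 hS] at this

/-- glue two functions along closed sets -/
lemma glue {S FA FB : Set X} (hA : IsClosed FA) (hB : IsClosed FB)
    (hS : S ⊆ FA ∪ FB) (u v : X → Y) (h1 : ContinuousOn u (S ∩ FA)) (h2 : ContinuousOn v (S ∩ FB))
    (huv : ∀ x ∈ S, x ∈ FA → x ∈ FB → u x = v x) :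
    ∃ w : X → Y, ContinuousOn w S ∧ (∀ x ∈ S, x ∈ FA → w x = u x) ∧
      (∀ x ∈ S, x ∈ FB → w x = v x) := by
  classical
  have hw1 : ∀ x ∈ S, x ∈ FA → (if x ∈ FA then u x else v x) = u x := by
    intro x _ hx; simp [hx]
  have hw2 : ∀ x ∈ S, x ∈ FB → (if x ∈ FA then u x else v x) = v x := by
    intro x hxS hx
    split_ifs with h
    · exact huv x hxS h hx
    · rfl
  refine ⟨fun x => if x ∈ FA then u x else v x, ?_, hw1, hw2⟩
  apply continuousOn_relclosed_union hA hB hS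
  · exact h1.congr (fun x hx => hw1 x hx.1 hx.2)
  · exact h2.congr (fun x hx => hw2 x hx.1 hx.2)

lemma glue_log {S FA FB : Set X} (hA : IsClosed FA) (hB : IsClosed FB)
    (hS : S ⊆ FA ∪ FB) (f u v : X → ℂ) (h1 : ContinuousOn u (S ∩ FA)) (h2 : ContinuousOn v (S ∩ FB))
    (hu : ∀ x ∈ S ∩ FA, f x = Complex.exp (u x)) (hv : ∀ x ∈ S ∩ FB, f x = Complex.exp (v x))
    (n : ℤ) (huv : ∀ x ∈ S, x ∈ FA → x ∈ FB → u x - v x = n * (2 * Real.pi * Complex.I)) :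
    ∃ w : X → ℂ, ContinuousOn w S ∧ ∀ x ∈ S, f x = Complex.exp (w x) := by
  obtain ⟨w, hw, hwA, hwB⟩ := glue hA hB hS u (fun x => v x + n * (2 * Real.pi * Complex.I)) h1
    (h2.add continuousOn_const) (fun x hx ha hb => by rw [← huv x hx ha hb]; ring)
  refine ⟨w, hw, fun x hx => ?_⟩
  rcases hS hx with h | h
  · rw [hwA x hx h, hu x ⟨hx, h⟩]
  · rw [hwB x hx h, hv x ⟨hx, h⟩, Complex.exp_add, exp_int, mul_one]

lemma LogOn.union {S FA FB : Set X} (hA : IsClosed FA) (hB : IsClosed FB)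
    (hS : S ⊆ FA ∪ FB) (h1 : LogOn (S ∩ FA)) (h2 : LogOn (S ∩ FB))
    (hc : IsPreconnected (S ∩ FA ∩ FB)) : LogOn S := by
  intro f hf hf0
  obtain ⟨u, hu, hu'⟩ := h1 f (hf.mono Set.inter_subset_left) (fun x hx => hf0 x hx.1)
  obtain ⟨v, hv, hv'⟩ := h2 f (hf.mono Set.inter_subset_left) (fun x hx => hf0 x hx.1)
  obtain ⟨n, hn⟩ := log_diff hc u v (hu.mono Set.inter_subset_left)
    (hv.mono (fun x hx => ⟨hx.1.1, hx.2⟩))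
    (fun x hx => by rw [← hu' x hx.1, ← hv' x ⟨hx.1.1, hx.2⟩])
  exact glue_log hA hB hS f u v hu hv hu' hv' n (fun x hx ha hb => hn x ⟨⟨hx, ha⟩, hb⟩)

lemma exists_int_rel (p q : ℤ) : ∃ a b : ℤ, (a ≠ 0 ∨ b ≠ 0) ∧ a * p + b * q = 0 := by
  by_cases h : p = 0
  · exact ⟨1, 0, by simp, by simp [h]⟩
  · exact ⟨q, -p, by simp [h], by ring⟩

lemma zpow_exp (a b : ℤ) (u v : ℂ) : Complex.exp u ^ a * Complex.exp v ^ b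
    = Complex.exp (a * u + b * v) := by
  rw [Complex.exp_add, Complex.exp_int_mul, Complex.exp_int_mul]

lemma RankOne.union {S FA FB C₁ C₂ : Set X} (hA : IsClosed FA) (hB : IsClosed FB)
    (hS : S ⊆ FA ∪ FB) (h1 : LogOn (S ∩ FA)) (h2 : LogOn (S ∩ FB))
    (hc : S ∩ FA ∩ FB = C₁ ∪ C₂) (hc1 : IsPreconnected C₁) (hc2 : IsPreconnected C₂) :
    RankOne S := by
  have key : ∀ f : X → ℂ, ContinuousOn f S → (∀ x ∈ S, f x ≠ 0) → ∃ u v : X → ℂ, ∃ n m : ℤ,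
      ContinuousOn u (S ∩ FA) ∧ ContinuousOn v (S ∩ FB) ∧
      (∀ x ∈ S ∩ FA, f x = Complex.exp (u x)) ∧ (∀ x ∈ S ∩ FB, f x = Complex.exp (v x)) ∧
      (∀ x ∈ C₁, u x - v x = n * (2 * Real.pi * Complex.I)) ∧
      (∀ x ∈ C₂, u x - v x = m * (2 * Real.pi * Complex.I)) := by
    intro f hf hf0
    obtain ⟨u, hu, hu'⟩ := h1 f (hf.mono Set.inter_subset_left) (fun x hx => hf0 x hx.1)
    obtain ⟨v, hv, hv'⟩ := h2 f (hf.mono Set.inter_subset_left) (fun x hx => hf0 x hx.1)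
    have hC1 : C₁ ⊆ S ∩ FA ∩ FB := hc ▸ Set.subset_union_left
    have hC2 : C₂ ⊆ S ∩ FA ∩ FB := hc ▸ Set.subset_union_right
    obtain ⟨n, hn⟩ := log_diff hc1 u v (hu.mono (fun x hx => (hC1 hx).1))
      (hv.mono (fun x hx => ⟨(hC1 hx).1.1, (hC1 hx).2⟩))
      (fun x hx => by rw [← hu' x (hC1 hx).1, ← hv' x ⟨(hC1 hx).1.1, (hC1 hx).2⟩])
    obtain ⟨m, hm⟩ := log_diff hc2 u v (hu.mono (fun x hx => (hC2 hx).1))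
      (hv.mono (fun x hx => ⟨(hC2 hx).1.1, (hC2 hx).2⟩))
      (fun x hx => by rw [← hu' x (hC2 hx).1, ← hv' x ⟨(hC2 hx).1.1, (hC2 hx).2⟩])
    exact ⟨u, v, n, m, hu, hv, hu', hv', hn, hm⟩
  intro f g hf hf0 hg hg0
  obtain ⟨u, v, n, m, hu, hv, hu', hv', hn, hm⟩ := key f hf hf0
  obtain ⟨u₂, v₂, n₂, m₂, hu₂, hv₂, hu₂', hv₂', hn₂, hm₂⟩ := key g hg hg0
  obtain ⟨a, b, hab, hrel⟩ := exists_int_rel (n - m) (n₂ - m₂)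
  refine ⟨a, b, hab, ?_⟩
  apply glue_log hA hB hS (fun x => f x ^ a * g x ^ b) (fun x => a * u x + b * u₂ x)
    (fun x => a * v x + b * v₂ x) ?_ ?_ ?_ ?_ (a * n + b * n₂)
  · intro x hx ha hb
    have hxC : x ∈ C₁ ∪ C₂ := hc ▸ ⟨⟨hx, ha⟩, hb⟩
    rcases hxC with h | h
    · have e1 := hn x h
      have e2 := hn₂ x h
      push_cast
      linear_combination (a : ℂ) * e1 + (b : ℂ) * e2
    · have e1 := hm x h
      have e2 := hm₂ x h
      have e3 : (a : ℂ) * (n - m) + b * (n₂ - m₂) = 0 := by exact_mod_cast hrel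
      push_cast
      linear_combination (a : ℂ) * e1 + (b : ℂ) * e2 - (2 * Real.pi * Complex.I) * e3
  · exact (continuousOn_const.mul hu).add (continuousOn_const.mul hu₂)
  · exact (continuousOn_const.mul hv).add (continuousOn_const.mul hv₂)
  · intro x hx; simp only [hu' x hx, hu₂' x hx, zpow_exp]
  · intro x hx; simp only [hv' x hx, hv₂' x hx, zpow_exp]

/-- star-shaped sets have logarithms -/
lemma StarConvex.logOn {E : Type*} [AddCommGroup E] [Module ℝ E] [TopologicalSpace E]
    [IsTopologicalAddGroup E] [ContinuousSMul ℝ E] {S : Set E} {q : E} (hS : StarConvex ℝ q S)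
    (hq : q ∈ S) : LogOn S := by
  classical
  intro f hf hf0
  have hmem : ∀ (t : unitInterval) (x : S), q + (t : ℝ) • ((x : E) - q) ∈ S := fun t x =>
    hS.add_smul_sub_mem x.2 t.2.1 t.2.2
  let H : C(unitInterval × S, {z : ℂ // z ≠ 0}) :=
    ⟨fun tx => ⟨f (q + (tx.1 : ℝ) • ((tx.2 : E) - q)), hf0 _ (hmem _ _)⟩, by
      apply Continuous.subtype_mk
      apply hf.comp_continuous
      · fun_prop
      · intro tx; exact hmem _ _⟩
  obtain ⟨c, hc⟩ : ∃ c, Complex.exp c = f q := ⟨Complex.log (f q), Complex.exp_log (hf0 q hq)⟩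
  let f0 : C(S, ℂ) := ⟨fun _ => c, continuous_const⟩
  have H0 : ∀ a, H (0, a) = ⟨Complex.exp (f0 a), Complex.exp_ne_zero _⟩ := by
    intro a
    apply Subtype.ext
    simp [H, f0, hc]
  let K := Complex.isCoveringMap_exp.liftHomotopy H f0 H0
  have hK := Complex.isCoveringMap_exp.liftHomotopy_lifts H f0 H0
  refine ⟨fun x => if hx : x ∈ S then K (1, ⟨x, hx⟩) else 0, ?_, ?_⟩
  · rw [continuousOn_iff_continuous_domRestrict]
    have : S.domRestrict (fun x => if hx : x ∈ S then K (1, ⟨x, hx⟩) else 0) = fun x => K (1, x) := by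
      ext x; simp [Set.domRestrict]
    rw [this]
    exact K.continuous.comp (by fun_prop)
  · intro x hx
    have := congrArg Subtype.val (congrFun hK (1, ⟨x, hx⟩))
    simp only [Function.comp, H] at this
    simp only [hx, dite_true]
    rw [this]; simp

lemma Convex.logOn {E : Type*} [AddCommGroup E] [Module ℝ E] [TopologicalSpace E]
    [IsTopologicalAddGroup E] [ContinuousSMul ℝ E] {S : Set E} (hS : Convex ℝ S) : LogOn S := by
  rcases S.eq_empty_or_nonempty with rfl | ⟨q, hq⟩
  · intro f _ _; exact ⟨fun _ => 0, continuousOn_empty _, by simp⟩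
  · exact (hS.starConvex hq).logOn hq

/-- no torsion modulo exponentials -/
lemma log_of_zpow {S : Set X} (hS : IsPreconnected S) (f h : X → ℂ) (hf : ContinuousOn f S)
    (hh : ContinuousOn h S) (a : ℤ) (ha : a ≠ 0) (hfa : ∀ x ∈ S, f x ^ a = Complex.exp (h x))  :
    ∃ k : X → ℂ, ContinuousOn k S ∧ ∀ x ∈ S, f x = Complex.exp (k x) := by
  rcases S.eq_empty_or_nonempty with rfl | ⟨x₀, hx₀⟩
  · exact ⟨fun _ => 0, continuousOn_empty _, by simp⟩
  have haC : (a : ℂ) ≠ 0 := by exact_mod_cast ha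
  have hu : ContinuousOn (fun x => f x * Complex.exp (- (h x / a))) S :=
    hf.mul (Complex.continuous_exp.comp_continuousOn (hh.div_const _).neg)
  have hpow : ∀ x ∈ S, (f x * Complex.exp (- (h x / a))) ^ a = 1 := by
    intro x hx
    rw [mul_zpow, hfa x hx, ← Complex.exp_int_mul, ← Complex.exp_add]
    rw [show h x + a * -(h x / a) = 0 by field_simp; ring, Complex.exp_zero]
  have hfin : {z : ℂ | z ^ a = 1}.Finite := by
    have hn : 0 < a.natAbs := Int.natAbs_pos.2 ha
    refine ((Polynomial.nthRoots a.natAbs (1 : ℂ)).toFinset.finite_toSet).subset ?_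
    intro z hz
    simp only [Finset.mem_coe, Multiset.mem_toFinset, Polynomial.mem_nthRoots hn]
    rcases Int.natAbs_eq a with h | h
    · have : z ^ a = 1 := hz
      rw [h] at this; exact_mod_cast this
    · have : z ^ a = 1 := hz
      rw [h, zpow_neg, inv_eq_one] at this; exact_mod_cast this
  have hss := (hfin.countable.isTotallyDisconnected) _ (by
    rintro _ ⟨x, hx, rfl⟩; exact hpow x hx) (hS.image _ hu)
  have h0 : f x₀ * Complex.exp (- (h x₀ / a)) ≠ 0 := by
    intro h; have := hpow x₀ hx₀; rw [h, zero_zpow a ha] at this; exact zero_ne_one this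
  refine ⟨fun x => h x / a + Complex.log (f x₀ * Complex.exp (- (h x₀ / a))),
    (hh.div_const _).add continuousOn_const, fun x hx => ?_⟩
  have := hss ⟨x, hx, rfl⟩ ⟨x₀, hx₀, rfl⟩
  simp only at this
  rw [Complex.exp_add, Complex.exp_log h0, ← this, Complex.exp_neg]
  field_simp [Complex.exp_ne_zero]

end Toolkit


/-! ### Local properties -/

/-- `P` holds for arbitrarily small punctured neighbourhoods of `p` in `S` -/
def LocP {X : Type*} [TopologicalSpace X] (P : Set X → Prop) (S : Set X) (p : X) : Prop :=
  ∀ U ∈ nhdsWithin p S, ∃ W ∈ nhdsWithin p S, W ⊆ U ∧ P (W \ {p})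

section Loc
variable {X Y : Type*} [TopologicalSpace X] [TopologicalSpace Y]

lemma emb_inv {j : Y → X} (hj : Topology.IsEmbedding j) [Nonempty Y] :
    ContinuousOn (Function.invFun j) (Set.range j) := by
  rw [continuousOn_iff_continuous_domRestrict]
  have : (Set.range j).domRestrict (Function.invFun j) = hj.toHomeomorph.symm := by
    ext ⟨_, y, rfl⟩
    simp only [Set.domRestrict]
    rw [Function.leftInverse_invFun hj.injective y]
    symm
    rw [Homeomorph.symm_apply_eq]
    rfl
  rw [this]; exact hj.toHomeomorph.symm.continuous

lemma LogOn.image_emb {j : Y → X} (hj : Topology.IsEmbedding j) {S : Set Y} :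
    LogOn (j '' S) ↔ LogOn S := by
  rcases isEmpty_or_nonempty Y with h | h
  · have : S = ∅ := Set.eq_empty_of_isEmpty S
    subst this
    simp only [Set.image_empty]
    exact ⟨fun _ f _ _ => ⟨fun _ => 0, continuousOn_empty _, by simp⟩,
      fun _ f _ _ => ⟨fun _ => 0, continuousOn_empty _, by simp⟩⟩
  have hl := Function.leftInverse_invFun hj.injective
  constructor
  · intro hL
    exact hL.retract (Function.invFun j) j ((emb_inv hj).mono (Set.image_subset_range _ _))
      hj.continuous.continuousOn (by rintro _ ⟨y, hy, rfl⟩; rwa [hl]) (fun y hy => ⟨y, hy, rfl⟩)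
      (fun y _ => hl y)
  · intro hL
    exact hL.retract j (Function.invFun j) hj.continuous.continuousOn
      ((emb_inv hj).mono (Set.image_subset_range _ _)) (fun y hy => ⟨y, hy, rfl⟩)
      (by rintro _ ⟨y, hy, rfl⟩; rwa [hl]) (by rintro _ ⟨y, hy, rfl⟩; rw [hl])

lemma RankOne.image_emb {j : Y → X} (hj : Topology.IsEmbedding j) {S : Set Y} (hL : RankOne S) :
    RankOne (j '' S) := by
  rcases isEmpty_or_nonempty Y with h | h
  · have : S = ∅ := Set.eq_empty_of_isEmpty S
    subst this
    simp only [Set.image_empty]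
    exact fun f g _ _ _ _ => ⟨1, 0, by simp, fun _ => 0, continuousOn_empty _, by simp⟩
  have hl := Function.leftInverse_invFun hj.injective
  exact hL.retract j (Function.invFun j) hj.continuous.continuousOn
      ((emb_inv hj).mono (Set.image_subset_range _ _)) (fun y hy => ⟨y, hy, rfl⟩)
      (by rintro _ ⟨y, hy, rfl⟩; rwa [hl]) (by rintro _ ⟨y, hy, rfl⟩; rw [hl])

lemma LocP.image {j : Y → X} (hj : Topology.IsEmbedding j) {P : Set Y → Prop} {Q : Set X → Prop}
    (hPQ : ∀ W, P W → Q (j '' W)) {S : Set Y} {y : Y} (h : LocP P S y) :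
    LocP Q (j '' S) (j y) := by
  intro U hU
  rw [← hj.isInducing.map_nhdsWithin_eq] at hU ⊢
  obtain ⟨W, hW, hWU, hPW⟩ := h _ (Filter.mem_map.1 hU)
  refine ⟨j '' W, Filter.image_mem_map hW, Set.image_subset_iff.2 hWU, ?_⟩
  have : j '' W \ {j y} = j '' (W \ {y}) := by
    rw [Set.image_sdiff hj.injective, Set.image_singleton]
  rw [this]; exact hPQ _ hPW

lemma LocP.of_image {j : Y → X} (hj : Topology.IsEmbedding j) {P : Set Y → Prop}
    {Q : Set X → Prop}
    (hPQ : ∀ W, Q (j '' W) → P W) {S : Set Y} {y : Y} (h : LocP Q (j '' S) (j y)) :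
    LocP P S y := by
  intro U hU
  unfold LocP at h
  rw [← hj.isInducing.map_nhdsWithin_eq] at h
  obtain ⟨W, hW, hWU, hPW⟩ := h _ (Filter.image_mem_map hU)
  refine ⟨j ⁻¹' W, Filter.mem_map.1 hW, ?_, ?_⟩
  · intro x hx
    obtain ⟨x', hx', he⟩ := hWU hx
    rwa [← hj.injective he]
  · apply hPQ
    rw [Set.image_sdiff hj.injective, Set.image_singleton, Set.image_preimage_eq_of_subset]
    · exact hPW
    · exact hWU.trans (Set.image_subset_range _ _)

lemma LocP.congr_nhds {P : Set X → Prop} {S T : Set X} {p : X}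
    (hST : nhdsWithin p S = nhdsWithin p T) (h : LocP P S p) : LocP P T p := by
  unfold LocP at h ⊢; rwa [← hST]

end Loc

/-! ### Punctured convex sets -/
section PunctConvex
variable {E : Type*} [AddCommGroup E] [Module ℝ E] [TopologicalSpace E]
    [IsTopologicalAddGroup E] [ContinuousSMul ℝ E]

lemma half_star {W : Set E} (hW : Convex ℝ W) {p q : E} (l : E →ₗ[ℝ] ℝ) (hq : q ∈ W)
    (hlq : l p < l q) : StarConvex ℝ q ((W \ {p}) ∩ {x | l p ≤ l x}) := by
  intro y hy a b ha hb hab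
  obtain ⟨⟨hyW, hyp⟩, hly⟩ := hy
  simp only [Set.mem_ofPred_eq] at hly
  refine ⟨⟨hW hq hyW ha hb hab, ?_⟩, ?_⟩
  · intro h
    simp only [Set.mem_singleton_iff] at h
    have h2 : a * l q + b * l y = l p := by rw [← h]; simp
    rcases ha.eq_or_lt with h0 | h0
    · subst h0
      have : b = 1 := by linarith
      subst this
      apply hyp; simpa using h
    · have e1 := mul_pos h0 (sub_pos.2 hlq)
      have e2 := mul_nonneg hb (sub_nonneg.2 hly)
      have e3 : l p = a * l p + b * l p := by rw [← add_mul, hab, one_mul]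
      linarith [mul_sub a (l q) (l p), mul_sub b (l y) (l p)]
  · simp only [Set.mem_ofPred_eq, map_add, map_smul, smul_eq_mul]
    have e1 := mul_nonneg ha (sub_pos.2 hlq).le
    have e2 := mul_nonneg hb (sub_nonneg.2 hly)
    have e3 : l p = a * l p + b * l p := by rw [← add_mul, hab, one_mul]
    linarith [mul_sub a (l q) (l p), mul_sub b (l y) (l p)]

lemma half_log {W : Set E} (hW : Convex ℝ W) {p q : E} (l : E →ₗ[ℝ] ℝ) (hq : q ∈ W)
    (hlq : l p < l q) : LogOn ((W \ {p}) ∩ {x | l p ≤ l x}) :=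
  (half_star hW l hq hlq).logOn ⟨⟨hq, by rintro rfl; exact lt_irrefl _ hlq⟩, hlq.le⟩

lemma half_conn {W : Set E} (hW : Convex ℝ W) {p q : E} (l : E →ₗ[ℝ] ℝ) (hq : q ∈ W)
    (hlq : l p < l q) : IsPreconnected ((W \ {p}) ∩ {x | l p ≤ l x}) :=
  ((half_star hW l hq hlq).isPathConnected
    ⟨⟨hq, by rintro rfl; exact lt_irrefl _ hlq⟩, hlq.le⟩).isConnected.isPreconnected

lemma half_log' {W : Set E} (hW : Convex ℝ W) {p q : E} (l : E →ₗ[ℝ] ℝ) (hq : q ∈ W)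
    (hlq : l q < l p) : LogOn ((W \ {p}) ∩ {x | l x ≤ l p}) := by
  have := half_log hW (p := p) (-l) hq (by simpa using hlq)
  simpa using this

lemma half_conn' {W : Set E} (hW : Convex ℝ W) {p q : E} (l : E →ₗ[ℝ] ℝ) (hq : q ∈ W)
    (hlq : l q < l p) : IsPreconnected ((W \ {p}) ∩ {x | l x ≤ l p}) := by
  have := half_conn hW (p := p) (-l) hq (by simpa using hlq)
  simpa using this

lemma punct_conn {W : Set E} (hW : Convex ℝ W) {p q q' r : E} (l : E →ₗ[ℝ] ℝ) (hq : q ∈ W)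
    (hlq : l p < l q) (hq' : q' ∈ W) (hlq' : l q' < l p) (hr : r ∈ W) (hrp : r ≠ p)
    (hlr : l r = l p) : IsPreconnected (W \ {p}) := by
  have h1 : r ∈ (W \ {p}) ∩ {x | l p ≤ l x} := ⟨⟨hr, hrp⟩, hlr.ge⟩
  have h2 : r ∈ (W \ {p}) ∩ {x | l x ≤ l p} := ⟨⟨hr, hrp⟩, hlr.le⟩
  have h := IsPreconnected.union r h1 h2
    (half_conn hW l hq hlq) (half_conn' hW l hq' hlq')
  convert h using 1
  rw [← Set.inter_union_distrib_left]
  symm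
  rw [Set.inter_eq_left]
  intro x _
  exact le_total (l p) (l x)

lemma halves_cover (l : E →ₗ[ℝ] ℝ) (p : E) (S : Set E) : S ⊆ {x | l p ≤ l x} ∪ {x | l x ≤ l p} :=
  fun x _ => le_total (l p) (l x)

end PunctConvex


/-! ### The Möbius band -/
namespace Mob

/-- quotient map -/
def mq : UnitSquare → MobiusBand := Quot.mk _

lemma mq_quot : Topology.IsQuotientMap mq := isQuotientMap_quot_mk

lemma mq_cont : Continuous mq := mq_quot.continuous

lemma mq_surj : Function.Surjective mq := mq_quot.surjective

lemma mem_sq {x : ℝ × ℝ} : x ∈ UnitSquare ↔ (0 ≤ x.1 ∧ x.1 ≤ 1) ∧ (0 ≤ x.2 ∧ x.2 ≤ 1) := by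
  exact Iff.rfl

lemma sq_convex : Convex ℝ UnitSquare := (convex_Icc 0 1).prod (convex_Icc 0 1)

lemma mq_glue (a b : UnitSquare) (h0 : a.1.1 = 0) (h1 : b.1.1 = 1) (h2 : b.1.2 = 1 - a.1.2) :
    mq a = mq b := Quot.sound ⟨h0, h1, h2⟩

/-- total version of the quotient map -/
noncomputable def mp (x : ℝ × ℝ) : MobiusBand :=
  mq ⟨(max 0 (min 1 x.1), max 0 (min 1 x.2)), by
    rw [mem_sq]; simp⟩

lemma mp_cont : Continuous mp := by
  unfold mp
  refine mq_cont.comp ?_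
  fun_prop

lemma mp_eq {x : ℝ × ℝ} (hx : x ∈ UnitSquare) : mp x = mq ⟨x, hx⟩ := by
  have h := mem_sq.1 hx
  unfold mp
  congr 1
  ext <;> simp [h.1.1, h.1.2, h.2.1, h.2.2]

lemma mp_glue {t : ℝ} (h0 : 0 ≤ t) (h1 : t ≤ 1) : mp (0, t) = mp (1, 1 - t) := by
  rw [mp_eq (by rw [mem_sq]; simp [h0, h1]), mp_eq (by rw [mem_sq]; simp [h0, h1])]
  exact mq_glue _ _ rfl rfl rfl

lemma exists_rep (p : MobiusBand) : ∃ x ∈ UnitSquare, mp x = p := by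
  obtain ⟨a, rfl⟩ := mq_surj p
  exact ⟨a.1, a.2, mp_eq a.2⟩

/-- lifting functions -/
lemma exists_desc {Z : Type*} [TopologicalSpace Z] (h : ℝ × ℝ → Z) (hc : ContinuousOn h UnitSquare)
    (hg : ∀ t, 0 ≤ t → t ≤ 1 → h (0, t) = h (1, 1 - t)) :
    ∃ k : MobiusBand → Z, Continuous k ∧ ∀ x ∈ UnitSquare, k (mp x) = h x := by
  refine ⟨Quot.lift (fun a : UnitSquare => h a.1) ?_, ?_, ?_⟩
  · intro a b hab
    obtain ⟨h0, h1, h2⟩ := hab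
    have ha := mem_sq.1 a.2
    have e1 : (a : ℝ × ℝ) = (0, a.1.2) := Prod.ext h0 rfl
    have e2 : (b : ℝ × ℝ) = (1, 1 - a.1.2) := Prod.ext h1 h2
    rw [e1, e2]; exact hg _ ha.2.1 ha.2.2
  · refine mq_quot.continuous_iff.2 ?_
    exact continuousOn_iff_continuous_domRestrict.1 hc
  · intro x hx
    rw [mp_eq hx]; rfl

lemma exists_log (f : MobiusBand → ℂ) (hf : Continuous f) (hf0 : ∀ x, f x ≠ 0) :
    ∃ h : ℝ × ℝ → ℂ, ContinuousOn h UnitSquare ∧ (∀ x ∈ UnitSquare, f (mp x) = Complex.exp (h x)) ∧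
    ∃ n : ℤ, ∀ t, 0 ≤ t → t ≤ 1 → h (1, 1 - t) - h (0, t) = n * (2 * Real.pi * Complex.I) := by
  obtain ⟨h, hh, he⟩ := sq_convex.logOn (f ∘ mp) (hf.comp mp_cont).continuousOn (fun x _ => hf0 _)
  refine ⟨h, hh, he, ?_⟩
  have hS : IsPreconnected (Set.Icc (0:ℝ) 1) := isPreconnected_Icc
  obtain ⟨n, hn⟩ := log_diff hS (fun t => h (1, 1 - t)) (fun t => h (0, t))
    (hh.comp (by fun_prop) (fun t ht => by rw [mem_sq]; simpa using ht.symm))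
    (hh.comp (by fun_prop) (fun t ht => by rw [mem_sq]; simpa using ht)) (by
      intro t ht
      rw [← he _ (by rw [mem_sq]; simpa using ht.symm), ← he _ (by rw [mem_sq]; simpa using ht)]
      simp only [Function.comp]
      rw [mp_glue ht.1 ht.2])
  exact ⟨n, fun t h0 h1 => hn t ⟨h0, h1⟩⟩

theorem rankOne : RankOne (Set.univ : Set MobiusBand) := by
  intro f g hf hf0 hg hg0
  obtain ⟨h, hh, he, n, hn⟩ := exists_log f (continuousOn_univ.1 hf) (fun x => hf0 x trivial)
  obtain ⟨k, hk, ke, m, hm⟩ := exists_log g (continuousOn_univ.1 hg) (fun x => hg0 x trivial)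
  obtain ⟨a, b, hab, hr⟩ := exists_int_rel n m
  obtain ⟨w, hw, hwe⟩ := exists_desc (fun x => a * h x + b * k x)
    ((hh.const_smul (a:ℂ)).add (hk.const_smul (b:ℂ))) (by
      intro t h0 h1
      have e1 := hn t h0 h1
      have e2 := hm t h0 h1
      have hrc : (a:ℂ) * n + b * m = 0 := by exact_mod_cast hr
      linear_combination (-a:ℂ) * e1 - b * e2 - (2 * Real.pi * Complex.I) * hrc)
  refine ⟨a, b, hab, w, hw.continuousOn, fun p _ => ?_⟩
  obtain ⟨x, hx, rfl⟩ := exists_rep p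
  rw [he x hx, ke x hx, hwe x hx, zpow_exp]

theorem preconn : IsPreconnected (Set.univ : Set MobiusBand) := by
  have : (Set.univ : Set MobiusBand) = mp '' UnitSquare := by
    symm; rw [Set.eq_univ_iff_forall]
    intro p
    obtain ⟨x, hx, rfl⟩ := exists_rep p
    exact ⟨x, hx, rfl⟩
  rw [this]
  exact sq_convex.isPreconnected.image _ mp_cont.continuousOn

theorem not_logOn : ¬ LogOn (Set.univ : Set MobiusBand) := by
  intro hL
  obtain ⟨f, hf, hfe⟩ := exists_desc (fun x => Complex.exp (x.1 * (2 * Real.pi * Complex.I)))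
    (by fun_prop) (by
      intro t _ _
      simp [Complex.exp_two_pi_mul_I])
  have hf0 : ∀ x, f x ≠ 0 := by
    intro p
    obtain ⟨x, hx, rfl⟩ := exists_rep p
    rw [hfe x hx]; exact Complex.exp_ne_zero _
  obtain ⟨h, hh, he⟩ := hL f hf.continuousOn (fun x _ => hf0 x)
  obtain ⟨n, hn⟩ := log_diff sq_convex.isPreconnected (fun x => h (mp x))
    (fun x => (x.1 * (2 * Real.pi * Complex.I) : ℂ))
    ((continuousOn_univ.1 hh).comp mp_cont).continuousOn (by fun_prop)
    (fun x hx => by rw [← hfe x hx, he _ trivial])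
  have e1 := hn (0, 0) (by rw [mem_sq]; simp)
  have e2 := hn (1, 1 - 0) (by rw [mem_sq]; simp)
  rw [mp_glue le_rfl zero_le_one] at e1
  have : (2 * Real.pi * Complex.I : ℂ) = 0 := by
    push_cast at e1 e2
    linear_combination e1 - e2
  simp [Real.pi_ne_zero] at this

/-- the half turn along the core -/
noncomputable def rotF (x : ℝ × ℝ) : MobiusBand :=
  if x.1 ≤ 1/2 then mp (x.1 + 1/2, x.2) else mp (x.1 - 1/2, 1 - x.2)

noncomputable def rotG (x : ℝ × ℝ) : MobiusBand :=
  if x.1 ≤ 1/2 then mp (x.1 + 1/2, 1 - x.2) else mp (x.1 - 1/2, x.2)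

lemma rotF_cont : ContinuousOn rotF UnitSquare := by
  refine ContinuousOn.if ?_ ?_ ?_
  · rintro x ⟨hx, hx'⟩
    have h1 : x.1 = 1/2 := frontier_le_subset_eq continuous_fst continuous_const hx'
    have h := mem_sq.1 hx
    rw [h1]; norm_num
    have := mp_glue (t := 1 - x.2) (by linarith) (by linarith)
    rw [this]; simp
  · exact (mp_cont.comp (by fun_prop)).continuousOn
  · exact (mp_cont.comp (by fun_prop)).continuousOn

lemma rotG_cont : ContinuousOn rotG UnitSquare := by
  refine ContinuousOn.if ?_ ?_ ?_
  · rintro x ⟨hx, hx'⟩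
    have h1 : x.1 = 1/2 := frontier_le_subset_eq continuous_fst continuous_const hx'
    have h := mem_sq.1 hx
    rw [h1]; norm_num
    have := mp_glue (t := x.2) (by linarith) (by linarith)
    rw [this]
  · exact (mp_cont.comp (by fun_prop)).continuousOn
  · exact (mp_cont.comp (by fun_prop)).continuousOn

lemma exists_rot : ∃ ρ : MobiusBand ≃ₜ MobiusBand, ∀ t, 0 ≤ t → t ≤ 1 →
    ρ (mp (0, t)) = mp (1/2, t) := by
  obtain ⟨F, hF, hFe⟩ := exists_desc rotF rotF_cont (by
    intro t h0 h1; unfold rotF; norm_num)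
  obtain ⟨G, hG, hGe⟩ := exists_desc rotG rotG_cont (by
    intro t h0 h1; unfold rotG; norm_num)
  refine ⟨⟨⟨F, G, ?_, ?_⟩, hF, hG⟩, ?_⟩
  · intro p
    obtain ⟨x, hx, rfl⟩ := exists_rep p
    rw [hFe x hx]
    have h := mem_sq.1 hx
    unfold rotF
    split_ifs with h1
    · rw [hGe _ (by rw [mem_sq]; simp only; constructor <;> constructor <;> linarith)]
      unfold rotG
      split_ifs with h2
      · simp only at h2
        have h3 : x.1 = 0 := by linarith
        have := mp_glue h.2.1 h.2.2
        have e : x = (0, x.2) := Prod.ext h3 rfl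
        rw [e, this]; norm_num
      · simp
    · rw [hGe _ (by rw [mem_sq]; simp only; constructor <;> constructor <;> linarith)]
      unfold rotG
      rw [if_pos (by simp only; linarith)]
      simp
  · intro p
    obtain ⟨x, hx, rfl⟩ := exists_rep p
    rw [hGe x hx]
    have h := mem_sq.1 hx
    unfold rotG
    split_ifs with h1
    · rw [hFe _ (by rw [mem_sq]; simp only; constructor <;> constructor <;> linarith)]
      unfold rotF
      split_ifs with h2
      · simp only at h2
        have h3 : x.1 = 0 := by linarith
        have := mp_glue h.2.1 h.2.2
        have e : x = (0, x.2) := Prod.ext h3 rfl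
        rw [e, this]; norm_num
      · simp
    · rw [hFe _ (by rw [mem_sq]; simp only; constructor <;> constructor <;> linarith)]
      unfold rotF
      rw [if_pos (by simp only; linarith)]
      simp
  · intro t h0 h1
    change F _ = _
    rw [hFe _ (by rw [mem_sq]; simp [h0, h1])]
    unfold rotF; norm_num

end Mob


namespace Mob

/-- chart domain -/
def chart : Set (ℝ × ℝ) := {x | (0 < x.1 ∧ x.1 < 1) ∧ (0 ≤ x.2 ∧ x.2 ≤ 1)}

lemma mem_chart {x : ℝ × ℝ} : x ∈ chart ↔ (0 < x.1 ∧ x.1 < 1) ∧ (0 ≤ x.2 ∧ x.2 ≤ 1) := Iff.rfl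

lemma chart_sq {x : ℝ × ℝ} (hx : x ∈ chart) : x ∈ UnitSquare := by
  rw [mem_sq]; exact ⟨⟨hx.1.1.le, hx.1.2.le⟩, hx.2⟩

lemma chart_convex : Convex ℝ chart := by
  have : chart = Set.Ioo 0 1 ×ˢ Set.Icc 0 1 := by ext x; rfl
  rw [this]
  exact (convex_Ioo 0 1).prod (convex_Icc 0 1)

lemma chart_inj {x y : ℝ × ℝ} (hx : x ∈ chart) (hy : y ∈ UnitSquare) (h : mp x = mp y) : x = y := by
  let P : MobiusBand → Prop := Quot.lift (fun a : UnitSquare => a.1 = x) (by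
    rintro a b ⟨h0, h1, _⟩
    simp only [eq_iff_iff]
    constructor
    · rintro rfl; have := hx.1.1; linarith
    · rintro rfl; have := hx.1.2; linarith)
  have h1 : P (mp x) := by rw [mp_eq (chart_sq hx)]; rfl
  rw [h, mp_eq hy] at h1
  exact h1.symm

/-- the chart -/
noncomputable def ck (x : chart) : MobiusBand := mp x.1

lemma ck_emb : Topology.IsOpenEmbedding ck := by
  refine Topology.IsOpenEmbedding.of_continuous_injective_isOpenMap
    (mp_cont.comp continuous_subtype_val) ?_ ?_
  · intro x y h
    exact Subtype.ext (chart_inj x.2 (chart_sq y.2) h)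
  · rintro O ⟨U, hU, rfl⟩
    rw [← mq_quot.isOpen_preimage]
    have : mq ⁻¹' (ck '' (Subtype.val ⁻¹' U)) =
        {a : UnitSquare | (0 < a.1.1 ∧ a.1.1 < 1) ∧ a.1 ∈ U} := by
      ext a
      constructor
      · rintro ⟨x, hxU, hx⟩
        have hx' : mp x.1 = mp a.1 := by rw [mp_eq a.2]; exact hx
        have := chart_inj x.2 a.2 hx'
        have h2 := x.2
        rw [Set.mem_preimage, this] at hxU
        rw [this] at h2
        exact ⟨h2.1, hxU⟩
      · rintro ⟨h1, h2⟩
        refine ⟨⟨a.1, h1, (mem_sq.1 a.2).2⟩, h2, ?_⟩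
        exact mp_eq a.2
    rw [this]
    refine IsOpen.and (IsOpen.and ?_ ?_) ?_
    · exact isOpen_lt continuous_const (by fun_prop)
    · exact isOpen_lt (by fun_prop) continuous_const
    · exact hU.preimage continuous_subtype_val

lemma nhds_range {p : chart} : nhdsWithin (ck p) (Set.range ck) = nhdsWithin (ck p) Set.univ := by
  rw [nhdsWithin_univ, ck_emb.isOpen_range.nhdsWithin_eq ⟨p, rfl⟩]

lemma locP_push {P : ∀ {X : Type} [TopologicalSpace X], Set X → Prop}
    (hP : ∀ {X Y : Type} [TopologicalSpace X] [TopologicalSpace Y] (j : Y → X),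
      Topology.IsEmbedding j → ∀ W, P (j '' W) ↔ P W)
    {p : ℝ × ℝ} (hp : p ∈ chart) :
    LocP P chart p ↔ LocP P (Set.univ : Set MobiusBand) (mp p) := by
  have hv : Topology.IsEmbedding (Subtype.val : chart → ℝ × ℝ) := Topology.IsEmbedding.subtypeVal
  have e : (Subtype.val '' (Set.univ : Set chart)) = chart := by simp
  constructor
  · intro h
    rw [← e] at h
    have h2 := LocP.of_image (y := ⟨p, hp⟩) hv (fun W => (hP _ hv W).1) h
    have h3 := LocP.image ck_emb.isEmbedding (fun W => (hP _ ck_emb.isEmbedding W).2) h2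
    rw [Set.image_univ] at h3
    exact h3.congr_nhds (nhds_range (p := ⟨p, hp⟩))
  · intro h
    have h1 : LocP P (ck '' Set.univ) (ck ⟨p, hp⟩) := by
      rw [Set.image_univ]
      exact LocP.congr_nhds nhds_range.symm h
    have h2 := LocP.of_image ck_emb.isEmbedding (fun W => (hP _ ck_emb.isEmbedding W).1) h1
    have h3 := LocP.image hv (fun W => (hP _ hv W).2) h2
    rw [e] at h3; exact h3

lemma rankOne_iff {X Y : Type} [TopologicalSpace X] [TopologicalSpace Y] (j : Y → X)
    (hj : Topology.IsEmbedding j) (W : Set Y) : RankOne (j '' W) ↔ RankOne W := by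
  refine ⟨fun h => ?_, fun h => h.image_emb hj⟩
  rcases isEmpty_or_nonempty Y with h0 | h0
  · have : W = ∅ := Set.eq_empty_of_isEmpty W
    subst this
    exact fun f g _ _ _ _ => ⟨1, 0, by simp, fun _ => 0, continuousOn_empty _, by simp⟩
  have hl := Function.leftInverse_invFun hj.injective
  exact h.retract (Function.invFun j) j ((emb_inv hj).mono (Set.image_subset_range _ _))
      hj.continuous.continuousOn (by rintro _ ⟨y, hy, rfl⟩; rwa [hl]) (fun y hy => ⟨y, hy, rfl⟩)
      (fun y _ => hl y)

lemma preconn_iff {X Y : Type} [TopologicalSpace X] [TopologicalSpace Y] (j : Y → X)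
    (hj : Topology.IsEmbedding j) (W : Set Y) : IsPreconnected (j '' W) ↔ IsPreconnected W :=
  hj.isInducing.isPreconnected_image

lemma exists_ball {p : ℝ × ℝ} {S U : Set (ℝ × ℝ)} (hU : U ∈ nhdsWithin p S) :
    ∃ r > 0, Metric.ball p r ∩ S ⊆ U := Metric.mem_nhdsWithin_iff.1 hU

lemma chart_pts {p : ℝ × ℝ} (hp : p ∈ chart) {r : ℝ} (hr : 0 < r) :
    (∃ q ∈ Metric.ball p r ∩ chart, p.1 < q.1) ∧ (∃ q ∈ Metric.ball p r ∩ chart, q.1 < p.1) ∧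
    (∃ q ∈ Metric.ball p r ∩ chart, q ≠ p ∧ q.1 = p.1) := by
  obtain ⟨⟨h1, h2⟩, h3, h4⟩ := hp
  refine ⟨?_, ?_, ?_⟩
  · set ε := min r (1 - p.1) with hε
    have e0 : 0 < ε := lt_min hr (by linarith)
    have e1 : ε ≤ r := min_le_left _ _
    have e2 : ε ≤ 1 - p.1 := min_le_right _ _
    refine ⟨(p.1 + ε / 2, p.2), ⟨?_, ⟨?_, ?_⟩, h3, h4⟩, ?_⟩
    · simp only [Metric.mem_ball, Prod.dist_eq, Real.dist_eq, max_lt_iff]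
      constructor
      · simp only [add_sub_cancel_left]; rw [abs_lt]; constructor <;> linarith
      · simpa using hr
    all_goals simp only; linarith
  · set ε := min r p.1 with hε
    have e0 : 0 < ε := lt_min hr (by linarith)
    have e1 : ε ≤ r := min_le_left _ _
    have e2 : ε ≤ p.1 := min_le_right _ _
    refine ⟨(p.1 - ε / 2, p.2), ⟨?_, ⟨?_, ?_⟩, h3, h4⟩, ?_⟩
    · simp only [Metric.mem_ball, Prod.dist_eq, Real.dist_eq, max_lt_iff]
      constructor
      · rw [abs_lt]; constructor <;> linarith
      · simpa using hr
    all_goals simp only; linarith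
  · set ε := min r (1/2) with hε
    have e0 : 0 < ε := lt_min hr (by norm_num)
    have e1 : ε ≤ r := min_le_left _ _
    have e2 : ε ≤ 1/2 := min_le_right _ _
    rcases le_total p.2 (1/2) with h | h
    · refine ⟨(p.1, p.2 + ε / 2), ⟨?_, ⟨h1, h2⟩, ?_, ?_⟩, ?_, rfl⟩
      · simp only [Metric.mem_ball, Prod.dist_eq, Real.dist_eq, max_lt_iff]
        constructor
        · simpa using hr
        · rw [abs_lt]; constructor <;> linarith
      · simp only; linarith
      · simp only; linarith
      · intro h; have := congrArg Prod.snd h; simp only at this; linarith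
    · refine ⟨(p.1, p.2 - ε / 2), ⟨?_, ⟨h1, h2⟩, ?_, ?_⟩, ?_, rfl⟩
      · simp only [Metric.mem_ball, Prod.dist_eq, Real.dist_eq, max_lt_iff]
        constructor
        · simpa using hr
        · rw [abs_lt]; constructor <;> linarith
      · simp only; linarith
      · simp only; linarith
      · intro h; have := congrArg Prod.snd h; simp only at this; linarith

lemma chart_loc_conn {p : ℝ × ℝ} (hp : p ∈ chart) : LocP IsPreconnected chart p := by
  intro U hU
  obtain ⟨r, hr, hrU⟩ := exists_ball hU
  obtain ⟨⟨q, hq, h1⟩, ⟨q', hq', h2⟩, ⟨s, hs, h3, h4⟩⟩ := chart_pts hp hr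
  refine ⟨Metric.ball p r ∩ chart, Filter.inter_mem (mem_nhdsWithin_of_mem_nhds
    (Metric.ball_mem_nhds _ hr)) self_mem_nhdsWithin, hrU, ?_⟩
  exact punct_conn ((convex_ball p r).inter chart_convex) (LinearMap.fst ℝ ℝ ℝ) hq h1 hq' h2 hs h3 h4

lemma chart_loc_rank {p : ℝ × ℝ} (hp : p ∈ chart) : LocP RankOne chart p := by
  intro U hU
  obtain ⟨r, hr, hrU⟩ := exists_ball hU
  obtain ⟨⟨q, hq, h1⟩, ⟨q', hq', h2⟩, -⟩ := chart_pts hp hr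
  refine ⟨Metric.ball p r ∩ chart, Filter.inter_mem (mem_nhdsWithin_of_mem_nhds
    (Metric.ball_mem_nhds _ hr)) self_mem_nhdsWithin, hrU, ?_⟩
  have hW := (convex_ball p r).inter chart_convex
  refine RankOne.union (C₁ := (Metric.ball p r ∩ chart) ∩ {x | x.1 = p.1 ∧ p.2 < x.2})
    (C₂ := (Metric.ball p r ∩ chart) ∩ {x | x.1 = p.1 ∧ x.2 < p.2})
    (isClosed_le continuous_const (by fun_prop)) (isClosed_le (by fun_prop) continuous_const)
    (halves_cover (LinearMap.fst ℝ ℝ ℝ) p _) (half_log hW (LinearMap.fst ℝ ℝ ℝ) hq h1)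
    (half_log' hW (LinearMap.fst ℝ ℝ ℝ) hq' h2) ?_ ?_ ?_
  · ext x
    simp only [Set.mem_inter_iff, Set.mem_sdiff, Set.mem_singleton_iff, Set.mem_union,
      Set.mem_ofPred_eq, LinearMap.fst_apply]
    constructor
    · rintro ⟨⟨⟨hx, hne⟩, ha⟩, hb⟩
      have e : x.1 = p.1 := le_antisymm hb ha
      rcases lt_trichotomy x.2 p.2 with h | h | h
      · exact Or.inr ⟨hx, e, h⟩
      · exact absurd (Prod.ext e h) hne
      · exact Or.inl ⟨hx, e, h⟩
    · rintro (⟨hx, e, h⟩ | ⟨hx, e, h⟩)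
      · exact ⟨⟨⟨hx, by rintro rfl; exact lt_irrefl _ h⟩, e.ge⟩, e.le⟩
      · exact ⟨⟨⟨hx, by rintro rfl; exact lt_irrefl _ h⟩, e.ge⟩, e.le⟩
  · refine (hW.inter ?_).isPreconnected
    intro x hx y hy a b ha hb hab
    have : ({x : ℝ × ℝ | x.1 = p.1 ∧ p.2 < x.2}) = {p.1} ×ˢ Set.Ioi p.2 := by ext; rfl
    rw [this] at *
    exact ((convex_singleton _).prod (convex_Ioi _)) hx hy ha hb hab
  · refine (hW.inter ?_).isPreconnected
    intro x hx y hy a b ha hb hab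
    have : ({x : ℝ × ℝ | x.1 = p.1 ∧ x.2 < p.2}) = {p.1} ×ˢ Set.Iio p.2 := by ext; rfl
    rw [this] at *
    exact ((convex_singleton _).prod (convex_Iio _)) hx hy ha hb hab

lemma loc_all {P : ∀ {X : Type} [TopologicalSpace X], Set X → Prop}
    (hP : ∀ {X Y : Type} [TopologicalSpace X] [TopologicalSpace Y] (j : Y → X),
      Topology.IsEmbedding j → ∀ W, P (j '' W) ↔ P W)
    (h : ∀ p ∈ chart, LocP P chart p) (z : MobiusBand) :
    LocP P (Set.univ : Set MobiusBand) z := by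
  obtain ⟨x, hx, rfl⟩ := exists_rep z
  have hx' := mem_sq.1 hx
  by_cases hc : x ∈ chart
  · exact (locP_push hP hc).1 (h x hc)
  have key : ∃ t, 0 ≤ t ∧ t ≤ 1 ∧ mp x = mp (0, t) := by
    rcases hx'.1.1.eq_or_lt with h0 | h0
    · exact ⟨x.2, hx'.2.1, hx'.2.2, by rw [h0]⟩
    rcases hx'.1.2.eq_or_lt with h1 | h1
    · refine ⟨1 - x.2, by linarith, by linarith, ?_⟩
      rw [mp_glue (by linarith) (by linarith), ← h1]; simp
    · exact absurd ⟨⟨h0, h1⟩, hx'.2⟩ hc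
  obtain ⟨t, h0, h1, e⟩ := key
  obtain ⟨ρ, hρ⟩ := exists_rot
  have hm : ((1/2, t) : ℝ × ℝ) ∈ chart := ⟨⟨by norm_num, by norm_num⟩, h0, h1⟩
  have h2 := (locP_push hP hm).1 (h _ hm)
  rw [← hρ t h0 h1] at h2
  rw [e]
  refine LocP.of_image (j := ρ) ρ.isEmbedding (Q := P) (fun W => (hP _ ρ.isEmbedding W).1) ?_
  rw [Set.image_univ, ρ.range_coe]
  exact h2

theorem loc_conn (z : MobiusBand) : LocP IsPreconnected (Set.univ : Set MobiusBand) z :=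
  loc_all (P := fun {X} [TopologicalSpace X] (W : Set X) => IsPreconnected W)
    (fun j hj W => preconn_iff j hj W) (fun p hp => chart_loc_conn hp) z

theorem loc_rank (z : MobiusBand) : LocP RankOne (Set.univ : Set MobiusBand) z :=
  loc_all (P := fun {X} [TopologicalSpace X] (W : Set X) => RankOne W)
    (fun j hj W => rankOne_iff j hj W) (fun p hp => chart_loc_rank hp) z

lemma not_loc_log {p : ℝ × ℝ} (hp : p ∈ chart) (h0 : 0 < p.2) (h1 : p.2 < 1) :
    ¬ LocP LogOn (Set.univ : Set MobiusBand) (mp p) := by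
  intro h
  have h2 := (locP_push (P := fun {X} [TopologicalSpace X] (W : Set X) => LogOn W)
    (fun j hj W => LogOn.image_emb hj) hp).2 h
  obtain ⟨W, hW, -, hL⟩ := h2 Set.univ Filter.univ_mem
  have hn : nhdsWithin p chart = nhds p := by
    apply nhdsWithin_eq_nhds.2
    have h3 : (Set.Ioo 0 1 ×ˢ Set.Ioo 0 1 : Set (ℝ × ℝ)) ∈ nhds p :=
      (isOpen_Ioo.prod isOpen_Ioo).mem_nhds ⟨⟨hp.1.1, hp.1.2⟩, h0, h1⟩
    exact Filter.mem_of_superset h3 (fun x hx => ⟨hx.1, hx.2.1.le, hx.2.2.le⟩)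
  rw [hn] at hW
  obtain ⟨r, hr, hrW⟩ := Metric.mem_nhds_iff.1 hW
  obtain ⟨k, hk, hke⟩ := hL (fun x => ((x.1 - p.1 : ℝ) : ℂ) + ((x.2 - p.2 : ℝ) : ℂ) * Complex.I)
    (by fun_prop) (by
      rintro x ⟨_, hx⟩ he
      apply hx
      have e1 := congrArg Complex.re he
      have e2 := congrArg Complex.im he
      simp at e1 e2
      exact Prod.ext (by linarith) (by linarith))
  let γ : ℝ → ℝ × ℝ := fun θ => (p.1 + r / 2 * Real.cos θ, p.2 + r / 2 * Real.sin θ)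
  have hγ : ∀ θ, γ θ ∈ W \ {p} := by
    intro θ
    constructor
    · apply hrW
      have b1 := Real.abs_cos_le_one θ
      have b2 := Real.abs_sin_le_one θ
      simp only [γ, Metric.mem_ball, Prod.dist_eq, Real.dist_eq, max_lt_iff, add_sub_cancel_left,
        abs_mul, abs_of_pos (half_pos hr)]
      constructor <;> nlinarith
    · intro h
      have e1 := congrArg Prod.fst h
      have e2 := congrArg Prod.snd h
      simp only [γ] at e1 e2
      have e3 : Real.cos θ = 0 := by
        have : r / 2 * Real.cos θ = 0 := by linarith
        simpa [hr.ne'] using this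
      have e4 : Real.sin θ = 0 := by
        have : r / 2 * Real.sin θ = 0 := by linarith
        simpa [hr.ne'] using this
      have := Real.sin_sq_add_cos_sq θ
      rw [e3, e4] at this; norm_num at this
  have hγc : Continuous γ := by fun_prop
  obtain ⟨n, hn⟩ := log_diff (isPreconnected_univ (α := ℝ)) (fun θ => k (γ θ))
    (fun θ => (Real.log (r/2) : ℂ) + θ * Complex.I)
    (hk.comp hγc.continuousOn (fun θ _ => hγ θ)) (by fun_prop) (by
      intro θ _
      rw [← hke _ (hγ θ), Complex.exp_add, ← Complex.ofReal_exp, Real.exp_log (half_pos hr),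
        Complex.exp_mul_I]
      simp only [γ]
      push_cast
      ring)
  have e1 := hn 0 trivial
  have e2 := hn (2 * Real.pi) trivial
  have : γ (2 * Real.pi) = γ 0 := by simp [γ]
  simp only [this] at e2
  have : (2 * Real.pi * Complex.I : ℂ) = 0 := by
    push_cast at e1 e2
    linear_combination e1 - e2
  simp [Real.pi_ne_zero] at this

theorem exists_not_loc_log (O : Set MobiusBand) (hO : IsOpen O) (hne : O.Nonempty) :
    ∃ z ∈ O, ¬ LocP LogOn (Set.univ : Set MobiusBand) z := by
  obtain ⟨z, hz⟩ := hne
  obtain ⟨x, hx, rfl⟩ := exists_rep z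
  have hx' := mem_sq.1 hx
  let γ : ℝ → ℝ × ℝ := fun s => (x.1 + s * (1/2 - x.1), x.2 + s * (1/2 - x.2))
  have hγ : Continuous γ := by fun_prop
  have h0 : γ 0 = x := by simp [γ]
  have hU : (mp ∘ γ) ⁻¹' O ∈ nhds (0:ℝ) := by
    refine (hO.preimage (mp_cont.comp hγ)).mem_nhds ?_
    simpa [h0] using hz
  obtain ⟨ε, hε, hεU⟩ := Metric.mem_nhds_iff.1 hU
  set s := min ε 1 / 2 with hs
  have m0 : 0 < min ε 1 := lt_min hε one_pos
  have m1 : min ε 1 ≤ ε := min_le_left _ _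
  have m2 : min ε 1 ≤ 1 := min_le_right _ _
  have hs0 : 0 < s := by linarith
  have hs1 : s < 1 := by linarith
  have hsU : mp (γ s) ∈ O := by
    apply hεU
    rw [Metric.mem_ball, Real.dist_eq, sub_zero, abs_of_pos hs0]; linarith
  refine ⟨_, hsU, not_loc_log ⟨⟨?_, ?_⟩, ?_, ?_⟩ ?_ ?_⟩ <;> simp only [γ] <;> nlinarith

end Mob


/-! ### Topological properties shared with the Möbius band -/

structure MobLike {E : Type} [TopologicalSpace E] (S : Set E) : Prop where
  rank : RankOne S
  nolog : ¬ LogOn S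
  conn : IsPreconnected S
  lconn : ∀ p ∈ S, LocP IsPreconnected S p
  lrank : ∀ p ∈ S, LocP RankOne S p
  nll : ∀ O : Set E, IsOpen O → (O ∩ S).Nonempty → ∃ z ∈ O ∩ S, ¬ LocP LogOn S z

namespace SComplex
variable {V : Type} [DecidableEq V] [Fintype V]

lemma IsMobius.mobLike {K : SComplex V} (h : K.IsMobius) : MobLike K.realization := by
  obtain ⟨φ⟩ := h
  let j : MobiusBand → (V → ℝ) := fun z => (φ.symm z).1
  have hj : Topology.IsEmbedding j := Topology.IsEmbedding.subtypeVal.comp φ.symm.isEmbedding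
  have hr : j '' Set.univ = K.realization := by
    rw [Set.image_univ]
    have : j = Subtype.val ∘ φ.symm := rfl
    rw [this, Set.range_comp, φ.symm.range_coe]; simp
  have hrep : ∀ p ∈ K.realization, ∃ z, j z = p := by
    intro p hp
    rw [← hr] at hp
    obtain ⟨z, -, hz⟩ := hp
    exact ⟨z, hz⟩
  constructor
  · rw [← hr]; exact Mob.rankOne.image_emb hj
  · rw [← hr, LogOn.image_emb hj]; exact Mob.not_logOn
  · rw [← hr]; exact Mob.preconn.image _ hj.continuous.continuousOn
  · intro p hp
    obtain ⟨z, rfl⟩ := hrep p hp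
    rw [← hr]
    exact (Mob.loc_conn z).image hj (fun W hW => hW.image _ hj.continuous.continuousOn)
  · intro p hp
    obtain ⟨z, rfl⟩ := hrep p hp
    rw [← hr]
    exact (Mob.loc_rank z).image hj (fun W hW => hW.image_emb hj)
  · rintro O hO ⟨p, hpO, hp⟩
    obtain ⟨z, rfl⟩ := hrep p hp
    obtain ⟨w, hw, hw'⟩ := Mob.exists_not_loc_log (j ⁻¹' O) (hO.preimage hj.continuous) ⟨z, hpO⟩
    refine ⟨j w, ⟨hw, hr ▸ ⟨w, trivial, rfl⟩⟩, fun hc => hw' ?_⟩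
    rw [← hr] at hc
    exact LocP.of_image hj (fun W => (LogOn.image_emb hj).1) hc

/-- support of a point -/
noncomputable def supp (p : V → ℝ) : Finset V := by
  classical exact Finset.univ.filter fun v => p v ≠ 0

lemma mem_supp {p : V → ℝ} {v : V} : v ∈ supp p ↔ p v ≠ 0 := by
  classical
  unfold supp; simp

lemma mem_real {K : SComplex V} {p : V → ℝ} :
    p ∈ K.realization ↔ supp p ∈ K.faces ∧ (∀ v, 0 ≤ p v) ∧ ∑ v, p v = 1 := by
  constructor
  · rintro ⟨σ, hσ, h1, h2, h3⟩
    refine ⟨K.down_closed σ hσ _ ?_ ?_, h2, h3⟩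
    · intro v hv
      by_contra hc
      exact mem_supp.1 hv (h1 v hc)
    · by_contra hc
      rw [not_nonempty_iff_eq_empty] at hc
      have : ∀ v, p v = 0 := by
        intro v
        by_contra hv
        have := mem_supp.2 hv
        rw [hc] at this; simp at this
      simp [this] at h3
  · rintro ⟨h1, h2, h3⟩
    refine ⟨_, h1, fun v hv => ?_, h2, h3⟩
    by_contra hc
    exact hv (mem_supp.2 hc)

lemma real_of_supp {K : SComplex V} {p : V → ℝ} {σ : Finset V} (hσ : σ ∈ K.faces)
    (h0 : ∀ v, v ∉ σ → p v = 0) (h1 : ∀ v, 0 ≤ p v) (h2 : ∑ v, p v = 1) : p ∈ K.realization :=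
  ⟨σ, hσ, h0, h1, h2⟩

lemma face_of_pos {K : SComplex V} {p : V → ℝ} (hp : p ∈ K.realization) {σ : Finset V}
    (hne : σ.Nonempty) (h : ∀ v ∈ σ, p v ≠ 0) : σ ∈ K.faces :=
  K.down_closed _ (mem_real.1 hp).1 _ (fun v hv => mem_supp.2 (h v hv)) hne

/-- the relatively open simplex -/
def oSimp (σ : Finset V) : Set (V → ℝ) :=
  {p | (∀ v ∈ σ, 0 < p v) ∧ (∀ v, v ∉ σ → p v = 0) ∧ ∑ v, p v = 1}

lemma oSimp_convex (σ : Finset V) : Convex ℝ (oSimp σ) := by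
  rintro p ⟨h1, h2, h3⟩ q ⟨k1, k2, k3⟩ a b ha hb hab
  refine ⟨fun v hv => ?_, fun v hv => ?_, ?_⟩
  · simp only [Pi.add_apply, Pi.smul_apply, smul_eq_mul]
    have e1 := h1 v hv
    have e2 := k1 v hv
    rcases ha.eq_or_lt with h0 | h0
    · subst h0
      have : b = 1 := by linarith
      subst this; simpa using e2
    · have := mul_pos h0 e1
      have := mul_nonneg hb e2.le
      linarith
  · simp [h2 v hv, k2 v hv]
  · simp only [Pi.add_apply, Pi.smul_apply, smul_eq_mul, sum_add_distrib, ← mul_sum, h3, k3]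
    linarith

lemma pert (σ : Finset V) (z : V → ℝ) (hz : z ∈ oSimp σ) (r : ℝ) (hr : 0 < r) (u w : V)
    (hu : u ∈ σ) (hw : w ∈ σ) (huw : u ≠ w) :
    ∃ q ∈ Metric.ball z r ∩ oSimp σ, z u < q u ∧ q w < z w ∧ ∀ t, t ≠ u → t ≠ w → q t = z t := by
  obtain ⟨h1, h2, h3⟩ := hz
  set ε := min r (z w) / 2 with hε
  have m0 : 0 < min r (z w) := lt_min hr (h1 w hw)
  have m1 : min r (z w) ≤ r := min_le_left _ _
  have m2 : min r (z w) ≤ z w := min_le_right _ _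
  have e0 : 0 < ε := by linarith
  refine ⟨z + (Pi.single u ε - Pi.single w ε), ⟨?_, ?_, ?_, ?_⟩, ?_, ?_, ?_⟩
  · rw [Metric.mem_ball, dist_eq_norm, pi_norm_lt_iff hr]
    intro t
    simp only [Pi.add_apply, Pi.sub_apply, add_sub_cancel_left, Real.norm_eq_abs, abs_lt]
    by_cases htu : t = u
    · subst htu; simp [huw]; constructor <;> linarith
    · by_cases htw : t = w
      · subst htw; simp [htu]; constructor <;> linarith
      · simp [htu, htw, hr]
  · intro t ht
    have := h1 t ht
    by_cases htu : t = u
    · subst htu; simp [huw]; linarith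
    · by_cases htw : t = w
      · subst htw; simp [htu]; linarith
      · simp [htu, htw, this]
  · intro t ht
    have h1 : t ≠ u := by rintro rfl; exact ht hu
    have h2' : t ≠ w := by rintro rfl; exact ht hw
    simp [h1, h2', h2 t ht]
  · simp [sum_add_distrib, h3]
  · simp [huw]; exact e0
  · simp [huw.symm]; exact e0
  · intro t h1 h2; simp [h1, h2]

def Dim (K : SComplex V) : Prop := ∀ σ ∈ K.faces, σ.card ≤ 3

lemma dim_of_mob {K : SComplex V} (h : MobLike K.realization) : K.Dim := by
  intro σ₀ hσ₀
  by_contra hc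
  push Not at hc
  obtain ⟨σ, hle, hmax⟩ := K.faces.exists_le_maximal hσ₀
  have hσ : σ ∈ K.faces := hmax.1
  have hcard : 4 ≤ σ.card := le_trans hc (card_le_card hle)
  obtain ⟨τ, hτσ, hτ⟩ := exists_subset_card_eq hcard
  obtain ⟨v, u, w, t, hvu, hvw, hvt, huw, hut, hwt, rfl⟩ := card_eq_four.1 hτ
  have hv : v ∈ σ := hτσ (by simp)
  have hu : u ∈ σ := hτσ (by simp)
  have hw : w ∈ σ := hτσ (by simp)
  have ht : t ∈ σ := hτσ (by simp)
  have hO : IsOpen {p : V → ℝ | ∀ v ∈ σ, 0 < p v} := by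
    have : {p : V → ℝ | ∀ v ∈ σ, 0 < p v} = ⋂ v ∈ σ, {p | 0 < p v} := by ext; simp
    rw [this]
    exact isOpen_biInter_finset (fun v _ => isOpen_lt continuous_const (by fun_prop))
  have hOS : {p : V → ℝ | ∀ v ∈ σ, 0 < p v} ∩ K.realization = oSimp σ := by
    ext p
    constructor
    · rintro ⟨hp, hpK⟩
      obtain ⟨h1, h2, h3⟩ := mem_real.1 hpK
      have hs : σ ⊆ supp p := fun v hv => mem_supp.2 (hp v hv).ne'
      have : supp p ⊆ σ := hmax.2 h1 hs
      refine ⟨hp, fun v hv => ?_, h3⟩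
      by_contra hc
      exact hv (this (mem_supp.2 hc))
    · rintro ⟨h1, h2, h3⟩
      refine ⟨h1, real_of_supp hσ h2 (fun v => ?_) h3⟩
      by_cases hv : v ∈ σ
      · exact (h1 v hv).le
      · rw [h2 v hv]
  obtain ⟨z, hz, hnl⟩ := h.nll _ hO (by
    rw [hOS]
    have hc0 : (0:ℝ) < σ.card := by exact_mod_cast (by omega : 0 < σ.card)
    refine ⟨fun v => if v ∈ σ then (σ.card : ℝ)⁻¹ else 0, fun v hv => by simp [hv, hc0],
      fun v hv => by simp [hv], ?_⟩
    rw [sum_ite_mem, univ_inter, sum_const, nsmul_eq_mul, mul_inv_cancel₀ hc0.ne'])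
  apply hnl
  intro U hU
  obtain ⟨r, hr, hrU⟩ := Metric.mem_nhdsWithin_iff.1 hU
  rw [hOS] at hz
  refine ⟨Metric.ball z r ∩ oSimp σ, ?_, ?_, ?_⟩
  · rw [← hOS]
    refine Filter.inter_mem (mem_nhdsWithin_of_mem_nhds (Metric.ball_mem_nhds _ hr))
      (Filter.inter_mem (mem_nhdsWithin_of_mem_nhds (hO.mem_nhds hz.1)) self_mem_nhdsWithin)
  · rw [← hOS]
    exact fun x hx => hrU ⟨hx.1, hx.2.2⟩
  have hW := (convex_ball z r).inter (oSimp_convex σ)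
  obtain ⟨q1, hq1, a1, -, -⟩ := pert σ z hz r hr v w hv hw hvw
  obtain ⟨q2, hq2, -, a2, -⟩ := pert σ z hz r hr w v hw hv hvw.symm
  refine LogOn.union (FA := {x | z v ≤ x v}) (FB := {x | x v ≤ z v})
    (isClosed_le continuous_const (by fun_prop)) (isClosed_le (by fun_prop) continuous_const)
    (halves_cover (LinearMap.proj v) z _) (half_log hW (LinearMap.proj v) hq1 a1)
    (half_log' hW (LinearMap.proj v) hq2 a2) ?_
  have e : (((Metric.ball z r ∩ oSimp σ) \ {z}) ∩ {x | z v ≤ x v} ∩ {x | x v ≤ z v}) =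
      ((Metric.ball z r ∩ oSimp σ) ∩ {x | x v = z v}) \ {z} := by
    ext x
    constructor
    · rintro ⟨⟨⟨hx, hn⟩, h1⟩, h2⟩
      exact ⟨⟨hx, le_antisymm h2 h1⟩, hn⟩
    · rintro ⟨⟨hx, h1⟩, hn⟩
      exact ⟨⟨⟨hx, hn⟩, ge_of_eq h1⟩, le_of_eq h1⟩
  rw [e]
  have hW' : Convex ℝ ((Metric.ball z r ∩ oSimp σ) ∩ {x | x v = z v}) :=
    hW.inter (convex_hyperplane (f := fun x : V → ℝ => x v) ⟨by simp, by simp⟩ _)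
  obtain ⟨q3, hq3, a3, -, b3⟩ := pert σ z hz r hr u w hu hw huw
  obtain ⟨q4, hq4, -, a4, b4⟩ := pert σ z hz r hr w u hw hu huw.symm
  obtain ⟨q5, hq5, a5, -, b5⟩ := pert σ z hz r hr w t hw ht hwt
  refine punct_conn hW' (q := q3) (q' := q4) (r := q5) (LinearMap.proj u) ⟨hq3, b3 v hvu hvw⟩ a3
    ⟨hq4, b4 v hvw hvu⟩ a4 ⟨hq5, b5 v hvw hvt⟩ ?_ (b5 u huw hut)
  rintro rfl
  exact lt_irrefl _ a5

def Two (K : SComplex V) : Prop := ∀ u v w₁ w₂ w₃ : V, u ≠ v → w₁ ≠ u → w₁ ≠ v → w₂ ≠ u → w₂ ≠ v →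
  w₃ ≠ u → w₃ ≠ v → w₁ ≠ w₂ → w₁ ≠ w₃ → w₂ ≠ w₃ → {u, v, w₁} ∈ K.faces → {u, v, w₂} ∈ K.faces →
  {u, v, w₃} ∈ K.faces → False

/-- local coordinate around the midpoint of `uv`, unfolding triangle `uvw` -/
noncomputable def locF (u v w : V) (p : V → ℝ) : ℂ :=
  ((p u - p v : ℝ) : ℂ) + ((2 * p w + p u + p v - 1 : ℝ) : ℂ) * Complex.I

/-- a loop -/
noncomputable def loop (u v w w' : V) (r θ : ℝ) : V → ℝ :=
  Pi.single u (1/2 + r * Real.cos θ / 2 - r * |Real.sin θ| / 2) +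
  Pi.single v (1/2 - r * Real.cos θ / 2 - r * |Real.sin θ| / 2) +
  Pi.single w (r * max (Real.sin θ) 0) + Pi.single w' (r * max (- Real.sin θ) 0)

lemma loop_cont (u v w w' : V) (r : ℝ) : Continuous (loop u v w w' r) := by
  unfold loop
  refine ((Continuous.add ?_ ?_).add ?_).add ?_ <;>
  · refine (continuous_single _).comp ?_
    fun_prop

def LC (K : SComplex V) : Prop := ∀ v p q : V, p ≠ v → q ≠ v → {v, p} ∈ K.faces →
  {v, q} ∈ K.faces → Relation.ReflTransGen (fun a b => a ≠ v ∧ b ≠ v ∧ a ≠ b ∧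
    ({v, a, b} : Finset V) ∈ K.faces) p q

end SComplex


namespace SComplex
variable {V : Type} [DecidableEq V] [Fintype V]

lemma sum_single_real (u : V) (a : ℝ) : ∑ x, (Pi.single u a : V → ℝ) x = a := by
  simp

lemma lc_of_mob {K : SComplex V} (h : MobLike K.realization) : K.LC := by
  classical
  intro v p q hpv hqv hp hq
  by_contra hnr
  set R : V → V → Prop := fun a b => a ≠ v ∧ b ≠ v ∧ a ≠ b ∧ ({v, a, b} : Finset V) ∈ K.faces with hR
  set A : Finset V := univ.filter fun x => Relation.ReflTransGen R p x with hA
  have hvA : v ∉ A := by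
    intro hv
    rw [hA, mem_filter] at hv
    rcases Relation.ReflTransGen.cases_tail hv.2 with h | ⟨c, -, hc⟩
    · exact hpv h.symm
    · exact hc.2.1 rfl
  have hpA : p ∈ A := by simp [hA, Relation.ReflTransGen.refl]
  have hqA : q ∉ A := by simpa [hA] using hnr
  set B : Finset V := univ.filter fun x => x ≠ v ∧ x ∉ A with hB
  have hqB : q ∈ B := by simp [hB, hqv, hqA]
  have hvK : ({v} : Finset V) ∈ K.faces := K.down_closed _ hp _ (by simp) (by simp)
  have hz : (Pi.single v 1 : V → ℝ) ∈ K.realization := by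
    refine real_of_supp hvK (fun x hx => ?_) (fun x => ?_) (by simp)
    · simp at hx; simp [hx]
    · by_cases hx : x = v
      · subst hx; simp
      · simp [hx]
  have hU : {f : V → ℝ | 0 < f v} ∩ K.realization ∈ nhdsWithin (Pi.single v 1) K.realization := by
    refine Filter.inter_mem (mem_nhdsWithin_of_mem_nhds ?_) self_mem_nhdsWithin
    exact (isOpen_lt continuous_const (by fun_prop)).mem_nhds (by simp)
  obtain ⟨W, hW, hWU, hWc⟩ := h.lconn _ hz _ hU
  obtain ⟨r, hr, hrW⟩ := Metric.mem_nhdsWithin_iff.1 hW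
  have hpt : ∀ x, x ≠ v → {v, x} ∈ K.faces → ∃ f ∈ W \ {Pi.single v 1}, 0 < f x ∧ ∀ y, 0 ≤ f y := by
    intro x hx hxK
    set ε := min r 1 / 2 with hε
    have m0 : 0 < min r 1 := lt_min hr one_pos
    have m1 : min r 1 ≤ r := min_le_left _ _
    have m2 : min r 1 ≤ 1 := min_le_right _ _
    have e0 : 0 < ε := by linarith
    have hnn : ∀ y, 0 ≤ (Pi.single v (1 - ε) + Pi.single x ε : V → ℝ) y := by
      intro y
      by_cases h1 : y = v
      · subst h1; simp [hx.symm]; linarith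
      · by_cases h2 : y = x
        · subst h2; simp [h1]; linarith
        · simp [h1, h2]
    refine ⟨Pi.single v (1 - ε) + Pi.single x ε, ⟨hrW ⟨?_, ?_⟩, ?_⟩, by simp [hx, e0], hnn⟩
    · rw [Metric.mem_ball, dist_eq_norm, pi_norm_lt_iff hr]
      intro t
      by_cases h1 : t = v
      · subst h1; simp [hx.symm]; rw [abs_of_pos e0]; linarith
      · by_cases h2 : t = x
        · subst h2; simp [h1]; rw [abs_of_pos e0]; linarith
        · simp [h1, h2, hr]
    · refine real_of_supp hxK (fun y hy => ?_) hnn ?_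
      · simp at hy; simp [hy.1, hy.2]
      · simp [sum_add_distrib]
    · intro hc
      have := congrFun hc x
      simp [hx] at this
      linarith
  have key := hWc {f | 0 < ∑ x ∈ A, f x} {f | 0 < ∑ x ∈ B, f x}
    (isOpen_lt continuous_const (by fun_prop)) (isOpen_lt continuous_const (by fun_prop)) ?_ ?_ ?_
  · obtain ⟨f, ⟨hfW, -⟩, hf1, hf2⟩ := key
    obtain ⟨hfv, hfK⟩ := hWU hfW
    have hnn := (mem_real.1 hfK).2.1
    obtain ⟨a, haA, ha⟩ := exists_lt_of_sum_lt (s := A) (f := fun _ => (0:ℝ)) (g := f) (by simpa using hf1)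
    obtain ⟨b, hbB, hb⟩ := exists_lt_of_sum_lt (s := B) (f := fun _ => (0:ℝ)) (g := f) (by simpa using hf2)
    rw [hB, mem_filter] at hbB
    have hav : a ≠ v := by rintro rfl; exact hvA haA
    have hab : a ≠ b := by rintro rfl; exact hbB.2.2 haA
    have hface : ({v, a, b} : Finset V) ∈ K.faces := by
      refine face_of_pos hfK (by simp) ?_
      intro x hx
      simp only [mem_insert, mem_singleton] at hx
      rcases hx with rfl | rfl | rfl
      · exact ne_of_gt hfv
      · exact ha.ne'
      · exact hb.ne'
    apply hbB.2.2
    rw [hA, mem_filter] at haA ⊢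
    exact ⟨mem_univ _, haA.2.tail ⟨hav, hbB.2.1, hab, hface⟩⟩
  · rintro f ⟨hfW, hfz⟩
    obtain ⟨hfv, hfK⟩ := hWU hfW
    obtain ⟨-, hnn, hsum⟩ := mem_real.1 hfK
    by_contra hc
    simp only [Set.mem_union, not_or, Set.mem_ofPred_eq, not_lt] at hc
    have hA0 := (sum_eq_zero_iff_of_nonneg (fun x _ => hnn x)).1
      (le_antisymm hc.1 (sum_nonneg (fun x _ => hnn x)))
    have hB0 := (sum_eq_zero_iff_of_nonneg (fun x _ => hnn x)).1
      (le_antisymm hc.2 (sum_nonneg (fun x _ => hnn x)))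
    have h0 : ∀ x, x ≠ v → f x = 0 := by
      intro x hx
      by_cases hxA : x ∈ A
      · exact hA0 x hxA
      · exact hB0 x (by simp [hB, hx, hxA])
    apply hfz
    rw [Set.mem_singleton_iff]
    have h1 : f v = 1 := by
      rw [← hsum, Finset.sum_eq_single v (fun x _ hx => h0 x hx) (by simp)]
    ext x
    by_cases hx : x = v
    · subst hx; simp [h1]
    · simp [hx, h0 x hx]
  · obtain ⟨f, hf, hfp, hnn⟩ := hpt p hpv hp
    exact ⟨f, hf, sum_pos' (fun x _ => hnn x) ⟨p, hpA, hfp⟩⟩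
  · obtain ⟨f, hf, hfp, hnn⟩ := hpt q hqv hq
    exact ⟨f, hf, sum_pos' (fun x _ => hnn x) ⟨q, hqB, hfp⟩⟩


lemma loop_u {u v w w' : V} (huv : u ≠ v) (hwu : w ≠ u) (hwv : w ≠ v) (hwu' : w' ≠ u)
    (hwv' : w' ≠ v) (hww : w ≠ w') (r θ : ℝ) : loop u v w w' r θ u = 1/2 + r * Real.cos θ / 2 - r * |Real.sin θ| / 2 := by
  simp [loop, huv, hwu.symm, hwu'.symm]

lemma loop_v {u v w w' : V} (huv : u ≠ v) (hwu : w ≠ u) (hwv : w ≠ v) (hwu' : w' ≠ u)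
    (hwv' : w' ≠ v) (hww : w ≠ w') (r θ : ℝ) : loop u v w w' r θ v = 1/2 - r * Real.cos θ / 2 - r * |Real.sin θ| / 2 := by
  simp [loop, huv.symm, hwv.symm, hwv'.symm]

lemma loop_w {u v w w' : V} (huv : u ≠ v) (hwu : w ≠ u) (hwv : w ≠ v) (hwu' : w' ≠ u)
    (hwv' : w' ≠ v) (hww : w ≠ w') (r θ : ℝ) : loop u v w w' r θ w = r * max (Real.sin θ) 0 := by
  simp [loop, hwu, hwv, hww]

lemma loop_w' {u v w w' : V} (huv : u ≠ v) (hwu : w ≠ u) (hwv : w ≠ v) (hwu' : w' ≠ u)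
    (hwv' : w' ≠ v) (hww : w ≠ w') (r θ : ℝ) : loop u v w w' r θ w' = r * max (- Real.sin θ) 0 := by
  simp [loop, hwu', hwv', hww.symm]

lemma loop_x {u v w w' : V} (huv : u ≠ v) (hwu : w ≠ u) (hwv : w ≠ v) (hwu' : w' ≠ u)
    (hwv' : w' ≠ v) (hww : w ≠ w') (r θ : ℝ) {x : V} (h1 : x ≠ u) (h2 : x ≠ v) (h3 : x ≠ w) (h4 : x ≠ w') :
    loop u v w w' r θ x = 0 := by
  simp [loop, h1, h2, h3, h4]

lemma loop_real {u v w w' : V} (huv : u ≠ v) (hwu : w ≠ u) (hwv : w ≠ v) (hwu' : w' ≠ u)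
    (hwv' : w' ≠ v) (hww : w ≠ w') (r θ : ℝ) {K : SComplex V} (h1 : {u, v, w} ∈ K.faces) (h2 : {u, v, w'} ∈ K.faces)
    (hr : 0 < r) (hr2 : r ≤ 1/2) : loop u v w w' r θ ∈ K.realization := by
  have c1 := Real.abs_cos_le_one θ
  have s1 := Real.abs_sin_le_one θ
  have s0 := abs_nonneg (Real.sin θ)
  have c2 := abs_le.1 c1
  have hnn : ∀ x, 0 ≤ loop u v w w' r θ x := by
    intro x
    by_cases x1 : x = u
    · rw [x1, loop_u huv hwu hwv hwu' hwv' hww]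
      nlinarith
    by_cases x2 : x = v
    · rw [x2, loop_v huv hwu hwv hwu' hwv' hww]
      nlinarith
    by_cases x3 : x = w
    · rw [x3, loop_w huv hwu hwv hwu' hwv' hww]
      exact mul_nonneg hr.le (le_max_right _ _)
    by_cases x4 : x = w'
    · rw [x4, loop_w' huv hwu hwv hwu' hwv' hww]
      exact mul_nonneg hr.le (le_max_right _ _)
    rw [loop_x huv hwu hwv hwu' hwv' hww _ _ x1 x2 x3 x4]
  have hsum : ∑ x, loop u v w w' r θ x = 1 := by
    have e : max (Real.sin θ) 0 + max (- Real.sin θ) 0 = |Real.sin θ| := by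
      rcases le_total 0 (Real.sin θ) with h | h
      · rw [max_eq_left h, max_eq_right (by linarith), abs_of_nonneg h]; ring
      · rw [max_eq_right h, max_eq_left (by linarith), abs_of_nonpos h]; ring
    simp only [loop, Pi.add_apply, sum_add_distrib, sum_single_real]
    linear_combination r * e
  rcases le_total 0 (Real.sin θ) with h | h
  · refine real_of_supp h1 (fun x hx => ?_) hnn hsum
    simp only [mem_insert, mem_singleton, not_or] at hx
    by_cases x4 : x = w'
    · rw [x4, loop_w' huv hwu hwv hwu' hwv' hww, max_eq_right (by linarith), mul_zero]
    · exact loop_x huv hwu hwv hwu' hwv' hww _ _ hx.1 hx.2.1 hx.2.2 x4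
  · refine real_of_supp h2 (fun x hx => ?_) hnn hsum
    simp only [mem_insert, mem_singleton, not_or] at hx
    by_cases x4 : x = w
    · rw [x4, loop_w huv hwu hwv hwu' hwv' hww, max_eq_right (by linarith), mul_zero]
    · exact loop_x huv hwu hwv hwu' hwv' hww _ _ hx.1 hx.2.1 x4 hx.2.2

lemma loop_dist {u v w w' : V} (huv : u ≠ v) (hwu : w ≠ u) (hwv : w ≠ v) (hwu' : w' ≠ u)
    (hwv' : w' ≠ v) (hww : w ≠ w') (r θ : ℝ) (hr : 0 < r) :
    dist (loop u v w w' r θ) (Pi.single u (1/2) + Pi.single v (1/2)) ≤ r := by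
  have c1 := Real.abs_cos_le_one θ
  have s1 := Real.abs_sin_le_one θ
  have s0 := abs_nonneg (Real.sin θ)
  have c2 := abs_le.1 c1
  have s2 := abs_le.1 s1
  rw [dist_eq_norm, pi_norm_le_iff_of_nonneg hr.le]
  intro x
  rw [Pi.sub_apply, Real.norm_eq_abs, abs_le]
  by_cases x1 : x = u
  · rw [x1, loop_u huv hwu hwv hwu' hwv' hww]
    simp [huv]
    constructor <;> nlinarith
  by_cases x2 : x = v
  · rw [x2, loop_v huv hwu hwv hwu' hwv' hww]
    simp [huv.symm]
    constructor <;> nlinarith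
  by_cases x3 : x = w
  · rw [x3, loop_w huv hwu hwv hwu' hwv' hww]
    simp [hwu, hwv]
    have a1 : max (Real.sin θ) 0 ≤ 1 := max_le s2.2 zero_le_one
    have a2 : 0 ≤ max (Real.sin θ) 0 := le_max_right _ _
    constructor <;> nlinarith
  by_cases x4 : x = w'
  · rw [x4, loop_w' huv hwu hwv hwu' hwv' hww]
    simp [hwu', hwv']
    have a1 : max (-Real.sin θ) 0 ≤ 1 := max_le (by linarith) zero_le_one
    have a2 : 0 ≤ max (-Real.sin θ) 0 := le_max_right _ _
    constructor <;> nlinarith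
  rw [loop_x huv hwu hwv hwu' hwv' hww _ _ x1 x2 x3 x4]
  simp [x1, x2, hr.le]

lemma locF_loop {u v w w' : V} (huv : u ≠ v) (hwu : w ≠ u) (hwv : w ≠ v) (hwu' : w' ≠ u)
    (hwv' : w' ≠ v) (hww : w ≠ w') (r θ : ℝ) (hr : 0 < r) : locF u v w (loop u v w w' r θ) =
    Complex.exp (Real.log r + θ * Complex.I) := by
  have e : 2 * max (Real.sin θ) 0 - |Real.sin θ| = Real.sin θ := by
    rcases le_total 0 (Real.sin θ) with h | h
    · rw [max_eq_left h, abs_of_nonneg h]; ring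
    · rw [max_eq_right h, abs_of_nonpos h]; ring
  have e' : ((2 * max (Real.sin θ) 0 - |Real.sin θ| : ℝ) : ℂ) = (Real.sin θ : ℂ) := by rw [e]
  unfold locF
  rw [loop_u huv hwu hwv hwu' hwv' hww, loop_v huv hwu hwv hwu' hwv' hww,
    loop_w huv hwu hwv hwu' hwv' hww,
    Complex.exp_add, ← Complex.ofReal_exp, Real.exp_log hr, Complex.exp_mul_I,
    ← Complex.ofReal_cos, ← Complex.ofReal_sin, ← e']
  push_cast
  ring

lemma locF_loop' {u v w w' : V} (huv : u ≠ v) (hwu : w ≠ u) (hwv : w ≠ v) (hwu' : w' ≠ u)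
    (hwv' : w' ≠ v) (hww : w ≠ w') (r θ : ℝ) {x : V} (h1 : x ≠ u) (h2 : x ≠ v) (h3 : x ≠ w) (h4 : x ≠ w')
    (hr : 0 < r) (hθ : |θ| ≤ Real.pi) : locF u v x (loop u v w w' r θ) =
    Complex.exp (Real.log r + ((-|θ| : ℝ) : ℂ) * Complex.I) := by
  have e : |Real.sin θ| = Real.sin |θ| := by
    rw [Real.abs_sin_eq_sin_abs_of_abs_le_pi hθ]
  unfold locF
  rw [loop_u huv hwu hwv hwu' hwv' hww, loop_v huv hwu hwv hwu' hwv' hww,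
    loop_x huv hwu hwv hwu' hwv' hww _ _ h1 h2 h3 h4,
    Complex.exp_add, ← Complex.ofReal_exp, Real.exp_log hr, Complex.exp_mul_I,
    ← Complex.ofReal_cos, ← Complex.ofReal_sin, Real.cos_neg, Real.sin_neg, Real.cos_abs, e]
  push_cast
  ring

lemma loop_per {u v w w' : V} (huv : u ≠ v) (hwu : w ≠ u) (hwv : w ≠ v) (hwu' : w' ≠ u)
    (hwv' : w' ≠ v) (hww : w ≠ w') (r : ℝ) : loop u v w w' r Real.pi = loop u v w w' r (-Real.pi) := by
  simp [loop]



end SComplex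


namespace SComplex
variable {V : Type} [DecidableEq V] [Fintype V]

lemma two_of_mob {K : SComplex V} (h : MobLike K.realization) : K.Two := by
  have hdim := dim_of_mob h
  intro u v w₁ w₂ w₃ huv h1u h1v h2u h2v h3u h3v h12 h13 h23 hf1 hf2 hf3
  set z : V → ℝ := Pi.single u (1/2) + Pi.single v (1/2) with hz
  have zu : z u = 1/2 := by simp [hz, huv]
  have zv : z v = 1/2 := by simp [hz, huv.symm]
  have zx : ∀ x, x ≠ u → x ≠ v → z x = 0 := by intro x h1 h2; simp [hz, h1, h2]
  have hzK : z ∈ K.realization := by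
    refine real_of_supp hf1 (fun x hx => ?_) (fun x => ?_) ?_
    · simp only [mem_insert, mem_singleton, not_or] at hx
      exact zx x hx.1 hx.2.1
    · by_cases x1 : x = u
      · rw [x1, zu]; norm_num
      by_cases x2 : x = v
      · rw [x2, zv]; norm_num
      · rw [zx x x1 x2]
    · simp only [hz, Pi.add_apply, sum_add_distrib, sum_single_real]; norm_num
  have hU : {f : V → ℝ | 0 < f u ∧ 0 < f v} ∩ K.realization ∈ nhdsWithin z K.realization := by
    refine Filter.inter_mem (mem_nhdsWithin_of_mem_nhds ?_) self_mem_nhdsWithin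
    refine (IsOpen.and (isOpen_lt continuous_const (by fun_prop))
      (isOpen_lt continuous_const (by fun_prop))).mem_nhds ?_
    refine ⟨?_, ?_⟩ <;> simp only [zu, zv] <;> norm_num
  obtain ⟨W, hW, hWU, hWr⟩ := h.lrank _ hzK _ hU
  obtain ⟨R, hR, hRW⟩ := Metric.mem_nhdsWithin_iff.1 hW
  have hne : ∀ w, w ≠ u → w ≠ v → ∀ f ∈ W \ {z}, locF u v w f ≠ 0 := by
    rintro w hwu hwv f ⟨hfW, hfz⟩ h0
    obtain ⟨⟨fu, fv⟩, hfK⟩ := hWU hfW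
    obtain ⟨-, hnn, hsum⟩ := mem_real.1 hfK
    have e1 := congrArg Complex.re h0
    have e2 := congrArg Complex.im h0
    simp [locF] at e1 e2
    have hs3 : ∑ x ∈ ({u, v, w} : Finset V), f x = f u + (f v + f w) := by
      rw [sum_insert (by simp [huv, hwu.symm]), sum_insert (by simp [hwv.symm]), sum_singleton]
    have hw0 : f w = 0 := by
      by_contra hw0
      have hsub : ({u, v, w} : Finset V) ⊆ supp f := by
        intro x hx
        simp only [mem_insert, mem_singleton] at hx
        rcases hx with rfl | rfl | rfl
        · exact mem_supp.2 fu.ne'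
        · exact mem_supp.2 fv.ne'
        · exact mem_supp.2 hw0
      have hc3 : ({u, v, w} : Finset V).card = 3 := by
        rw [card_eq_three]; exact ⟨u, v, w, huv, hwu.symm, hwv.symm, rfl⟩
      have heq := eq_of_subset_of_card_le hsub (by rw [hc3]; exact hdim _ (mem_real.1 hfK).1)
      have : ∑ x ∈ ({u, v, w} : Finset V), f x = 1 := by
        rw [← hsum]
        refine sum_subset (subset_univ _) (fun x _ hx => ?_)
        rw [heq] at hx
        by_contra hc; exact hx (mem_supp.2 hc)
      apply hw0; linarith
    apply hfz
    rw [Set.mem_singleton_iff]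
    have hrest : ∀ x, x ≠ u → x ≠ v → f x = 0 := by
      intro x x1 x2
      have hs : ∑ y ∈ ({u, v, x} : Finset V), f y ≤ 1 := by
        rw [← hsum]
        exact sum_le_sum_of_subset_of_nonneg (subset_univ _) (fun y _ _ => hnn y)
      rw [sum_insert (by simp [huv, x1.symm]), sum_insert (by simp [x2.symm]), sum_singleton] at hs
      exact le_antisymm (by linarith) (hnn x)
    ext x
    by_cases x1 : x = u
    · rw [x1, zu]; linarith
    by_cases x2 : x = v
    · rw [x2, zv]; linarith
    · rw [zx x x1 x2, hrest x x1 x2]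
  have hc : ∀ w, Continuous (locF u v w) := by
    intro w; unfold locF; fun_prop
  obtain ⟨a, b, hab, k, hk, hke⟩ := hWr _ _ (hc w₁).continuousOn (hne w₁ h1u h1v)
    (hc w₂).continuousOn (hne w₂ h2u h2v)
  set r := min (R/2) (1/2) with hr
  have r0 : 0 < r := lt_min (by linarith) (by norm_num)
  have r1 : r ≤ R / 2 := min_le_left _ _
  have r2 : r ≤ 1/2 := min_le_right _ _
  have main : ∀ w w', w ≠ u → w ≠ v → w' ≠ u → w' ≠ v → w ≠ w' → {u, v, w} ∈ K.faces →
      {u, v, w'} ∈ K.faces → ∀ x, x ≠ u → x ≠ v → x ≠ w → x ≠ w' → ∀ a b : ℤ,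
      (∀ f ∈ W \ {z}, locF u v w f ^ a * locF u v x f ^ b = Complex.exp (k f)) → a = 0 := by
    intro w w' hwu hwv hwu' hwv' hww hK hK' x hxu hxv hxw hxw' a b hkab
    have hγ : ∀ θ, loop u v w w' r θ ∈ W \ {z} := by
      intro θ
      refine ⟨hRW ⟨?_, loop_real huv hwu hwv hwu' hwv' hww r θ hK hK' r0 r2⟩, ?_⟩
      · have := loop_dist huv hwu hwv hwu' hwv' hww r θ r0
        rw [Metric.mem_ball]; linarith
      · intro hcz
        rw [Set.mem_singleton_iff] at hcz
        have h1 := locF_loop huv hwu hwv hwu' hwv' hww r θ r0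
        rw [hcz] at h1
        have : locF u v w z = 0 := by
          unfold locF; rw [zu, zv, zx w hwu hwv]; norm_num
        rw [this] at h1
        exact Complex.exp_ne_zero _ h1.symm
    obtain ⟨n, hn⟩ := log_diff (isPreconnected_Icc (a := -Real.pi) (b := Real.pi))
      (fun θ => k (loop u v w w' r θ))
      (fun θ => (a : ℂ) * (Real.log r + θ * Complex.I)
        + b * (Real.log r + ((-|θ| : ℝ) : ℂ) * Complex.I))
      (hk.comp (loop_cont _ _ _ _ _).continuousOn (fun θ _ => hγ θ))
      (by
        have : Continuous (fun θ : ℝ => |θ|) := continuous_abs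
        fun_prop) (by
        intro θ hθ
        rw [← hkab _ (hγ θ), locF_loop huv hwu hwv hwu' hwv' hww r θ r0,
          locF_loop' huv hwu hwv hwu' hwv' hww r θ hxu hxv hxw hxw' r0 (abs_le.2 hθ), zpow_exp])
    have hpi := Real.pi_pos
    have e1 := hn Real.pi ⟨by linarith, le_rfl⟩
    have e2 := hn (-Real.pi) ⟨le_rfl, by linarith⟩
    simp only [abs_neg] at e1 e2
    rw [← loop_per huv hwu hwv hwu' hwv' hww] at e2
    have : (a:ℂ) * (2 * Real.pi * Complex.I) = 0 := by
      push_cast at e1 e2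
      linear_combination e2 - e1
    simp [Real.pi_ne_zero] at this
    exact this
  have ha := main w₁ w₃ h1u h1v h3u h3v h13 hf1 hf3 w₂ h2u h2v h12.symm h23 a b hke
  have hb := main w₂ w₃ h2u h2v h3u h3v h23 hf2 hf3 w₁ h1u h1v h12 h13 b a (by
    intro f hf; rw [mul_comm]; exact hke f hf)
  rcases hab with h | h
  · exact h ha
  · exact h hb

end SComplex


section sepTop
variable {E : Type} [TopologicalSpace E]

lemma sep_retract {A B I : Set E} (hA : IsClosed A) (hB : IsClosed B) (hI : A ∩ B = I) (r : E → E)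
    (hr : Continuous r) (hrm : ∀ p ∈ A ∪ B, r p ∈ I) (hrI : ∀ p ∈ I, r p = p) :
    ∃ ρ : E → E, ContinuousOn ρ (A ∪ B) ∧ Set.MapsTo ρ (A ∪ B) A ∧ (∀ p ∈ A, ρ p = p) ∧
      ∀ p ∈ B, ρ p = r p := by
  obtain ⟨ρ, h1, h2, h3⟩ := glue hA hB (Set.Subset.refl (A ∪ B)) id r continuousOn_id
    hr.continuousOn (fun p _ ha hb => (hrI p (hI ▸ ⟨ha, hb⟩)).symm)
  refine ⟨ρ, h1, ?_, fun p hp => h2 p (Or.inl hp) hp, fun p hp => h3 p (Or.inr hp) hp⟩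
  intro p hp
  rcases hp with h | h
  · rw [h2 p (Or.inl h) h]; exact h
  · rw [h3 p (Or.inr h) h]
    have := hrm p (Or.inr h)
    rw [← hI] at this; exact this.1

lemma sep_one {A B I : Set E} (hA : IsClosed A) (hB : IsClosed B) (hI : A ∩ B = I) (r : E → E)
    (hr : Continuous r) (hrm : ∀ p ∈ A ∪ B, r p ∈ I) (hrI : ∀ p ∈ I, r p = p)
    (hIl : LogOn I) (hS : IsPreconnected (A ∪ B)) (hR : RankOne (A ∪ B)) :
    LogOn A ∨ LogOn B := by
  by_contra hc
  push Not at hc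
  obtain ⟨ρ, c1, m1, i1, r1⟩ := sep_retract hA hB hI r hr hrm hrI
  obtain ⟨ρ', c2, m2, i2, r2⟩ := sep_retract hB hA (by rw [Set.inter_comm]; exact hI) r hr
    (by rw [Set.union_comm]; exact hrm) hrI
  rw [Set.union_comm] at c2 m2
  have hcA : IsPreconnected A := by
    have := hS.image ρ c1
    have e : ρ '' (A ∪ B) = A := Set.Subset.antisymm m1.image_subset
      (fun p hp => ⟨p, Or.inl hp, i1 p hp⟩)
    rwa [e] at this
  have hcB : IsPreconnected B := by
    have := hS.image ρ' c2
    have e : ρ' '' (A ∪ B) = B := Set.Subset.antisymm m2.image_subset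
      (fun p hp => ⟨p, Or.inr hp, i2 p hp⟩)
    rwa [e] at this
  have hAI : I ⊆ A := by rw [← hI]; exact Set.inter_subset_left
  have hBI : I ⊆ B := by rw [← hI]; exact Set.inter_subset_right
  obtain ⟨hcA', hcB'⟩ := hc
  unfold LogOn at hcA' hcB'
  push Not at hcA' hcB'
  obtain ⟨f, hf, hf0, hfn⟩ := hcA'
  obtain ⟨g, hg, hg0, hgn⟩ := hcB'
  obtain ⟨a, b, hab, h, hh, he⟩ := hR (f ∘ ρ) (g ∘ ρ') (hf.comp c1 m1) (fun p hp => hf0 _ (m1 hp))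
    (hg.comp c2 m2) (fun p hp => hg0 _ (m2 hp))
  have key : ∀ (A' : Set E), A' ⊆ A ∪ B → IsPreconnected A' → ∀ (f g : E → ℂ) (a b : ℤ),
      ContinuousOn f A' → ContinuousOn g I → (∀ p ∈ I, g p ≠ 0) → a ≠ 0 →
      (∀ p ∈ A', f p ^ a * g (r p) ^ b = Complex.exp (h p)) →
      ∃ k : E → ℂ, ContinuousOn k A' ∧ ∀ p ∈ A', f p = Complex.exp (k p) := by
    intro A' hA' hc' f g a b hf hg hg0 ha hfg
    obtain ⟨k, hk, hke⟩ := hIl g hg hg0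
    refine log_of_zpow hc' f (fun p => h p - b * k (r p)) hf
      ((hh.mono hA').sub (continuousOn_const.mul
        (hk.comp hr.continuousOn (fun p hp => hrm p (hA' hp))))) a ha ?_
    intro p hp
    rw [Complex.exp_sub, Complex.exp_int_mul, ← hfg p hp, ← hke _ (hrm p (hA' hp))]
    rw [mul_div_assoc, div_self, mul_one]
    exact zpow_ne_zero _ (hg0 _ (hrm p (hA' hp)))
  rcases hab with ha | hb
  · obtain ⟨k, hk, hke⟩ := key A Set.subset_union_left hcA f g a b hf (hg.mono hBI)
      (fun p hp => hg0 p (hBI hp)) ha (fun p hp => by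
        rw [← he p (Or.inl hp)]; simp only [Function.comp]; rw [i1 p hp, r2 p hp])
    obtain ⟨p, hp, hpe⟩ := hfn k hk
    exact hpe (hke p hp)
  · obtain ⟨k, hk, hke⟩ := key B Set.subset_union_right hcB g f b a hg (hf.mono hAI)
      (fun p hp => hf0 p (hAI hp)) hb (fun p hp => by
        rw [← he p (Or.inr hp)]; simp only [Function.comp]; rw [r1 p hp, i2 p hp, mul_comm])
    obtain ⟨p, hp, hpe⟩ := hgn k hk
    exact hpe (hke p hp)

end sepTop

namespace SComplex
variable {V : Type} [DecidableEq V] [Fintype V]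

/-- closed simplex -/
def cSimp (σ : Finset V) : Set (V → ℝ) :=
  {p | (∀ v, v ∉ σ → p v = 0) ∧ (∀ v, 0 ≤ p v) ∧ ∑ v, p v = 1}

lemma cSimp_closed (σ : Finset V) : IsClosed (cSimp σ) := by
  have : cSimp σ = (⋂ v, {p | v ∉ σ → p v = 0}) ∩ ((⋂ v, {p | 0 ≤ p v}) ∩ {p | ∑ v, p v = 1}) := by
    ext p; simp [cSimp]
  rw [this]
  refine (isClosed_iInter fun v => ?_).inter ((isClosed_iInter fun v => ?_).inter ?_)
  · by_cases hv : v ∈ σ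
    · simp [hv]
    · simp only [hv, not_false_eq_true, forall_const]
      exact isClosed_eq (by fun_prop) continuous_const
  · exact isClosed_le continuous_const (by fun_prop)
  · exact isClosed_eq (by fun_prop) continuous_const

lemma cSimp_convex (σ : Finset V) : Convex ℝ (cSimp σ) := by
  rintro p ⟨h1, h2, h3⟩ q ⟨k1, k2, k3⟩ a b ha hb hab
  refine ⟨fun v hv => ?_, fun v => ?_, ?_⟩
  · simp [h1 v hv, k1 v hv]
  · simp only [Pi.add_apply, Pi.smul_apply, smul_eq_mul]
    have := mul_nonneg ha (h2 v)
    have := mul_nonneg hb (k2 v)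
    linarith
  · simp only [Pi.add_apply, Pi.smul_apply, smul_eq_mul, sum_add_distrib, ← mul_sum, h3, k3]
    linarith

lemma real_eq (K : SComplex V) : K.realization = ⋃ σ ∈ K.faces, cSimp σ := by
  ext p; simp only [realization, Set.mem_iUnion, exists_prop]; rfl

lemma real_closed (K : SComplex V) : IsClosed K.realization := by
  rw [real_eq]
  exact isClosed_biUnion_finset (fun σ _ => cSimp_closed σ)

lemma cSimp_sub {K : SComplex V} {σ : Finset V} (h : σ ∈ K.faces) : cSimp σ ⊆ K.realization :=
  fun _ hp => ⟨σ, h, hp⟩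

/-- every vertex lies on a boundary edge -/
def NIV (K : SComplex V) : Prop := ∀ v, {v} ∈ K.faces → ∃ d t, d ≠ v ∧ t ≠ v ∧ t ≠ d ∧
  {v, d, t} ∈ K.faces ∧ ∀ t', t' ≠ v → t' ≠ d → {v, d, t'} ∈ K.faces → t' = t

/-- working form of a separation along the edge `xy` -/
structure Sep (M M₁ M₂ : SComplex V) (x y : V) : Prop where
  xy : x ≠ y
  sub1 : ∀ σ ∈ M₁.faces, σ ∈ M.faces
  sub2 : ∀ σ ∈ M₂.faces, σ ∈ M.faces
  cover : ∀ σ ∈ M.faces, σ ∈ M₁.faces ∨ σ ∈ M₂.faces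
  inter : ∀ σ ∈ M₁.faces, σ ∈ M₂.faces → σ ⊆ {x, y}
  e1 : {x, y} ∈ M₁.faces
  e2 : {x, y} ∈ M₂.faces
  t1 : ∃ τ ∈ M₁.faces, τ.card = 3
  t2 : ∃ τ ∈ M₂.faces, τ.card = 3

lemma Sep.symm {M M₁ M₂ : SComplex V} {x y : V} (h : Sep M M₁ M₂ x y) : Sep M M₂ M₁ x y :=
  ⟨h.xy, h.sub2, h.sub1, fun σ hσ => (h.cover σ hσ).symm, fun σ h1 h2 => h.inter σ h2 h1,
    h.e2, h.e1, h.t2, h.t1⟩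

lemma Sep.swap {M M₁ M₂ : SComplex V} {x y : V} (h : Sep M M₁ M₂ x y) : Sep M M₁ M₂ y x := by
  have e : ({y, x} : Finset V) = {x, y} := pair_comm _ _
  exact ⟨h.xy.symm, h.sub1, h.sub2, h.cover, e ▸ h.inter, e ▸ h.e1, e ▸ h.e2, h.t1, h.t2⟩

lemma Sep.union {M M₁ M₂ : SComplex V} {x y : V} (h : Sep M M₁ M₂ x y) :
    M₁.realization ∪ M₂.realization = M.realization := by
  ext p
  simp only [Set.mem_union, mem_real]
  constructor
  · rintro (⟨h1, h2⟩ | ⟨h1, h2⟩)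
    · exact ⟨h.sub1 _ h1, h2⟩
    · exact ⟨h.sub2 _ h1, h2⟩
  · rintro ⟨h1, h2⟩
    rcases h.cover _ h1 with h3 | h3
    · exact Or.inl ⟨h3, h2⟩
    · exact Or.inr ⟨h3, h2⟩

lemma Sep.real_inter {M M₁ M₂ : SComplex V} {x y : V} (h : Sep M M₁ M₂ x y) :
    M₁.realization ∩ M₂.realization = cSimp {x, y} := by
  ext p
  constructor
  · rintro ⟨h1, h2⟩
    rw [mem_real] at h1 h2
    refine ⟨fun v hv => ?_, h1.2⟩
    by_contra hc
    exact hv (h.inter _ h1.1 h2.1 (mem_supp.2 hc))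
  · intro hp
    exact ⟨cSimp_sub h.e1 hp, cSimp_sub h.e2 hp⟩

/-- retraction onto the edge `xy` -/
noncomputable def eret (x y : V) (p : V → ℝ) : V → ℝ :=
  Pi.single x ((1 + p x - p y) / 2) + Pi.single y ((1 - p x + p y) / 2)

lemma eret_cont (x y : V) : Continuous (eret x y) := by
  unfold eret
  refine Continuous.add ?_ ?_ <;>
  · refine (continuous_single _).comp ?_
    fun_prop

lemma le_one_of_real {p : V → ℝ} (h0 : ∀ v, 0 ≤ p v) (h1 : ∑ v, p v = 1) (x : V) : p x ≤ 1 := by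
  rw [← h1]
  exact single_le_sum (fun v _ => h0 v) (mem_univ x)

lemma eret_mem {x y : V} (hxy : x ≠ y) {p : V → ℝ} (h0 : ∀ v, 0 ≤ p v) (h1 : ∑ v, p v = 1) :
    eret x y p ∈ cSimp {x, y} := by
  have a1 := le_one_of_real h0 h1 x
  have a2 := le_one_of_real h0 h1 y
  have b1 := h0 x
  have b2 := h0 y
  refine ⟨fun v hv => ?_, fun v => ?_, ?_⟩
  · simp at hv; simp [eret, hv.1, hv.2]
  · by_cases hx : v = x
    · subst hx; simp [eret, hxy]; linarith
    · by_cases hy : v = y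
      · subst hy; simp [eret, hx]; linarith
      · simp [eret, hx, hy]
  · simp only [eret, Pi.add_apply, sum_add_distrib, sum_single_real]; ring

lemma eret_id {x y : V} (hxy : x ≠ y) {p : V → ℝ} (hp : p ∈ cSimp {x, y}) : eret x y p = p := by
  obtain ⟨h1, h2, h3⟩ := hp
  have : p x + p y = 1 := by
    rw [← h3, ← sum_pair hxy]
    exact sum_subset (subset_univ _) (fun v _ hv => h1 v hv)
  ext v
  by_cases hx : v = x
  · subst hx; simp [eret, hxy]; linarith
  · by_cases hy : v = y
    · subst hy; simp [eret, hx]; linarith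
    · simp [eret, hx, hy, h1 v (by simp [hx, hy])]

lemma Sep.eret_maps {M M₁ M₂ : SComplex V} {x y : V} (h : Sep M M₁ M₂ x y) :
    ∀ p ∈ M₁.realization ∪ M₂.realization, eret x y p ∈ cSimp {x, y} := by
  intro p hp
  rw [h.union] at hp
  exact eret_mem h.xy (mem_real.1 hp).2.1 (mem_real.1 hp).2.2

lemma Sep.conn1 {M M₁ M₂ : SComplex V} {x y : V} (h : Sep M M₁ M₂ x y)
    (hM : MobLike M.realization) : IsPreconnected M₁.realization := by
  obtain ⟨ρ, c1, m1, i1, -⟩ := sep_retract M₁.real_closed M₂.real_closed h.real_inter (eret x y)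
    (eret_cont x y) h.eret_maps (fun p hp => eret_id h.xy hp)
  have hS := hM.conn
  rw [← h.union] at hS
  have := hS.image ρ c1
  have e : ρ '' (M₁.realization ∪ M₂.realization) = M₁.realization :=
    Set.Subset.antisymm m1.image_subset (fun p hp => ⟨p, Or.inl hp, i1 p hp⟩)
  rwa [e] at this

lemma Sep.exactly {M M₁ M₂ : SComplex V} {x y : V} (h : Sep M M₁ M₂ x y)
    (hM : MobLike M.realization) : LogOn M₁.realization ∨ LogOn M₂.realization := by
  refine sep_one M₁.real_closed M₂.real_closed h.real_inter (eret x y)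
    (eret_cont x y) h.eret_maps (fun p hp => eret_id h.xy hp) (cSimp_convex _).logOn ?_ ?_
  · rw [h.union]; exact hM.conn
  · rw [h.union]; exact hM.rank

end SComplex


namespace SComplex
variable {V : Type} [DecidableEq V] [Fintype V]

/-- `abc` is a genuine triangle of `K` -/
def Tr (K : SComplex V) (a b c : V) : Prop :=
  a ≠ b ∧ a ≠ c ∧ b ≠ c ∧ ({a, b, c} : Finset V) ∈ K.faces

lemma Tr.rot {K : SComplex V} {a b c : V} (h : K.Tr a b c) : K.Tr b c a := by
  refine ⟨h.2.2.1, h.1.symm, h.2.1.symm, ?_⟩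
  have : ({b, c, a} : Finset V) = {a, b, c} := by ext v; simp; tauto
  rw [this]; exact h.2.2.2

lemma Tr.swap {K : SComplex V} {a b c : V} (h : K.Tr a b c) : K.Tr b a c := by
  refine ⟨h.1.symm, h.2.2.1, h.2.1, ?_⟩
  have : ({b, a, c} : Finset V) = {a, b, c} := by ext v; simp; tauto
  rw [this]; exact h.2.2.2

lemma Tr.flip {K : SComplex V} {a b c : V} (h : K.Tr a b c) : K.Tr a c b := h.swap.rot

lemma sub_pair {K : SComplex V} {σ : Finset V} (hσ : σ ∈ K.faces) {a b : V} (ha : a ∈ σ)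
    (hb : b ∈ σ) : ({a, b} : Finset V) ∈ K.faces :=
  K.down_closed σ hσ _ (by intro v; simp; rintro (rfl | rfl) <;> assumption) (by simp)

lemma sub_single {K : SComplex V} {σ : Finset V} (hσ : σ ∈ K.faces) {a : V} (ha : a ∈ σ) :
    ({a} : Finset V) ∈ K.faces :=
  K.down_closed σ hσ _ (by intro v; simp; rintro rfl; assumption) (by simp)

lemma sub_tri {K : SComplex V} {σ : Finset V} (hσ : σ ∈ K.faces) {a b c : V} (ha : a ∈ σ)
    (hb : b ∈ σ) (hc : c ∈ σ) : ({a, b, c} : Finset V) ∈ K.faces :=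
  K.down_closed σ hσ _ (by intro v; simp; rintro (rfl | rfl | rfl) <;> assumption) (by simp)

lemma Tr.e12 {K : SComplex V} {a b c : V} (h : K.Tr a b c) : ({a, b} : Finset V) ∈ K.faces :=
  sub_pair h.2.2.2 (by simp) (by simp)

lemma Tr.v1 {K : SComplex V} {a b c : V} (h : K.Tr a b c) : ({a} : Finset V) ∈ K.faces :=
  sub_single h.2.2.2 (by simp)

lemma Tr.card {K : SComplex V} {a b c : V} (h : K.Tr a b c) : ({a, b, c} : Finset V).card = 3 :=
  card_eq_three.2 ⟨a, b, c, h.1, h.2.1, h.2.2.1, rfl⟩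

lemma tr_of_mem {K : SComplex V} {t : Finset V} (ht : t ∈ K.faces) (h3 : t.card = 3) {v : V}
    (hv : v ∈ t) : ∃ a b, t = {v, a, b} ∧ K.Tr v a b := by
  have : (t.erase v).card = 2 := by rw [card_erase_of_mem hv, h3]
  obtain ⟨a, b, hab, he⟩ := card_eq_two.1 this
  have ht' : t = {v, a, b} := by rw [← insert_erase hv, he]
  have ha : a ∈ t.erase v := by rw [he]; simp
  have hb : b ∈ t.erase v := by rw [he]; simp
  refine ⟨a, b, ht', (ne_of_mem_erase ha).symm, (ne_of_mem_erase hb).symm, hab, ht' ▸ ht⟩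

lemma tr_of_mem2 {K : SComplex V} {t : Finset V} (ht : t ∈ K.faces) (h3 : t.card = 3) {v w : V}
    (hv : v ∈ t) (hw : w ∈ t) (hvw : v ≠ w) : ∃ a, t = {v, w, a} ∧ K.Tr v w a := by
  obtain ⟨a, b, rfl, h⟩ := tr_of_mem ht h3 hv
  simp at hw
  rcases hw with rfl | rfl | rfl
  · exact absurd rfl hvw
  · exact ⟨b, rfl, h⟩
  · exact ⟨a, by ext v; simp; tauto, h.flip⟩

lemma Two.eq {K : SComplex V} (h : K.Two) {u v a b c : V} (ha : K.Tr u v a) (hb : K.Tr u v b)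
    (hc : K.Tr u v c) (hab : a ≠ b) : c = a ∨ c = b := by
  by_contra hcon
  push Not at hcon
  exact h u v a b c ha.1 ha.2.1.symm ha.2.2.1.symm hb.2.1.symm hb.2.2.1.symm hc.2.1.symm
    hc.2.2.1.symm hab hcon.1.symm hcon.2.symm ha.2.2.2 hb.2.2.2 hc.2.2.2

lemma LC.tr {K : SComplex V} (h : K.LC) {v p q : V} (hp : p ≠ v) (hq : q ≠ v)
    (h1 : {v, p} ∈ K.faces) (h2 : {v, q} ∈ K.faces) : Relation.ReflTransGen (K.Tr v) p q :=
  (h v p q hp hq h1 h2).lift id fun _ _ h => ⟨h.1.symm, h.2.1.symm, h.2.2.1, h.2.2.2⟩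

lemma lc_of_tr {K : SComplex V} (h : ∀ v p q, p ≠ v → q ≠ v → {v, p} ∈ K.faces → {v, q} ∈ K.faces →
    Relation.ReflTransGen (K.Tr v) p q) : K.LC := fun v p q h1 h2 h3 h4 =>
  (h v p q h1 h2 h3 h4).lift id fun _ _ h => ⟨h.1.symm, h.2.1.symm, h.2.2.1, h.2.2.2⟩

lemma NIV.tr {K : SComplex V} (h : K.NIV) {v : V} (hv : {v} ∈ K.faces) :
    ∃ d t, K.Tr v d t ∧ ∀ t', K.Tr v d t' → t' = t := by
  obtain ⟨d, t, h1, h2, h3, h4, h5⟩ := h v hv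
  exact ⟨d, t, ⟨h1.symm, h2.symm, h3.symm, h4⟩,
    fun t' h => h5 t' h.2.1.symm h.2.2.1.symm h.2.2.2⟩

lemma niv_of_tr {K : SComplex V} (h : ∀ v, {v} ∈ K.faces →
    ∃ d t, K.Tr v d t ∧ ∀ t', K.Tr v d t' → t' = t) : K.NIV := by
  intro v hv
  obtain ⟨d, t, h1, h2⟩ := h v hv
  exact ⟨d, t, h1.1.symm, h1.2.1.symm, h1.2.2.1.symm, h1.2.2.2,
    fun t' h3 h4 h5 => h2 t' ⟨h1.1, h3.symm, h4.symm, h5⟩⟩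

/-- vertex point -/
lemma vertex_mem {K : SComplex V} {v : V} (hv : {v} ∈ K.faces) :
    (Pi.single v 1 : V → ℝ) ∈ K.realization := by
  refine real_of_supp hv ?_ ?_ ?_
  · intro w hw; simp at hw; simp [hw]
  · intro w
    by_cases h : w = v
    · subst h; simp
    · simp [h]
  · simp

lemma conn_split {K : SComplex V} (hK : IsPreconnected K.realization) (A : Finset V)
    (hA : ∀ σ ∈ K.faces, ∀ v ∈ σ, v ∈ A → σ ⊆ A) {v w : V} (hv : {v} ∈ K.faces)
    (hw : {w} ∈ K.faces) (hvA : v ∈ A) : w ∈ A := by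
  by_contra hwA
  have hc : Continuous (fun p : V → ℝ => ∑ u ∈ A, p u) := by fun_prop
  have key := hK.intermediate_value (vertex_mem hw) (vertex_mem hv) hc.continuousOn
  have h0 : ∑ u ∈ A, (Pi.single w 1 : V → ℝ) u = 0 := by
    refine sum_eq_zero fun u hu => ?_
    have : u ≠ w := fun h => hwA (h ▸ hu)
    simp [this]
  have h1 : ∑ u ∈ A, (Pi.single v 1 : V → ℝ) u = 1 := by
    simp [hvA]
  obtain ⟨p, hp, he⟩ := key (show (1/2 : ℝ) ∈ _ by rw [h0, h1]; norm_num)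
  simp only at he
  rw [mem_real] at hp
  by_cases hh : ∃ u ∈ supp p, u ∈ A
  · obtain ⟨u, hu, huA⟩ := hh
    have hs := hA _ hp.1 u hu huA
    have : ∑ u ∈ A, p u = ∑ u, p u := sum_subset (subset_univ _) fun z _ hz => by
      by_contra hz'
      exact hz (hs (mem_supp.2 hz'))
    rw [this, hp.2.2] at he; norm_num at he
  · push Not at hh
    have : ∑ u ∈ A, p u = 0 := sum_eq_zero fun z hz => by
      by_contra hz'
      exact hh z (mem_supp.2 hz') hz
    rw [this] at he; norm_num at he

structure Good (K : SComplex V) : Prop where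
  dim : K.Dim
  two : K.Two
  lc : K.LC
  niv : K.NIV
  conn : IsPreconnected K.realization

/-- triangles sharing an edge -/
def TR (K : SComplex V) (s t : Finset V) : Prop :=
  s ∈ K.faces ∧ t ∈ K.faces ∧ s.card = 3 ∧ t.card = 3 ∧ (s ∩ t).card = 2

lemma TR.symm {K : SComplex V} {s t : Finset V} (h : K.TR s t) : K.TR t s :=
  ⟨h.2.1, h.1, h.2.2.2.1, h.2.2.1, by rw [inter_comm]; exact h.2.2.2.2⟩

lemma Tr.adj {K : SComplex V} {a b c d : V} (h : K.Tr a b c) (h' : K.Tr a b d) (hcd : c ≠ d) :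
    K.TR {a, b, c} {a, b, d} := by
  refine ⟨h.2.2.2, h'.2.2.2, h.card, h'.card, ?_⟩
  have : ({a, b, c} : Finset V) ∩ {a, b, d} = {a, b} := by
    have := h.1; have := h.2.1; have := h.2.2.1; have := h'.2.1; have := h'.2.2.1
    ext v; simp only [mem_inter, mem_insert, mem_singleton]; grind
  rw [this]; exact card_pair h.1

lemma TR.form {K : SComplex V} {s t : Finset V} (h : K.TR s t) :
    ∃ a b c d, s = {a, b, c} ∧ t = {a, b, d} ∧ s ∩ t = {a, b} ∧ c ≠ d ∧ K.Tr a b c ∧ K.Tr a b d := by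
  obtain ⟨h1, h2, h3, h4, h5⟩ := h
  obtain ⟨a, b, hab, he⟩ := card_eq_two.1 h5
  have ha : a ∈ s ∩ t := by rw [he]; simp
  have hb : b ∈ s ∩ t := by rw [he]; simp
  rw [mem_inter] at ha hb
  obtain ⟨c, rfl, hc⟩ := tr_of_mem2 h1 h3 ha.1 hb.1 hab
  obtain ⟨d, rfl, hd⟩ := tr_of_mem2 h2 h4 ha.2 hb.2 hab
  refine ⟨a, b, c, d, rfl, rfl, he, ?_, hc, hd⟩
  rintro rfl
  have := hc.card
  simp at he
  rw [he, card_pair hab] at this; omega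

lemma Good.edge {K : SComplex V} (h : K.Good) {a b : V} (hab : a ≠ b)
    (he : {a, b} ∈ K.faces) : ∃ c, K.Tr a b c := by
  obtain ⟨d, t, h1, -⟩ := h.niv.tr (sub_single he (by simp : a ∈ _))
  rcases (h.lc.tr hab.symm h1.1.symm he h1.e12).cases_head with rfl | ⟨c, hc, -⟩
  · exact ⟨t, h1⟩
  · exact ⟨c, hc⟩

lemma Good.pure {K : SComplex V} (h : K.Good) {σ : Finset V} (hσ : σ ∈ K.faces)
    (hne : σ.Nonempty) : ∃ t ∈ K.faces, t.card = 3 ∧ σ ⊆ t := by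
  have h1 := h.dim σ hσ
  have h2 := hne.card_pos
  obtain h3 | h3 | h3 : σ.card = 1 ∨ σ.card = 2 ∨ σ.card = 3 := by omega
  · obtain ⟨v, rfl⟩ := card_eq_one.1 h3
    obtain ⟨d, t, h4, -⟩ := h.niv.tr hσ
    exact ⟨_, h4.2.2.2, h4.card, by simp⟩
  · obtain ⟨a, b, hab, rfl⟩ := card_eq_two.1 h3
    obtain ⟨c, hc⟩ := h.edge hab hσ
    refine ⟨_, hc.2.2.2, hc.card, ?_⟩
    intro v; simp; tauto
  · exact ⟨σ, hσ, h3, Subset.rfl⟩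

lemma Tr.rtg {K : SComplex V} {a b c d : V} (h : K.Tr a b c) (h' : K.Tr a b d) :
    Relation.ReflTransGen K.TR {a, b, c} {a, b, d} := by
  by_cases hcd : c = d
  · subst hcd; exact .refl
  · exact .single (h.adj h' hcd)

lemma Good.star {K : SComplex V} (h : K.Good) {s t : Finset V} (hs : s ∈ K.faces) (ht : t ∈ K.faces)
    (hs3 : s.card = 3) (ht3 : t.card = 3) {v : V} (hvs : v ∈ s) (hvt : v ∈ t) :
    Relation.ReflTransGen K.TR s t := by
  obtain ⟨p, q, rfl, h1⟩ := tr_of_mem hs hs3 hvs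
  obtain ⟨p', q', rfl, h2⟩ := tr_of_mem ht ht3 hvt
  have hch := h.lc.tr h1.1.symm h2.1.symm h1.e12 h2.e12
  have : ∀ a, Relation.ReflTransGen (K.Tr v) p a → ∀ r, K.Tr v a r →
      Relation.ReflTransGen K.TR {v, p, q} {v, a, r} := by
    intro a ha
    induction ha with
    | refl => intro r hr; exact h1.rtg hr
    | @tail a b hpa hab ih =>
      intro r hr
      refine (ih b hab).trans ?_
      have e : ({v, a, b} : Finset V) = {v, b, a} := by ext; simp; tauto
      rw [e]
      exact hab.flip.rtg hr
  exact this _ hch _ h2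

lemma Good.sc {K : SComplex V} (h : K.Good) {s t : Finset V} (hs : s ∈ K.faces) (ht : t ∈ K.faces)
    (hs3 : s.card = 3) (ht3 : t.card = 3) : Relation.ReflTransGen K.TR s t := by
  classical
  let A : Finset V := univ.filter fun v => ∃ t ∈ K.faces, t.card = 3 ∧ v ∈ t ∧
    Relation.ReflTransGen K.TR s t
  have hA : ∀ σ ∈ K.faces, ∀ v ∈ σ, v ∈ A → σ ⊆ A := by
    intro σ hσ v hv hvA w hw
    obtain ⟨t, ht, ht3, hvt, hst⟩ := (mem_filter.1 hvA).2
    obtain ⟨t', ht', ht3', hs'⟩ := h.pure hσ ⟨v, hv⟩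
    exact mem_filter.2 ⟨mem_univ _, t', ht', ht3', hs' hw, hst.trans (h.star ht ht' ht3 ht3' hvt (hs' hv))⟩
  obtain ⟨v, hv⟩ : s.Nonempty := card_pos.1 (by omega)
  obtain ⟨w, hw⟩ : t.Nonempty := card_pos.1 (by omega)
  have := conn_split h.conn A hA (sub_single hs hv) (sub_single ht hw)
    (mem_filter.2 ⟨mem_univ _, s, hs, hs3, hv, .refl⟩)
  obtain ⟨t', ht', ht3', hvt, hst⟩ := (mem_filter.1 this).2
  exact hst.trans (h.star ht' ht ht3' ht3 hvt hw)

lemma Sep.star1 {M M₁ M₂ : SComplex V} {x y : V} (h : Sep M M₁ M₂ x y) {v : V}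
    (hv : v ≠ x) (hv' : v ≠ y) (h1 : {v} ∈ M₁.faces) {σ : Finset V} (hσ : σ ∈ M.faces)
    (hvσ : v ∈ σ) : σ ∈ M₁.faces := by
  rcases h.cover σ hσ with h2 | h2
  · exact h2
  · have := h.inter _ h1 (sub_single h2 hvσ)
    simp [hv, hv'] at this

lemma Sep.lc_x {M M₁ M₂ : SComplex V} {x y : V} (h : Sep M M₁ M₂ x y) (hM : M.LC) {p : V}
    (hp : p ≠ x) (hxp : {x, p} ∈ M₁.faces) : Relation.ReflTransGen (M₁.Tr x) p y := by
  have hch := hM.tr hp h.xy.symm (h.sub1 _ hxp) (h.sub1 _ h.e1)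
  induction hch using Relation.ReflTransGen.head_induction_on with
  | refl => exact .refl
  | @head a c hac hcy ih =>
    rcases h.cover _ hac.2.2.2 with h1 | h1
    · refine .head ⟨hac.1, hac.2.1, hac.2.2.1, h1⟩ (ih hac.2.1.symm (sub_pair h1 (by simp) (by simp)))
    · have := h.inter _ hxp (sub_pair h1 (by simp) (by simp)) (by simp : a ∈ _)
      simp [hp] at this
      subst this; exact .refl

lemma Sep.lc1 {M M₁ M₂ : SComplex V} {x y : V} (h : Sep M M₁ M₂ x y) (hM : M.LC) : M₁.LC := by
  apply lc_of_tr
  intro v p q hp hq h1 h2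
  haveI sy : ∀ v, Std.Symm (M₁.Tr v) := fun v => ⟨fun a b h => h.flip⟩
  by_cases hx : v = x
  · subst hx
    exact (h.lc_x hM hp h1).trans ((Relation.ReflTransGen.symmetric (r := M₁.Tr v)).symm _ _ (h.lc_x hM hq h2))
  by_cases hy : v = y
  · subst hy
    exact (h.swap.lc_x hM hp h1).trans ((Relation.ReflTransGen.symmetric (r := M₁.Tr v)).symm _ _ (h.swap.lc_x hM hq h2))
  · refine (hM.tr hp hq (h.sub1 _ h1) (h.sub1 _ h2)).lift id fun a b hab => ?_
    exact ⟨hab.1, hab.2.1, hab.2.2.1, h.star1 hx hy (sub_single h1 (by simp)) hab.2.2.2 (by simp)⟩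

lemma Sep.tri1 {M M₁ M₂ : SComplex V} {x y : V} (h : Sep M M₁ M₂ x y) (hM : M.LC)
    (hc : IsPreconnected M₁.realization) : ∃ c, M₁.Tr x y c := by
  by_contra hcon
  push Not at hcon
  have hL := h.lc1 hM
  have hx : ∀ p, {x, p} ∈ M₁.faces → p = x ∨ p = y := by
    intro p hp
    by_contra hne
    push Not at hne
    rcases (hL.tr h.xy.symm hne.1 h.e1 hp).cases_head with h1 | ⟨c, h1, -⟩
    · exact hne.2 h1.symm
    · exact hcon c h1
  have hy : ∀ p, {y, p} ∈ M₁.faces → p = x ∨ p = y := by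
    intro p hp
    by_contra hne
    push Not at hne
    rcases (hL.tr h.xy hne.2 h.swap.e1 hp).cases_head with h1 | ⟨c, h1, -⟩
    · exact hne.1 h1.symm
    · exact hcon c h1.swap
  obtain ⟨τ, hτ, h3⟩ := h.t1
  have : τ ⊆ {x, y} := by
    intro w hw
    refine conn_split hc {x, y} ?_ (sub_single h.e1 (by simp : x ∈ _)) (sub_single hτ hw) (by simp)
    intro σ hσ v hv hvA w hw
    simp at hvA ⊢
    rcases hvA with rfl | rfl
    · exact hx w (sub_pair hσ hv hw)
    · exact hy w (sub_pair hσ hv hw)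
  have := card_le_card this
  rw [card_pair h.xy] at this
  omega

lemma Sep.tr_up {M M₁ M₂ : SComplex V} {x y : V} (h : Sep M M₁ M₂ x y) {a b c : V}
    (hh : M₁.Tr a b c) : M.Tr a b c := ⟨hh.1, hh.2.1, hh.2.2.1, h.sub1 _ hh.2.2.2⟩

lemma Sep.tr_ne {M M₁ M₂ : SComplex V} {x y : V} (h : Sep M M₁ M₂ x y) {c d : V}
    (hc : M₁.Tr x y c) (hd : M₂.Tr x y d) : c ≠ d := by
  rintro rfl
  have := h.inter _ hc.2.2.2 hd.2.2.2 (by simp : c ∈ _)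
  simp [hc.2.1.symm, hc.2.2.1.symm] at this

lemma Sep.uniq1 {M M₁ M₂ : SComplex V} {x y : V} (h : Sep M M₁ M₂ x y) (hT : M.Two) {c c' d : V}
    (hc : M₁.Tr x y c) (hc' : M₁.Tr x y c') (hd : M₂.Tr x y d) : c' = c := by
  rcases hT.eq (h.tr_up hc) (h.symm.tr_up hd) (h.tr_up hc') (h.tr_ne hc hd) with h1 | h1
  · exact h1
  · exact absurd h1 (h.tr_ne hc' hd)

lemma Sep.niv1 {M M₁ M₂ : SComplex V} {x y : V} (h : Sep M M₁ M₂ x y) (hT : M.Two) (hN : M.NIV)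
    {c d : V} (hc : M₁.Tr x y c) (hd : M₂.Tr x y d) : M₁.NIV := by
  apply niv_of_tr
  intro v hv
  by_cases hx : v = x
  · subst hx
    exact ⟨y, c, hc, fun t' ht' => h.uniq1 hT hc ht' hd⟩
  by_cases hy : v = y
  · subst hy
    exact ⟨x, c, hc.swap, fun t' ht' => h.uniq1 hT hc ht'.swap hd⟩
  obtain ⟨d, t, h1, h2⟩ := hN.tr (h.sub1 _ hv)
  exact ⟨d, t, ⟨h1.1, h1.2.1, h1.2.2.1, h.star1 hx hy hv h1.2.2.2 (by simp)⟩,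
    fun t' ht' => h2 t' (h.tr_up ht')⟩

lemma mob_good {M : SComplex V} (hM : M.IsMobius) (hN : M.NIV) : M.Good :=
  ⟨dim_of_mob hM.mobLike, two_of_mob hM.mobLike, lc_of_mob hM.mobLike, hN, hM.mobLike.conn⟩

lemma Sep.tris {M M₁ M₂ : SComplex V} {x y : V} (h : Sep M M₁ M₂ x y) (hM : M.IsMobius)
    (hN : M.NIV) : ∃ c d, M₁.Tr x y c ∧ M₂.Tr x y d := by
  have hG := mob_good hM hN
  obtain ⟨c, hc⟩ := h.tri1 hG.lc (h.conn1 hM.mobLike)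
  obtain ⟨d, hd⟩ := h.symm.tri1 hG.lc (h.symm.conn1 hM.mobLike)
  exact ⟨c, d, hc, hd⟩

lemma Sep.good1 {M M₁ M₂ : SComplex V} {x y : V} (h : Sep M M₁ M₂ x y) (hM : M.IsMobius)
    (hN : M.NIV) : M₁.Good := by
  have hG := mob_good hM hN
  obtain ⟨c, d, hc, hd⟩ := h.tris hM hN
  exact ⟨fun σ hσ => hG.dim σ (h.sub1 _ hσ),
    fun u v w₁ w₂ w₃ a1 a2 a3 a4 a5 a6 a7 a8 a9 a10 a11 a12 a13 =>
      hG.two u v w₁ w₂ w₃ a1 a2 a3 a4 a5 a6 a7 a8 a9 a10 (h.sub1 _ a11) (h.sub1 _ a12) (h.sub1 _ a13),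
    h.lc1 hG.lc, h.niv1 hG.two hN hc hd, h.conn1 hM.mobLike⟩

end SComplex


namespace SComplex
variable {V : Type} [DecidableEq V] [Fintype V]

/-- link graph of a vertex -/
def lgraph (K : SComplex V) (a : V) : SimpleGraph V where
  Adj u w := K.Tr a u w
  symm := ⟨fun _ _ h => Tr.flip h⟩
  loopless := ⟨fun _ h => h.2.2.1 rfl⟩

lemma Good.bridge {K : SComplex V} (h : K.Good) {a b c : V} (ht : K.Tr a b c) :
    (K.lgraph a).IsBridge s(b, c) := by
  rw [SimpleGraph.isBridge_iff_forall_cycle_notMem (show s(b, c) ∈ (K.lgraph a).edgeSet from ht)]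
  intro u p hp hmem
  have hb : b ∈ p.support := p.fst_mem_support_of_mem_edges hmem
  have hdeg : ∀ v ∈ p.support, ∃ w₁ w₂, w₁ ≠ w₂ ∧ p.toSubgraph.neighborSet v = {w₁, w₂} := by
    intro v hv
    exact Set.ncard_eq_two.1 (hp.ncard_neighborSet_toSubgraph_eq_two hv)
  have hcl : ∀ v ∈ p.support, ∀ w, K.Tr a v w → w ∈ p.support := by
    intro v hv w hw
    obtain ⟨w₁, w₂, hne, he⟩ := hdeg v hv
    have h1 : p.toSubgraph.Adj v w₁ := by
      have : w₁ ∈ p.toSubgraph.neighborSet v := by rw [he]; simp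
      exact this
    have h2 : p.toSubgraph.Adj v w₂ := by
      have : w₂ ∈ p.toSubgraph.neighborSet v := by rw [he]; simp
      exact this
    have k1 : K.Tr a v w₁ := h1.adj_sub
    have k2 : K.Tr a v w₂ := h2.adj_sub
    rcases h.two.eq k1 k2 hw hne with rfl | rfl
    · exact p.mem_verts_toSubgraph.1 h1.snd_mem
    · exact p.mem_verts_toSubgraph.1 h2.snd_mem
  obtain ⟨d, t, h1, h2⟩ := h.niv.tr ht.v1
  have hd : d ∈ p.support := by
    have hch := h.lc.tr ht.1.symm h1.1.symm ht.e12 h1.e12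
    clear h1 h2
    induction hch with
    | refl => exact hb
    | tail _ hab ih => exact hcl _ ih _ hab
  obtain ⟨w₁, w₂, hne, he⟩ := hdeg d hd
  have e1 : p.toSubgraph.Adj d w₁ := by
    have : w₁ ∈ p.toSubgraph.neighborSet d := by rw [he]; simp
    exact this
  have e2 : p.toSubgraph.Adj d w₂ := by
    have : w₂ ∈ p.toSubgraph.neighborSet d := by rw [he]; simp
    exact this
  exact hne ((h2 _ e1.adj_sub).trans (h2 _ e2.adj_sub).symm)

lemma Good.split {K : SComplex V} (h : K.Good) {a b c : V} (ht : K.Tr a b c) :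
    ∃ R : Set V, c ∈ R ∧ b ∉ R ∧ a ∉ R ∧ ∀ u ∈ R, ∀ w, K.Tr a u w → w ∈ R ∨ (u = c ∧ w = b) := by
  have hb := h.bridge ht
  rw [SimpleGraph.isBridge_iff] at hb
  refine ⟨{u | u ≠ a ∧ ((K.lgraph a).deleteEdges {s(b, c)}).Reachable c u}, ⟨ht.2.1.symm, .rfl⟩,
    fun hh => hb hh.2.symm, fun hh => hh.1 rfl, ?_⟩
  rintro u ⟨hu, hr⟩ w hw
  by_cases hc : u = c ∧ w = b
  · exact Or.inr hc
  by_cases hc' : u = b ∧ w = c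
  · obtain ⟨rfl, rfl⟩ := hc'
    exact absurd hr.symm hb
  refine Or.inl ⟨hw.2.1.symm, hr.trans (SimpleGraph.Adj.reachable ?_)⟩
  rw [SimpleGraph.deleteEdges_adj]
  refine ⟨hw, ?_⟩
  simp only [Set.mem_singleton_iff, Sym2.eq_iff]
  tauto

end SComplex


namespace SComplex
variable {V : Type} [DecidableEq V] [Fintype V]

lemma single_mem_cSimp {v : V} {t : Finset V} (hv : v ∈ t) : (Pi.single v 1 : V → ℝ) ∈ cSimp t := by
  refine ⟨fun w hw => ?_, fun w => ?_, by simp⟩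
  · have : w ≠ v := fun h => hw (h ▸ hv)
    simp [this]
  · by_cases h : w = v
    · subst h; simp
    · simp [h]

/-- linear functional -/
noncomputable def lin (θ : V → ℝ) (p : V → ℝ) : ℝ := ∑ v, p v * θ v

lemma lin_single (θ : V → ℝ) (v : V) : lin θ (Pi.single v 1) = θ v := by
  simp [lin, Pi.single_apply]

lemma lin_cont (θ : V → ℝ) : Continuous (lin θ) := by
  unfold lin; fun_prop

lemma nolog_of_theta {K : SComplex V} (θ : Finset V → V → ℝ)
    (hpure : ∀ p ∈ K.realization, ∃ t ∈ K.faces, t.card = 3 ∧ p ∈ cSimp t)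
    (hint : ∀ s ∈ K.faces, ∀ t ∈ K.faces, s.card = 3 → t.card = 3 → ∀ p ∈ cSimp s, p ∈ cSimp t →
      ∃ n : ℤ, lin (θ s) p - lin (θ t) p = n)
    {T T' : Finset V} (hT : T ∈ K.faces ∧ T.card = 3)
    (hch : Relation.ReflTransGen (fun s t => (t ∈ K.faces ∧ t.card = 3) ∧
      ∃ v ∈ s, v ∈ t ∧ θ s v = θ t v) T T')
    {a : V} (ha : a ∈ T) (ha' : a ∈ T') (hne : θ T a ≠ θ T' a) : ¬ LogOn K.realization := by
  classical
  intro hlog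
  have hpi : (2 * Real.pi * Complex.I : ℂ) ≠ 0 := Complex.two_pi_I_ne_zero
  let τ : (V → ℝ) → Finset V := fun p =>
    if h : ∃ t ∈ K.faces, t.card = 3 ∧ p ∈ cSimp t then h.choose else ∅
  have hτ : ∀ p, (∃ t ∈ K.faces, t.card = 3 ∧ p ∈ cSimp t) →
      τ p ∈ K.faces ∧ (τ p).card = 3 ∧ p ∈ cSimp (τ p) := by
    intro p h
    have e : τ p = h.choose := dif_pos h
    rw [e]
    exact h.choose_spec
  let g : Finset V → (V → ℝ) → ℂ := fun t p => lin (θ t) p * (2 * Real.pi * Complex.I)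
  have gc : ∀ t, Continuous (g t) := fun t =>
    (Complex.continuous_ofReal.comp (lin_cont _)).mul continuous_const
  let f : (V → ℝ) → ℂ := fun p => Complex.exp (g (τ p) p)
  have hf : ∀ t ∈ K.faces, t.card = 3 → ∀ p ∈ cSimp t, f p = Complex.exp (g t p) := by
    intro t ht h3 p hp
    obtain ⟨h1, h2, h4⟩ := hτ p ⟨t, ht, h3, hp⟩
    obtain ⟨n, hn⟩ := hint _ h1 _ ht h2 h3 p h4 hp
    have : g (τ p) p = g t p + n * (2 * Real.pi * Complex.I) := by
      have : lin (θ (τ p)) p = lin (θ t) p + n := by linarith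
      simp only [g]
      rw [this]; push_cast; ring
    simp only [f]
    rw [this, Complex.exp_add, exp_int, mul_one]
  have hfc : ContinuousOn f K.realization := by
    have hcov : K.realization ⊆ ⋃ t : {t // t ∈ K.faces ∧ t.card = 3}, cSimp t.1 := by
      intro p hp
      obtain ⟨t, h1, h2, h3⟩ := hpure p hp
      exact Set.mem_iUnion.2 ⟨⟨t, h1, h2⟩, h3⟩
    refine ContinuousOn.mono ?_ hcov
    refine (locallyFinite_of_finite _).continuousOn_iUnion (fun t => cSimp_closed _) (fun t => ?_)
    exact ((Complex.continuous_exp.comp (gc t.1)).continuousOn).congr (hf t.1 t.2.1 t.2.2)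
  obtain ⟨h, hc, he⟩ := hlog f hfc (fun _ _ => Complex.exp_ne_zero _)
  have hn : ∀ t ∈ K.faces, t.card = 3 → ∃ n : ℤ, ∀ p ∈ cSimp t, h p - g t p =
      n * (2 * Real.pi * Complex.I) := by
    intro t ht h3
    refine log_diff (cSimp_convex t).isPreconnected h (g t) (hc.mono (cSimp_sub ht))
      (gc t).continuousOn ?_
    intro p hp
    rw [← hf t ht h3 p hp, he p (cSimp_sub ht hp)]
  obtain ⟨n, hn0⟩ := hn T hT.1 hT.2
  have key : ∀ t, Relation.ReflTransGen (fun s t => (t ∈ K.faces ∧ t.card = 3) ∧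
      ∃ v ∈ s, v ∈ t ∧ θ s v = θ t v) T t → ∀ p ∈ cSimp t, h p - g t p =
      n * (2 * Real.pi * Complex.I) := by
    intro t ht
    induction ht with
    | refl => exact hn0
    | @tail s t _ hst ih =>
      obtain ⟨⟨h1, h2⟩, v, hv, hv', hθ⟩ := hst
      obtain ⟨m, hm⟩ := hn t h1 h2
      have e1 := ih _ (single_mem_cSimp hv)
      have e2 := hm _ (single_mem_cSimp hv')
      simp only [g, lin_single] at e1 e2
      rw [hθ, e2] at e1
      intro p hp
      rw [hm p hp, e1]
  have e1 := hn0 _ (single_mem_cSimp ha)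
  have e2 := key T' hch _ (single_mem_cSimp ha')
  simp only [g, lin_single] at e1 e2
  have : ((θ T a : ℂ) - θ T' a) * (2 * Real.pi * Complex.I) = 0 := by linear_combination e2 - e1
  rcases mul_eq_zero.1 this with h1 | h1
  · exact hne (by exact_mod_cast sub_eq_zero.1 h1)
  · exact hpi h1

lemma lin_sub_eq {s t σ : Finset V} {θ θ' : V → ℝ} {p : V → ℝ} (hs : p ∈ cSimp s) (ht : p ∈ cSimp t)
    (hσ : s ∩ t ⊆ σ) : lin θ p - lin θ' p = ∑ v ∈ σ, p v * (θ v - θ' v) := by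
  unfold lin
  rw [← sum_sub_distrib]
  symm
  refine (sum_subset (subset_univ _) fun v _ hv => ?_).trans (sum_congr rfl fun v _ => by ring)
  have : p v = 0 := by
    by_contra hc
    refine hv (hσ (mem_inter.2 ⟨?_, ?_⟩))
    · by_contra hh; exact hc (hs.1 v hh)
    · by_contra hh; exact hc (ht.1 v hh)
  rw [this, zero_mul]

lemma Good.nolog {K : SComplex V} (h : K.Good) {a b c z : V} (hc : K.Tr a b c) (hz : K.Tr a b z)
    (hcz : c ≠ z) (hch : Relation.ReflTransGen (fun s t => K.TR s t ∧ s ∩ t ≠ {a, b})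
      {a, b, c} {a, b, z}) : ¬ LogOn K.realization := by
  classical
  obtain ⟨A, hA1, hA2, hA3, hA4⟩ := h.split hc
  obtain ⟨B, hB1, hB2, hB3, hB4⟩ := h.split hc.swap
  have hzA : z ∉ A := fun hh => by
    rcases hA4 z hh b hz.flip with h1 | h1
    · exact hA2 h1
    · exact hcz h1.1.symm
  have hzB : z ∉ B := fun hh => by
    rcases hB4 z hh a hz.swap.flip with h1 | h1
    · exact hB2 h1
    · exact hcz h1.1.symm
  let P : Finset V → V → Prop := fun t v => (v = a ∧ ∃ w ∈ t, w ∈ A) ∨ (v = b ∧ ∃ w ∈ t, w ∈ B)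
  let θ : Finset V → V → ℝ := fun t v => if P t v then 1 else 0
  have hθ : ∀ t v, ∃ n : ℤ, θ t v = n := by
    intro t v
    by_cases hp : P t v
    · exact ⟨1, by simp [θ, hp]⟩
    · exact ⟨0, by simp [θ, hp]⟩
  have hab := hc.1
  have half : ∀ v w p q, K.Tr v w p → ({v, w} : Finset V) ≠ {a, b} → P {v, w, p} v → P {v, w, q} v := by
    rintro v w p q hp hne (⟨rfl, u, hu, huA⟩ | ⟨rfl, u, hu, huB⟩)
    · left
      refine ⟨rfl, w, by simp, ?_⟩
      simp at hu
      rcases hu with rfl | rfl | rfl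
      · exact absurd huA hA3
      · exact huA
      · rcases hA4 _ huA w hp.flip with h1 | h1
        · exact h1
        · rw [h1.2] at hne; exact absurd rfl hne
    · right
      refine ⟨rfl, w, by simp, ?_⟩
      simp at hu
      rcases hu with rfl | rfl | rfl
      · exact absurd huB hB3
      · exact huB
      · rcases hB4 _ huB w hp.flip with h1 | h1
        · exact h1
        · rw [h1.2] at hne; exact absurd (pair_comm _ _) hne
  have C1 : ∀ v w p q, K.Tr v w p → K.Tr v w q → ({v, w} : Finset V) ≠ {a, b} →
      θ {v, w, p} v = θ {v, w, q} v := by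
    intro v w p q hp hq hne
    have : P {v, w, p} v ↔ P {v, w, q} v := ⟨half v w p q hp hne, half v w q p hq hne⟩
    simp only [θ, this]
  have hTa : θ {a, b, c} a = 1 := if_pos (Or.inl ⟨rfl, c, by simp, hA1⟩)
  have hTb : θ {a, b, c} b = 1 := if_pos (Or.inr ⟨rfl, c, by simp, hB1⟩)
  have hTa' : θ {a, b, z} a = 0 := if_neg (by
    rintro (⟨-, w, hw, hw'⟩ | ⟨h1, -⟩)
    · simp at hw; rcases hw with rfl | rfl | rfl <;> contradiction
    · exact hab h1)
  have hTb' : θ {a, b, z} b = 0 := if_neg (by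
    rintro (⟨h1, -⟩ | ⟨-, w, hw, hw'⟩)
    · exact hab h1.symm
    · simp at hw; rcases hw with rfl | rfl | rfl <;> contradiction)
  have sw : ∀ x y w : V, ({x, y, w} : Finset V) = {y, x, w} := by intro x y w; ext; simp; tauto
  refine nolog_of_theta θ ?_ ?_ ⟨hc.2.2.2, hc.card⟩ (hch.lift id ?_) (a := a) (by simp) (by simp)
    (by simp only [id]; rw [hTa, hTa']; norm_num)
  · intro p hp
    have hp' := mem_real.1 hp
    have hne : (supp p).Nonempty := by
      by_contra hh
      rw [not_nonempty_iff_eq_empty] at hh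
      have : ∀ v, p v = 0 := fun v => by
        by_contra hv
        have := mem_supp.2 hv
        rw [hh] at this; simp at this
      have := hp'.2.2
      simp_all
    obtain ⟨t, h1, h2, h3⟩ := h.pure hp'.1 hne
    refine ⟨t, h1, h2, fun v hv => ?_, hp'.2⟩
    by_contra hh
    exact hv (h3 (mem_supp.2 hh))
  · intro s hs t ht hs3 ht3 p hps hpt
    have hsum : ∑ v ∈ s ∩ t, p v = 1 := by
      rw [← hps.2.2]
      refine sum_subset (subset_univ _) fun v _ hv => ?_
      by_contra hh
      refine hv (mem_inter.2 ⟨?_, ?_⟩)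
      · by_contra hh'; exact hh (hps.1 v hh')
      · by_contra hh'; exact hh (hpt.1 v hh')
    have hle : (s ∩ t).card ≤ 3 := (card_le_card inter_subset_left).trans hs3.le
    obtain h0 | h0 | h0 | h0 : (s ∩ t).card = 0 ∨ (s ∩ t).card = 1 ∨ (s ∩ t).card = 2 ∨
      (s ∩ t).card = 3 := by omega
    · rw [card_eq_zero.1 h0] at hsum; simp at hsum
    · obtain ⟨v, hv⟩ := card_eq_one.1 h0
      rw [hv] at hsum
      simp at hsum
      rw [lin_sub_eq hps hpt hv.subset]
      obtain ⟨n, hn⟩ := hθ s v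
      obtain ⟨m, hm⟩ := hθ t v
      refine ⟨n - m, ?_⟩
      simp [hsum, hn, hm]
    · obtain ⟨v, w, q, r, rfl, rfl, hin, hqr, h1, h2⟩ := TR.form ⟨hs, ht, hs3, ht3, h0⟩
      rw [lin_sub_eq hps hpt hin.subset, sum_pair h1.1]
      rw [hin, sum_pair h1.1] at hsum
      by_cases hvw : ({v, w} : Finset V) = {a, b}
      · have e1 : ∀ u, ({v, w, u} : Finset V) = {a, b, u} := by
          intro u
          have : ({v, w, u} : Finset V) = insert u {v, w} := by ext; simp; tauto
          rw [this, hvw]; ext; simp; tauto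
        have hab' : ∀ u, K.Tr v w u → K.Tr a b u := by
          intro u hu
          have : u ∉ ({v, w} : Finset V) := by simp [hu.2.1.symm, hu.2.2.1.symm]
          rw [hvw] at this
          simp at this
          exact ⟨hab, fun h => this.1 h.symm, fun h => this.2 h.symm, e1 u ▸ hu.2.2.2⟩
        have val : ∀ u, K.Tr v w u → ∃ n : ℤ, θ {v, w, u} v = n ∧ θ {v, w, u} w = n := by
          intro u hu
          rw [e1 u]
          have hva : v ∈ ({a, b} : Finset V) := by rw [← hvw]; simp
          have hwa : w ∈ ({a, b} : Finset V) := by rw [← hvw]; simp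
          simp at hva hwa
          rcases h.two.eq hc hz (hab' u hu) hcz with rfl | rfl
          · refine ⟨1, ?_, ?_⟩
            · rcases hva with rfl | rfl <;> simp [hTa, hTb]
            · rcases hwa with rfl | rfl <;> simp [hTa, hTb]
          · refine ⟨0, ?_, ?_⟩
            · rcases hva with rfl | rfl <;> simp [hTa', hTb']
            · rcases hwa with rfl | rfl <;> simp [hTa', hTb']
        obtain ⟨n, n1, n2⟩ := val q h1
        obtain ⟨m, m1, m2⟩ := val r h2
        refine ⟨n - m, ?_⟩
        rw [n1, n2, m1, m2]
        push_cast
        linear_combination (n - m : ℝ) * hsum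
      · refine ⟨0, ?_⟩
        have e1 := C1 v w q r h1 h2 hvw
        have e2 := C1 w v q r h1.swap h2.swap (by rw [pair_comm]; exact hvw)
        rw [sw w v, sw w v] at e2
        rw [e1, e2]; simp
    · have e1 : s ∩ t = s := eq_of_subset_of_card_le inter_subset_left (by omega)
      have e2 : s ∩ t = t := eq_of_subset_of_card_le inter_subset_right (by omega)
      have : s = t := e1.symm.trans e2
      subst this
      exact ⟨0, by simp⟩
  · rintro s t ⟨hst, hne⟩
    obtain ⟨v, w, q, r, rfl, rfl, hin, hqr, h1, h2⟩ := hst.form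
    refine ⟨⟨h2.2.2.2, h2.card⟩, v, by simp, by simp, C1 v w q r h1 h2 (hin ▸ hne)⟩

end SComplex


namespace SComplex
variable {V : Type} [DecidableEq V] [Fintype V]

/-- delete a vertex -/
def del (K : SComplex V) (c : V) : SComplex V where
  faces := K.faces.filter fun σ => c ∉ σ
  nonempty_of_mem := by
    intro σ hσ
    exact K.nonempty_of_mem σ (mem_filter.1 hσ).1
  down_closed := by
    intro τ hτ ρ hρ hne
    rw [mem_filter] at hτ ⊢
    exact ⟨K.down_closed τ hτ.1 ρ hρ hne, fun h => hτ.2 (hρ h)⟩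

lemma mem_del {K : SComplex V} {c : V} {σ : Finset V} :
    σ ∈ (K.del c).faces ↔ σ ∈ K.faces ∧ c ∉ σ := mem_filter

/-- `c` is the free vertex of the triangle `abc`, glued along `ab` to `abd` only -/
structure Fold (K : SComplex V) (a b c d : V) : Prop where
  tT : K.Tr a b c
  tS : K.Tr a b d
  cd : c ≠ d
  fc : ∀ σ ∈ K.faces, c ∈ σ → σ ⊆ {a, b, c}
  fab : ∀ σ ∈ K.faces, a ∈ σ → b ∈ σ → σ ⊆ {a, b, d} ∨ σ ⊆ {a, b, c}

/-- moving mass -/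
noncomputable def mv (a b c d : V) (α γ δ : ℝ) (p : V → ℝ) : V → ℝ :=
  p + Pi.single a α + Pi.single b α + Pi.single c γ + Pi.single d δ

lemma mv_sum (a b c d : V) (α γ δ : ℝ) (p : V → ℝ) (h : 2 * α + γ + δ = 0) :
    ∑ v, mv a b c d α γ δ p v = ∑ v, p v := by
  simp only [mv, Pi.add_apply, sum_add_distrib, sum_single_real]
  linarith

variable {K : SComplex V} {a b c d : V}

lemma Fold.mva (h : K.Fold a b c d) (α γ δ : ℝ) (p : V → ℝ) : mv a b c d α γ δ p a = p a + α := by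
  have h1 := h.tT.1; have h2 := h.tT.2.1; have h3 := h.tS.2.1
  simp [mv, h1, h2, h3]

lemma Fold.mvb (h : K.Fold a b c d) (α γ δ : ℝ) (p : V → ℝ) : mv a b c d α γ δ p b = p b + α := by
  have h1 := h.tT.1.symm; have h2 := h.tT.2.2.1; have h3 := h.tS.2.2.1
  simp [mv, h1, h2, h3]

lemma Fold.mvc (h : K.Fold a b c d) (α γ δ : ℝ) (p : V → ℝ) : mv a b c d α γ δ p c = p c + γ := by
  have h1 := h.tT.2.1.symm; have h2 := h.tT.2.2.1.symm; have h3 := h.cd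
  simp [mv, h1, h2, h3]

lemma Fold.mvd (h : K.Fold a b c d) (α γ δ : ℝ) (p : V → ℝ) : mv a b c d α γ δ p d = p d + δ := by
  have h1 := h.tS.2.1.symm; have h2 := h.tS.2.2.1.symm; have h3 := h.cd.symm
  simp [mv, h1, h2, h3]

lemma mvo {a b c d v : V} (h1 : v ≠ a) (h2 : v ≠ b) (h3 : v ≠ c) (h4 : v ≠ d) (α γ δ : ℝ)
    (p : V → ℝ) : mv a b c d α γ δ p v = p v := by
  simp [mv, h1, h2, h3, h4]

lemma mv_zero (a b c d : V) (p : V → ℝ) : mv a b c d 0 0 0 p = p := by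
  simp [mv]

lemma mv_mv (a b c d : V) (α γ δ α' γ' δ' : ℝ) (p : V → ℝ) (h1 : α' = -α) (h2 : γ' = -γ)
    (h3 : δ' = -δ) : mv a b c d α' γ' δ' (mv a b c d α γ δ p) = p := by
  subst h1 h2 h3
  simp only [mv, Pi.single_neg]; abel

/-- fold map -/
noncomputable def fphi (a b c d : V) (p : V → ℝ) : V → ℝ :=
  mv a b c d ((p c - min (p a) (p b)) / 2) (-p c) (min (p a) (p b)) p

noncomputable def fpsi (a b c d : V) (q : V → ℝ) : V → ℝ :=
  mv a b c d (min (q d) (2 * min (q a) (q b)) - min (q a) (q b))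
    (2 * min (q a) (q b) - min (q d) (2 * min (q a) (q b)))
    (-min (q d) (2 * min (q a) (q b))) q

lemma fphi_cont (a b c d : V) : Continuous (fphi a b c d) := by
  unfold fphi mv
  refine ((((continuous_id.add ?_).add ?_).add ?_).add ?_) <;>
  · refine (continuous_single _).comp ?_
    fun_prop

lemma fpsi_cont (a b c d : V) : Continuous (fpsi a b c d) := by
  unfold fpsi mv
  refine ((((continuous_id.add ?_).add ?_).add ?_).add ?_) <;>
  · refine (continuous_single _).comp ?_
    fun_prop

lemma Fold.S_del (h : K.Fold a b c d) : ({a, b, d} : Finset V) ∈ (K.del c).faces :=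
  mem_del.2 ⟨h.tS.2.2.2, by simp [h.tT.2.1.symm, h.tT.2.2.1.symm, h.cd]⟩

lemma Fold.dichot (h : K.Fold a b c d) {p : V → ℝ} (hp : p ∈ K.realization) :
    p ∈ cSimp {a, b, c} ∨ p ∈ cSimp {a, b, d} ∨ (p c = 0 ∧ min (p a) (p b) = 0) := by
  have hp' := mem_real.1 hp
  have sub : ∀ t, supp p ⊆ t → p ∈ cSimp t := fun t ht =>
    ⟨fun v hv => by by_contra hh; exact hv (ht (mem_supp.2 hh)), hp'.2⟩
  by_cases hc : p c = 0
  · by_cases ha : p a = 0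
    · right; right; exact ⟨hc, by rw [ha]; exact min_eq_left (hp'.2.1 b)⟩
    · by_cases hb : p b = 0
      · right; right; exact ⟨hc, by rw [hb]; exact min_eq_right (hp'.2.1 a)⟩
      · rcases h.fab _ hp'.1 (mem_supp.2 ha) (mem_supp.2 hb) with h1 | h1
        · exact Or.inr (Or.inl (sub _ h1))
        · exact Or.inl (sub _ h1)
  · exact Or.inl (sub _ (h.fc _ hp'.1 (mem_supp.2 hc)))

lemma Fold.phi_mem (h : K.Fold a b c d) {p : V → ℝ} (hp : p ∈ K.realization) :
    fphi a b c d p ∈ (K.del c).realization := by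
  have hp' := mem_real.1 hp
  have key : (∀ v, v ≠ a → v ≠ b → v ≠ c → v ≠ d → p v = 0) →
      fphi a b c d p ∈ (K.del c).realization := by
    intro h0
    have pa := hp'.2.1 a
    have pb := hp'.2.1 b
    have pc := hp'.2.1 c
    have pd := hp'.2.1 d
    have ma := min_le_left (p a) (p b)
    have mb := min_le_right (p a) (p b)
    have m0 := le_min pa pb
    refine cSimp_sub h.S_del ⟨?_, ?_, ?_⟩
    · intro v hv
      simp at hv
      by_cases hc : v = c
      · subst hc; unfold fphi; rw [h.mvc]; ring
      · unfold fphi; rw [mvo hv.1 hv.2.1 hc hv.2.2]; exact h0 v hv.1 hv.2.1 hc hv.2.2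
    · intro v
      unfold fphi
      by_cases h1 : v = a
      · rw [h1, h.mva]; linarith
      by_cases h2 : v = b
      · rw [h2, h.mvb]; linarith
      by_cases h3 : v = c
      · rw [h3, h.mvc]; linarith
      by_cases h4 : v = d
      · rw [h4, h.mvd]; linarith
      rw [mvo h1 h2 h3 h4]; exact hp'.2.1 v
    · unfold fphi; rw [mv_sum _ _ _ _ _ _ _ _ (by ring)]; exact hp'.2.2
  rcases h.dichot hp with h1 | h1 | ⟨h1, h2⟩
  · exact key fun v h2 h3 h4 h5 => h1.1 v (by simp [h2, h3, h4])
  · exact key fun v h2 h3 h4 h5 => h1.1 v (by simp [h2, h3, h5])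
  · have : fphi a b c d p = p := by unfold fphi; rw [h1, h2]; simp [mv_zero]
    rw [this]
    exact mem_real.2 ⟨mem_del.2 ⟨hp'.1, fun hh => mem_supp.1 hh h1⟩, hp'.2⟩

lemma del_real {p : V → ℝ} (hp : p ∈ (K.del c).realization) : p ∈ K.realization ∧ p c = 0 := by
  have hp' := mem_real.1 hp
  have h1 := mem_del.1 hp'.1
  refine ⟨mem_real.2 ⟨h1.1, hp'.2⟩, ?_⟩
  by_contra hh
  exact h1.2 (mem_supp.2 hh)

lemma Fold.dichot' (h : K.Fold a b c d) {p : V → ℝ} (hp : p ∈ (K.del c).realization) :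
    p ∈ cSimp {a, b, d} ∨ (p c = 0 ∧ min (p a) (p b) = 0) := by
  obtain ⟨h1, h2⟩ := del_real hp
  rcases h.dichot h1 with h3 | h3 | h3
  · left
    refine ⟨fun v hv => ?_, h3.2⟩
    by_cases hc : v = c
    · rw [hc, h2]
    · simp at hv; exact h3.1 v (by simp [hv, hc])
  · exact Or.inl h3
  · exact Or.inr h3

lemma Fold.psi_mem (h : K.Fold a b c d) {q : V → ℝ} (hq : q ∈ (K.del c).realization) :
    fpsi a b c d q ∈ K.realization := by
  obtain ⟨hqK, hqc⟩ := del_real hq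
  have hq' := mem_real.1 hqK
  have qa := hq'.2.1 a
  have qb := hq'.2.1 b
  have qd := hq'.2.1 d
  rcases h.dichot' hq with h1 | ⟨h1, h2⟩
  · have ma := min_le_left (q a) (q b)
    have mb := min_le_right (q a) (q b)
    have m0 := le_min qa qb
    have na := min_le_left (q d) (2 * min (q a) (q b))
    have nb := min_le_right (q d) (2 * min (q a) (q b))
    have n0 : 0 ≤ min (q d) (2 * min (q a) (q b)) := le_min qd (by linarith)
    have nn : ∀ v, 0 ≤ fpsi a b c d q v := by
      intro v
      unfold fpsi
      by_cases h1 : v = a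
      · rw [h1, h.mva]; linarith
      by_cases h2 : v = b
      · rw [h2, h.mvb]; linarith
      by_cases h3 : v = c
      · rw [h3, h.mvc]; linarith
      by_cases h4 : v = d
      · rw [h4, h.mvd]; linarith
      rw [mvo h1 h2 h3 h4]; exact hq'.2.1 v
    have ss : ∑ v, fpsi a b c d q v = 1 := by
      unfold fpsi; rw [mv_sum _ _ _ _ _ _ _ _ (by ring)]; exact hq'.2.2
    rcases le_total (q d) (2 * min (q a) (q b)) with hl | hl
    · refine cSimp_sub h.tT.2.2.2 ⟨?_, nn, ss⟩
      intro v hv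
      simp at hv
      unfold fpsi
      by_cases h4 : v = d
      · rw [h4, h.mvd, min_eq_left hl]; ring
      rw [mvo hv.1 hv.2.1 hv.2.2 h4]
      exact h1.1 v (by simp [hv, h4])
    · refine cSimp_sub h.tS.2.2.2 ⟨?_, nn, ss⟩
      intro v hv
      simp at hv
      unfold fpsi
      by_cases h4 : v = c
      · rw [h4, h.mvc, min_eq_right hl, hqc]; ring
      rw [mvo hv.1 hv.2.1 h4 hv.2.2]
      exact h1.1 v (by simp [hv])
  · have : fpsi a b c d q = q := by
      unfold fpsi; rw [h2]; simp [min_eq_right qd, mv_zero]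
    rw [this]; exact hqK

lemma Fold.psi_phi (h : K.Fold a b c d) {p : V → ℝ} (hp : p ∈ K.realization) :
    fpsi a b c d (fphi a b c d p) = p := by
  have hp' := mem_real.1 hp
  have pc := hp'.2.1 c
  have pd := hp'.2.1 d
  have hz : p c = 0 ∨ p d = 0 := by
    rcases h.dichot hp with h1 | h1 | h1
    · right; exact h1.1 d (by simp [h.tS.2.1.symm, h.tS.2.2.1.symm, h.cd.symm])
    · left; exact h1.1 c (by simp [h.tT.2.1.symm, h.tT.2.2.1.symm, h.cd])
    · exact Or.inl h1.1
  have ea : fphi a b c d p a = p a + (p c - min (p a) (p b)) / 2 := h.mva _ _ _ _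
  have eb : fphi a b c d p b = p b + (p c - min (p a) (p b)) / 2 := h.mvb _ _ _ _
  have ed : fphi a b c d p d = p d + min (p a) (p b) := h.mvd _ _ _ _
  have em : min (fphi a b c d p a) (fphi a b c d p b) = (p c + min (p a) (p b)) / 2 := by
    rw [ea, eb, min_add_add_right]; ring
  have en : min (fphi a b c d p d) (2 * ((p c + min (p a) (p b)) / 2)) = min (p a) (p b) := by
    rw [ed]
    rcases hz with hz | hz
    · rw [hz, min_eq_right] <;> linarith
    · rw [hz, min_eq_left] <;> linarith
  unfold fpsi
  rw [em, en]
  conv_lhs => unfold fphi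
  apply mv_mv <;> ring

lemma Fold.phi_psi (h : K.Fold a b c d) {q : V → ℝ} (hq : q ∈ (K.del c).realization) :
    fphi a b c d (fpsi a b c d q) = q := by
  obtain ⟨hqK, hqc⟩ := del_real hq
  have ea := h.mva (min (q d) (2 * min (q a) (q b)) - min (q a) (q b))
    (2 * min (q a) (q b) - min (q d) (2 * min (q a) (q b)))
    (-min (q d) (2 * min (q a) (q b))) q
  have eb := h.mvb (min (q d) (2 * min (q a) (q b)) - min (q a) (q b))
    (2 * min (q a) (q b) - min (q d) (2 * min (q a) (q b)))
    (-min (q d) (2 * min (q a) (q b))) q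
  have ec := h.mvc (min (q d) (2 * min (q a) (q b)) - min (q a) (q b))
    (2 * min (q a) (q b) - min (q d) (2 * min (q a) (q b)))
    (-min (q d) (2 * min (q a) (q b))) q
  rw [hqc, zero_add] at ec
  have em : min (fpsi a b c d q a) (fpsi a b c d q b) = min (q d) (2 * min (q a) (q b)) := by
    unfold fpsi
    rw [ea, eb, min_add_add_right]; ring
  unfold fphi
  rw [em]
  unfold fpsi
  rw [ec]
  apply mv_mv <;> ring

/-- the elementary collapse is a homeomorphism -/
lemma Fold.homeo (h : K.Fold a b c d) : Nonempty (K.realization ≃ₜ (K.del c).realization) :=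
  ⟨{ toFun := fun p => ⟨fphi a b c d p.1, h.phi_mem p.2⟩
     invFun := fun q => ⟨fpsi a b c d q.1, h.psi_mem q.2⟩
     left_inv := fun p => Subtype.ext (h.psi_phi p.2)
     right_inv := fun q => Subtype.ext (h.phi_psi q.2)
     continuous_toFun := ((fphi_cont a b c d).comp continuous_subtype_val).subtype_mk _
     continuous_invFun := ((fpsi_cont a b c d).comp continuous_subtype_val).subtype_mk _ }⟩

end SComplex


section topbase
variable {X Y : Type} [TopologicalSpace X] [TopologicalSpace Y]

lemma LogOn.homeo {S : Set X} {S' : Set Y} (e : S ≃ₜ S') (h : LogOn S) : LogOn S' := by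
  have h1 : LogOn (Set.univ : Set S) := by
    rw [← LogOn.image_emb (Topology.IsEmbedding.subtypeVal), Set.image_univ, Subtype.range_coe]
    exact h
  have h2 : Topology.IsEmbedding (fun x : S => (e x : Y)) :=
    Topology.IsEmbedding.subtypeVal.comp e.isEmbedding
  have h3 := (LogOn.image_emb h2).2 h1
  have : (fun x : S => (e x : Y)) '' Set.univ = S' := by
    ext y
    simp only [Set.image_univ, Set.mem_range]
    constructor
    · rintro ⟨x, rfl⟩; exact (e x).2
    · intro hy; exact ⟨e.symm ⟨y, hy⟩, by simp⟩
  rwa [this] at h3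

lemma stdTri_homeo : Nonempty ({p : ℝ × ℝ | 0 ≤ p.1 ∧ 0 ≤ p.2 ∧ p.1 + p.2 ≤ 1} ≃ₜ ClosedDisc) := by
  set D : Set (ℝ × ℝ) := {p : ℝ × ℝ | 0 ≤ p.1 ∧ 0 ≤ p.2 ∧ p.1 + p.2 ≤ 1} with hD
  have hcl : IsClosed D := by
    refine (isClosed_le continuous_const continuous_fst).inter
      ((isClosed_le continuous_const continuous_snd).inter
        (isClosed_le (continuous_fst.add continuous_snd) continuous_const))
  have hcv : Convex ℝ D := by
    rintro ⟨p1, p2⟩ ⟨h1, h2, h3⟩ ⟨q1, q2⟩ ⟨k1, k2, k3⟩ s t hs ht hst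
    simp only at h1 h2 h3 k1 k2 k3
    refine ⟨?_, ?_, ?_⟩
    · simp; positivity
    · simp; positivity
    · simp; nlinarith
  have hb : Bornology.IsBounded D := by
    refine (Metric.isBounded_closedBall (x := (0 : ℝ × ℝ)) (r := 1)).subset ?_
    rintro ⟨p1, p2⟩ ⟨h1, h2, h3⟩
    simp only at h1 h2 h3
    simp [Prod.norm_def, abs_of_nonneg h1, abs_of_nonneg h2]
    constructor <;> linarith
  have hne : (interior D).Nonempty := by
    refine ⟨(1/4, 1/4), mem_interior.2 ⟨{p : ℝ × ℝ | 0 < p.1 ∧ 0 < p.2 ∧ p.1 + p.2 < 1}, ?_, ?_, ?_⟩⟩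
    · rintro p ⟨h1, h2, h3⟩; exact ⟨h1.le, h2.le, h3.le⟩
    · refine (isOpen_lt continuous_const continuous_fst).inter
        ((isOpen_lt continuous_const continuous_snd).inter
        (isOpen_lt (continuous_fst.add continuous_snd) continuous_const))
    · constructor <;> norm_num
  obtain ⟨h, -, h2, -⟩ := exists_homeomorph_image_interior_closure_frontier_eq_unitBall hcv hne hb
  rw [hcl.closure_eq] at h2
  exact ⟨(h.image D).trans (Homeomorph.setCongr h2)⟩

lemma leaf {α : Type} [Fintype α] (G : SimpleGraph α) (S : Finset α) (T₀ T₁ : α)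
    (hS : ∀ t ∈ S, G.Reachable T₀ t) (h1 : T₁ ∈ S) (hne : T₁ ≠ T₀) :
    ∃ T ∈ S, T ≠ T₀ ∧ ∀ t ∈ S, t ≠ T →
      Relation.ReflTransGen (fun s t => G.Adj s t ∧ s ≠ T ∧ t ≠ T) T₀ t := by
  classical
  obtain ⟨T, hT, hmax⟩ := S.exists_max_image (fun t => G.dist T₀ t) ⟨T₁, h1⟩
  refine ⟨T, hT, ?_, ?_⟩
  · rintro rfl
    have h2 := hmax _ h1
    simp only [SimpleGraph.dist_self] at h2
    have := (hS _ h1).pos_dist_of_ne hne.symm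
    omega
  · intro t ht htT
    obtain ⟨p, hp⟩ := (hS t ht).exists_walk_length_eq_dist
    have hns : T ∉ p.support := by
      intro hmem
      have a1 := p.length_takeUntil_lt_length hmem htT.symm
      have a2 := SimpleGraph.dist_le (p.takeUntil T hmem)
      have a3 := hmax t ht
      omega
    clear hp
    have gen : ∀ (u v : α) (p : G.Walk u v), T ∉ p.support →
        Relation.ReflTransGen (fun s t => G.Adj s t ∧ s ≠ T ∧ t ≠ T) u v := by
      intro u v p
      induction p with
      | nil => intro _; exact .refl
      | @cons u v w h p ih =>
        intro hn
        rw [SimpleGraph.Walk.support_cons, List.mem_cons, not_or] at hn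
        refine .head ⟨h, fun e => hn.1 e.symm, fun e => hn.2 ?_⟩ (ih hn.2)
        rw [← e]; exact p.start_mem_support
    exact gen _ _ p hns
end topbase

namespace SComplex
variable {V : Type} [DecidableEq V] [Fintype V]

lemma IsDisc.logOn {K : SComplex V} (h : K.IsDisc) : LogOn K.realization := by
  obtain ⟨e⟩ := h
  exact LogOn.homeo e.symm (convex_closedBall (0 : ℝ × ℝ) 1).logOn

lemma cSimp_disc {a b c : V} (hab : a ≠ b) (hac : a ≠ c) (hbc : b ≠ c) :
    Nonempty (cSimp ({a, b, c} : Finset V) ≃ₜ ClosedDisc) := by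
  obtain ⟨e⟩ := stdTri_homeo
  have sum3 : ∀ p ∈ cSimp ({a, b, c} : Finset V), p a + p b + p c = 1 := by
    intro p hp
    rw [← hp.2.2, ← sum_subset (subset_univ ({a, b, c} : Finset V)) (fun v _ hv => hp.1 v hv),
      sum_insert (by simp [hab, hac]), sum_pair hbc]; ring
  let g : ℝ × ℝ → V → ℝ := fun q => Pi.single a q.1 + Pi.single b q.2 + Pi.single c (1 - q.1 - q.2)
  have gc : Continuous g := by
    refine Continuous.add (Continuous.add ?_ ?_) ?_ <;>
    · refine (continuous_single _).comp ?_
      fun_prop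
  have ga : ∀ q, g q a = q.1 := fun q => by simp [g, hab, hac]
  have gb : ∀ q, g q b = q.2 := fun q => by simp [g, hab.symm, hbc]
  have gcc : ∀ q, g q c = 1 - q.1 - q.2 := fun q => by simp [g, hac.symm, hbc.symm]
  have go : ∀ q v, v ≠ a → v ≠ b → v ≠ c → g q v = 0 := fun q v h1 h2 h3 => by simp [g, h1, h2, h3]
  refine ⟨Homeomorph.trans (Y := {p : ℝ × ℝ | 0 ≤ p.1 ∧ 0 ≤ p.2 ∧ p.1 + p.2 ≤ 1}) ?_ e⟩
  exact
   { toFun := fun p => ⟨(p.1 a, p.1 b), p.2.2.1 a, p.2.2.1 b, by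
        have := sum3 _ p.2
        have := p.2.2.1 c
        simp only; linarith⟩
     invFun := fun q => ⟨g q.1, by
        refine ⟨fun v hv => ?_, fun v => ?_, ?_⟩
        · simp at hv; exact go _ _ hv.1 hv.2.1 hv.2.2
        · by_cases h1 : v = a
          · rw [h1, ga]; exact q.2.1
          by_cases h2 : v = b
          · rw [h2, gb]; exact q.2.2.1
          by_cases h3 : v = c
          · rw [h3, gcc]; have := q.2.2.2; linarith
          rw [go _ _ h1 h2 h3]
        · simp only [g, Pi.add_apply, sum_add_distrib, sum_single_real]; ring⟩
     left_inv := fun p => by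
        apply Subtype.ext
        funext v
        simp only
        by_cases h1 : v = a
        · rw [h1, ga]
        by_cases h2 : v = b
        · rw [h2, gb]
        by_cases h3 : v = c
        · rw [h3, gcc]; have := sum3 _ p.2; simp only; linarith
        rw [go _ _ h1 h2 h3, p.2.1 v (by simp [h1, h2, h3])]
     right_inv := fun q => by
        apply Subtype.ext
        simp only [ga, gb]
     continuous_toFun := by
        refine Continuous.subtype_mk ?_ _
        exact ((continuous_apply a).comp continuous_subtype_val).prodMk
          ((continuous_apply b).comp continuous_subtype_val)
     continuous_invFun := by
        exact (gc.comp continuous_subtype_val).subtype_mk _ }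

/-- the graph of triangles -/
def tgraph (K : SComplex V) : SimpleGraph (Finset V) where
  Adj s t := K.TR s t
  symm := ⟨fun _ _ h => h.symm⟩
  loopless := ⟨fun s h => by
    have h1 := h.2.2.2.2
    have h2 := h.2.2.1
    rw [inter_self] at h1; omega⟩

lemma rtg_reach {K : SComplex V} {s t : Finset V} (h : Relation.ReflTransGen K.TR s t) :
    K.tgraph.Reachable s t := by
  induction h with
  | refl => exact .rfl
  | tail _ hab ih => exact ih.trans (SimpleGraph.Adj.reachable (show K.tgraph.Adj _ _ from hab))

/-- steps avoiding `T` -/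
def TRa (K : SComplex V) (T s t : Finset V) : Prop := K.TR s t ∧ s ≠ T ∧ t ≠ T

lemma TRa.symm {K : SComplex V} {T s t : Finset V} (h : K.TRa T s t) : K.TRa T t s :=
  ⟨h.1.symm, h.2.2, h.2.1⟩

lemma rtga_symm {K : SComplex V} {T s t : Finset V} (h : Relation.ReflTransGen (K.TRa T) s t) :
    Relation.ReflTransGen (K.TRa T) t s := by
  induction h with
  | refl => exact .refl
  | tail _ hab ih => exact .head hab.symm ih

lemma Good.free {K : SComplex V} (h : K.Good) (hL : LogOn K.realization) {a b c d : V}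
    {T₀ : Finset V} (hc : K.Tr a b c) (hd : K.Tr a b d) (hcd : c ≠ d)
    (hav : ∀ t ∈ K.faces, t.card = 3 → t ≠ {a, b, c} →
      Relation.ReflTransGen (K.TRa {a, b, c}) T₀ t) :
    ∀ w, K.Tr a c w → w = b := by
  intro w hw
  by_contra hwb
  refine h.nolog hd hc hcd.symm ?_ hL
  have n1 : ({a, b, d} : Finset V) ≠ {a, b, c} := by
    intro e
    have : d ∈ ({a, b, c} : Finset V) := by rw [← e]; simp
    simp [hd.2.1.symm, hd.2.2.1.symm, hcd.symm] at this
  have n2 : ({a, c, w} : Finset V) ≠ {a, b, c} := by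
    intro e
    have : w ∈ ({a, b, c} : Finset V) := by rw [← e]; simp
    simp [hw.2.1.symm, hw.2.2.1.symm, hwb] at this
  have c1 := (rtga_symm (hav _ hd.2.2.2 hd.card n1)).trans (hav _ hw.2.2.2 hw.card n2)
  have c2 : Relation.ReflTransGen (fun s t => K.TR s t ∧ s ∩ t ≠ {a, b}) {a, b, d} {a, c, w} := by
    refine c1.lift id ?_
    rintro s t ⟨hst, hs, ht⟩
    refine ⟨hst, fun hin => ?_⟩
    simp only [id] at hin
    have i1 : a ∈ s ∩ t := by rw [hin]; simp
    have i2 : b ∈ s ∩ t := by rw [hin]; simp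
    rw [mem_inter] at i1 i2
    obtain ⟨p, rfl, hp⟩ := tr_of_mem2 hst.1 hst.2.2.1 i1.1 i2.1 hc.1
    obtain ⟨q, rfl, hq⟩ := tr_of_mem2 hst.2.1 hst.2.2.2.1 i1.2 i2.2 hc.1
    have hpc : p ≠ c := fun e => hs (by rw [e])
    have hqc : q ≠ c := fun e => ht (by rw [e])
    rcases h.two.eq hp hc hq hpc with h1 | h1
    · subst h1
      have := hst.2.2.2.2
      rw [inter_self, hp.card] at this; omega
    · exact hqc h1
  refine c2.tail ⟨?_, ?_⟩
  · have := hw.adj hc.flip hwb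
    have e : ({a, b, c} : Finset V) = {a, c, b} := by ext; simp; tauto
    rw [e]; exact this
  · intro e
    have : b ∈ ({a, c, w} : Finset V) ∩ {a, b, c} := by rw [e]; simp
    simp [hc.1.symm, hc.2.2.1, Ne.symm hwb] at this

lemma Good.leaf_tri {K : SComplex V} (h : K.Good) (hL : LogOn K.realization) {T₀ T₁ : Finset V}
    (h0 : T₀ ∈ K.faces ∧ T₀.card = 3) (h1 : T₁ ∈ K.faces ∧ T₁.card = 3) (hne : T₁ ≠ T₀) :
    ∃ a b c d, K.Tr a b c ∧ K.Tr a b d ∧ c ≠ d ∧ ({a, b, c} : Finset V) ≠ T₀ ∧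
      ∀ σ ∈ K.faces, c ∈ σ → σ ⊆ {a, b, c} := by
  classical
  obtain ⟨T, hT, hT0, hav⟩ := leaf K.tgraph (K.faces.filter fun t => t.card = 3) T₀ T₁
    (fun t ht => by
      rw [mem_filter] at ht
      exact rtg_reach (h.sc h0.1 ht.1 h0.2 ht.2)) (mem_filter.2 h1) hne
  rw [mem_filter] at hT
  have hav' : ∀ t ∈ K.faces, t.card = 3 → t ≠ T → Relation.ReflTransGen (K.TRa T) T₀ t :=
    fun t ht h3 hn => hav t (mem_filter.2 ⟨ht, h3⟩) hn
  rcases (h.sc h0.1 hT.1 h0.2 hT.2).cases_tail with e | ⟨T', -, hT'⟩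
  · exact absurd e hT0
  obtain ⟨a, b, d, c, rfl, rfl, hin, hdc, hd, hc⟩ := hT'.form
  have f1 := h.free hL hc hd hdc.symm hav'
  have e : ({a, b, c} : Finset V) = {b, a, c} := by ext; simp; tauto
  have f2 := h.free hL hc.swap hd.swap hdc.symm (e ▸ hav')
  refine ⟨a, b, c, d, hc, hd, hdc.symm, hT0, ?_⟩
  intro σ hσ hcσ w hw
  by_cases hwc : w = c
  · simp [hwc]
  have hch := h.lc.tr hc.2.1 hwc hc.rot.rot.e12 (sub_pair hσ hcσ hw)
  have : w = a ∨ w = b := by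
    clear hwc hw
    induction hch with
    | refl => exact Or.inl rfl
    | @tail u v _ huv ih =>
      rcases ih with rfl | rfl
      · exact Or.inr (f1 _ huv.swap)
      · exact Or.inl (f2 _ huv.swap)
  simp; tauto

end SComplex


namespace SComplex
variable {V : Type} [DecidableEq V] [Fintype V]

lemma Tr.of_del {K : SComplex V} {e a b c : V} (h : (K.del e).Tr a b c) : K.Tr a b c :=
  ⟨h.1, h.2.1, h.2.2.1, (mem_del.1 h.2.2.2).1⟩

lemma Fold.of_two {K : SComplex V} (hG : K.Good) {a b c d : V} (hc : K.Tr a b c) (hd : K.Tr a b d)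
    (hcd : c ≠ d) (hf : ∀ σ ∈ K.faces, c ∈ σ → σ ⊆ {a, b, c}) : K.Fold a b c d := by
  refine ⟨hc, hd, hcd, hf, ?_⟩
  intro σ hσ ha hb
  obtain ⟨t, ht, h3, hs⟩ := hG.pure hσ ⟨a, ha⟩
  obtain ⟨w, rfl, hw⟩ := tr_of_mem2 ht h3 (hs ha) (hs hb) hc.1
  rcases hG.two.eq hc hd hw hcd with rfl | rfl
  · exact Or.inr hs
  · exact Or.inl hs

lemma Fold.niv {K : SComplex V} {a b c d : V} (h : K.Fold a b c d) (hN : K.NIV) :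
    (K.del c).NIV := by
  have hS : (K.del c).Tr a b d := ⟨h.tS.1, h.tS.2.1, h.tS.2.2.1, h.S_del⟩
  have uq : ∀ t', (K.del c).Tr a b t' → t' = d := by
    intro t' ht'
    have hne : t' ≠ c := by
      rintro rfl
      exact (mem_del.1 ht'.2.2.2).2 (by simp)
    rcases h.fab _ ht'.of_del.2.2.2 (by simp) (by simp) with h1 | h1
    · have := h1 (by simp : t' ∈ _)
      simpa [ht'.2.1.symm, ht'.2.2.1.symm] using this
    · have := h1 (by simp : t' ∈ _)
      simp [ht'.2.1.symm, ht'.2.2.1.symm, hne] at this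
  apply niv_of_tr
  intro v hv
  by_cases ha : v = a
  · subst ha; exact ⟨b, d, hS, uq⟩
  by_cases hb : v = b
  · subst hb; exact ⟨a, d, hS.swap, fun t' ht' => uq t' ht'.swap⟩
  obtain ⟨hv1, hv2⟩ := mem_del.1 hv
  obtain ⟨e, t, h1, h2⟩ := hN.tr hv1
  refine ⟨e, t, ⟨h1.1, h1.2.1, h1.2.2.1, mem_del.2 ⟨h1.2.2.2, fun hc => ?_⟩⟩,
    fun t' ht' => h2 t' ht'.of_del⟩
  have := h.fc _ h1.2.2.2 hc (by simp : v ∈ _)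
  simp [ha, hb] at this
  simp [this] at hv2

theorem main_ind (n : ℕ) : ∀ (M M₁ M₂ : SComplex V) (x y : V), M₁.faces.card ≤ n → M.IsMobius →
    M.NIV → Sep M M₁ M₂ x y → LogOn M₁.realization →
    M₁.IsDisc ∧ Nonempty (M.realization ≃ₜ M₂.realization) := by
  induction n with
  | zero =>
    intro M M₁ M₂ x y hn _ _ h _
    have := card_pos.2 ⟨_, h.e1⟩
    omega
  | succ n ih =>
    intro M M₁ M₂ x y hn hM hN h hL
    have hG := mob_good hM hN
    have hG1 := h.good1 hM hN
    obtain ⟨z, z', hz, hz'⟩ := h.tris hM hN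
    by_cases hex : ∃ T₁ ∈ M₁.faces, T₁.card = 3 ∧ T₁ ≠ {x, y, z}
    · obtain ⟨T₁, hT1, hT13, hTne⟩ := hex
      obtain ⟨a, b, c, d, hc, hd, hcd, hne, hf⟩ :=
        hG1.leaf_tri hL ⟨hz.2.2.2, hz.card⟩ ⟨hT1, hT13⟩ hTne
      have hcz : c ∉ ({x, y, z} : Finset V) := by
        intro hh
        have := hf _ hz.2.2.2 hh
        exact hne (eq_of_subset_of_card_le this (by rw [hc.card, hz.card])).symm
      have hcx : c ≠ x := by rintro rfl; simp at hcz
      have hcy : c ≠ y := by rintro rfl; simp at hcz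
      have hcv : {c} ∈ M₁.faces := sub_single hc.2.2.2 (by simp)
      have hfM : ∀ σ ∈ M.faces, c ∈ σ → σ ⊆ {a, b, c} := fun σ hσ hcσ =>
        hf σ (h.star1 hcx hcy hcv hσ hcσ) hcσ
      have F1 : M₁.Fold a b c d := .of_two hG1 hc hd hcd hf
      have F : M.Fold a b c d := .of_two hG (h.tr_up hc) (h.tr_up hd) hcd hfM
      obtain ⟨e1⟩ := F1.homeo
      obtain ⟨e⟩ := F.homeo
      have hM' : (M.del c).IsMobius := by
        obtain ⟨f⟩ := hM
        exact ⟨e.symm.trans f⟩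
      have hS' : Sep (M.del c) (M₁.del c) M₂ x y := by
        have hxy : c ∉ ({x, y} : Finset V) := by simp [hcx, hcy]
        refine ⟨h.xy, ?_, ?_, ?_, ?_, ?_, h.e2, ?_, h.t2⟩
        · intro σ hσ
          rw [mem_del] at hσ ⊢
          exact ⟨h.sub1 _ hσ.1, hσ.2⟩
        · intro σ hσ
          refine mem_del.2 ⟨h.sub2 _ hσ, fun hcσ => ?_⟩
          exact hxy (h.inter _ hcv (sub_single hσ hcσ) (by simp))
        · intro σ hσ
          rw [mem_del] at hσ
          rcases h.cover _ hσ.1 with h1 | h1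
          · exact Or.inl (mem_del.2 ⟨h1, hσ.2⟩)
          · exact Or.inr h1
        · intro σ h1 h2
          exact h.inter _ (mem_del.1 h1).1 h2
        · exact mem_del.2 ⟨h.e1, hxy⟩
        · exact ⟨_, mem_del.2 ⟨hz.2.2.2, hcz⟩, hz.card⟩
      have hlt : (M₁.del c).faces.card < M₁.faces.card := by
        refine card_lt_card (Finset.ssubset_iff_subset_ne.2 ⟨filter_subset _ _, fun he => ?_⟩)
        have : {c} ∈ (M₁.del c).faces := by
          rw [show (M₁.del c).faces = M₁.faces from he]; exact hcv
        simp [mem_del] at this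
      obtain ⟨⟨g⟩, ⟨k⟩⟩ := ih (M.del c) (M₁.del c) M₂ x y (by omega) hM' (F.niv hN) hS' (hL.homeo e1)
      exact ⟨⟨e1.trans g⟩, ⟨e.trans k⟩⟩
    · push Not at hex
      have hall : ∀ σ ∈ M₁.faces, σ ⊆ {x, y, z} := by
        intro σ hσ
        obtain ⟨t, ht, h3, hs⟩ := hG1.pure hσ (M₁.nonempty_of_mem σ hσ)
        rw [← hex t ht h3]; exact hs
      have hr : M₁.realization = cSimp {x, y, z} := by
        apply Set.Subset.antisymm _ (cSimp_sub hz.2.2.2)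
        rw [real_eq]
        intro p hp
        simp only [Set.mem_iUnion] at hp
        obtain ⟨σ, hσ, hp⟩ := hp
        exact ⟨fun v hv => hp.1 v fun hh => hv (hall σ hσ hh), hp.2⟩
      refine ⟨?_, ?_⟩
      · obtain ⟨e⟩ := cSimp_disc hz.1 hz.2.1 hz.2.2.1
        exact ⟨(Homeomorph.setCongr hr).trans e⟩
      · have hzx : z ≠ x := hz.2.1.symm
        have hzy : z ≠ y := hz.2.2.1.symm
        have hzv : {z} ∈ M₁.faces := sub_single hz.2.2.2 (by simp)
        have F : M.Fold x y z z' := .of_two hG (h.tr_up hz) (h.symm.tr_up hz') (h.tr_ne hz hz')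
          (fun σ hσ hzσ => hall σ (h.star1 hzx hzy hzv hσ hzσ))
        obtain ⟨e⟩ := F.homeo
        have : (M.del z).realization = M₂.realization := by
          ext p
          rw [mem_real, mem_real]
          refine and_congr_left fun _ => ?_
          rw [mem_del]
          constructor
          · rintro ⟨h1, h2⟩
            rcases h.cover _ h1 with h3 | h3
            · refine M₂.down_closed _ h.e2 _ (fun v hv => ?_) (M.nonempty_of_mem _ h1)
              have := hall _ h3 hv
              simp only [mem_insert, mem_singleton] at this ⊢
              rcases this with h4 | h4 | h4
              · exact Or.inl h4
              · exact Or.inr h4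
              · rw [h4] at hv; exact absurd hv h2
            · exact h3
          · intro h1
            refine ⟨h.sub2 _ h1, fun hh => ?_⟩
            have := h.inter _ hzv (sub_single h1 hh) (by simp : z ∈ _)
            simp [hzx, hzy] at this
        exact ⟨e.trans (Homeomorph.setCongr this)⟩

lemma Sep.final {M M₁ M₂ : SComplex V} {x y : V} (h : Sep M M₁ M₂ x y) (hM : M.IsMobius)
    (hN : M.NIV) (hL : LogOn M₁.realization) :
    M₁.IsDisc ∧ M₂.IsMobius ∧ ¬ M₁.IsMobius ∧ ¬ M₂.IsDisc := by
  obtain ⟨h1, ⟨e⟩⟩ := main_ind _ M M₁ M₂ x y le_rfl hM hN h hL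
  have h2 : M₂.IsMobius := by
    obtain ⟨f⟩ := hM
    exact ⟨e.symm.trans f⟩
  exact ⟨h1, h2, fun hc => hc.mobLike.nolog hL, fun hc => h2.mobLike.nolog hc.logOn⟩

lemma niv_of {M : SComplex V} (h : M.NoInteriorVertices) : M.NIV := by
  apply niv_of_tr
  intro v hv
  obtain ⟨e, he, hve, h2, h1⟩ := h v (Finset.le_sup (f := id) hv (mem_singleton_self v))
  obtain ⟨τ, hτ⟩ := card_eq_one.1 h1
  have hd : (e.erase v).card = 1 := by rw [card_erase_of_mem hve, h2]
  obtain ⟨d, hd⟩ := card_eq_one.1 hd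
  have hde : d ∈ e.erase v := by rw [hd]; simp
  have ee : e = {v, d} := by rw [← insert_erase hve, hd]
  have hvd : v ≠ d := (ne_of_mem_erase hde).symm
  have hmem : τ ∈ M.faces.filter fun τ => τ.card = 3 ∧ e ⊆ τ := by rw [hτ]; simp
  rw [mem_filter] at hmem
  obtain ⟨t, rfl, ht⟩ := tr_of_mem2 hmem.1 hmem.2.1 (hmem.2.2 hve)
    (hmem.2.2 (mem_of_mem_erase hde)) hvd
  refine ⟨d, t, ht, fun t' ht' => ?_⟩
  have : ({v, d, t'} : Finset V) ∈ M.faces.filter fun τ => τ.card = 3 ∧ e ⊆ τ := by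
    rw [mem_filter]
    refine ⟨ht'.2.2.2, ht'.card, ?_⟩
    rw [ee]; intro u; simp; tauto
  rw [hτ, mem_singleton] at this
  have h3 : t' ∈ ({v, d, t} : Finset V) := by rw [← this]; simp
  simpa [ht'.2.1.symm, ht'.2.2.1.symm] using h3

lemma sep_of {M M₁ M₂ : SComplex V} {e : Finset V} (he : M.InteriorEdge e)
    (h : M.SeparationAlong M₁ M₂ e) : ∃ x y, Sep M M₁ M₂ x y := by
  obtain ⟨h1, h2, h3, h4⟩ := h
  obtain ⟨x, y, hxy, rfl⟩ := card_eq_two.1 he.2.1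
  have hin : ({x, y} : Finset V) ∈ M₁.faces ∩ M₂.faces := by
    rw [h2, mem_filter]
    exact ⟨mem_powerset.2 Subset.rfl, by simp⟩
  rw [mem_inter] at hin
  refine ⟨x, y, hxy, ?_, ?_, ?_, ?_, hin.1, hin.2, h3, h4⟩
  · intro σ hσ; rw [← h1]; exact mem_union_left _ hσ
  · intro σ hσ; rw [← h1]; exact mem_union_right _ hσ
  · intro σ hσ; rw [← h1] at hσ; exact mem_union.1 hσ
  · intro σ hs1 hs2
    have : σ ∈ M₁.faces ∩ M₂.faces := mem_inter.2 ⟨hs1, hs2⟩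
    rw [h2, mem_filter] at this
    exact mem_powerset.1 this.1

end SComplex

/-- if a triangulated Möbius strip `M` with no interior vertices is
separated by an interior edge `e = xy` into two pieces `M₁, M₂`, then exactly one
of the pieces is a disc and the other is again a Möbius strip. -/
theorem cut_edge_of_mobius {V : Type} [DecidableEq V] [Fintype V]
    (M M₁ M₂ : SComplex V) (e : Finset V)
    (hM : M.IsMobius) (hniv : M.NoInteriorVertices)
    (he : M.InteriorEdge e) (hsep : M.SeparationAlong M₁ M₂ e) :
    (M₁.IsDisc ∧ M₂.IsMobius ∧ ¬ M₁.IsMobius ∧ ¬ M₂.IsDisc) ∨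
    (M₁.IsMobius ∧ M₂.IsDisc ∧ ¬ M₁.IsDisc ∧ ¬ M₂.IsMobius) := by
  obtain ⟨x, y, h⟩ := SComplex.sep_of he hsep
  have hN := SComplex.niv_of hniv
  rcases h.exactly hM.mobLike with hL | hL
  · exact Or.inl (h.final hM hN hL)
  · obtain ⟨h1, h2, h3, h4⟩ := h.symm.final hM hN hL
    exact Or.inr ⟨h2, h1, h4, h3⟩
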